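/- Let k ≥ 3 and n ≥ 3 be odd integers and set d = (1 − 2k^n)^n (a negative integer). Then for every D in the set {d, d + 1, 4d + 1} ∪ {2d + 4^m : m ≥ 0 an integer with 1 ≤ 4^m ≤ 2|d|}, the integer D is negative and n divides the class number of the imaginary quadratic field ℚ(√D). -/

import Mathlib

open IntermediateField NumberField

/-- The quadratic field `ℚ(√D)`, realized inside `ℂ` by adjoining the principal
square root of `D`. -/
noncomputable def quadField (D : ℤ) : IntermediateField ℚ ℂ :=
  ℚ⟮(D : ℂ) ^ ((1 : ℂ) / 2)⟯

/-- The class number of the quadratic field `ℚ(√D)`. -/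
noncomputable def quadClassNumber (D : ℤ) : ℕ :=
  Nat.card (ClassGroup (𝓞 (quadField D)))

/-- The sequence `wq T u k` with `(a+b) * wq ((a+b)^2) (a*b) k = a^(2 * k + 1)+b^(2 * k + 1)`. -/
def wq {R : Type*} [CommRing R] (T u : R) : ℕ → R
  | 0 => 1
  | 1 => T - 3 * u
  | (k + 2) => (T - 2 * u) * wq T u (k + 1) - u ^ 2 * wq T u k

theorem wq_add_two {R : Type*} [CommRing R] (T u : R) (k : ℕ) :
    wq T u (k + 2) = (T - 2 * u) * wq T u (k + 1) - u ^ 2 * wq T u k := rfl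

theorem wq_zero {R : Type*} [CommRing R] (T u : R) : wq T u 0 = 1 := rfl
theorem wq_one {R : Type*} [CommRing R] (T u : R) : wq T u 1 = T - 3 * u := rfl

theorem wq_main {R : Type*} [CommRing R] (a b : R) (k : ℕ) :
    (a + b) * wq ((a + b) ^ 2) (a * b) k = a ^ (2 * k + 1) + b ^ (2 * k + 1) := by
  induction k using Nat.twoStepInduction with
  | zero => simp [wq_zero]
  | one => rw [wq_one]; ring
  | more k h0 h1 =>
    rw [wq_add_two]
    have : (a + b) * (((a + b) ^ 2 - 2 * (a * b)) * wq ((a + b) ^ 2) (a * b) (k + 1) -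
        (a * b) ^ 2 * wq ((a + b) ^ 2) (a * b) k) = ((a + b) ^ 2 - 2 * (a * b)) *
        ((a + b) * wq ((a + b) ^ 2) (a * b) (k + 1)) - (a * b) ^ 2 *
        ((a + b) * wq ((a + b) ^ 2) (a * b) k) := by ring
    rw [this, h0, h1]; ring

theorem wq_hom {R : Type*} [CommRing R] (c T u : R) (k : ℕ) :
    wq (c * T) (c * u) k = c ^ k * wq T u k := by
  induction k using Nat.twoStepInduction with
  | zero => simp [wq_zero]
  | one => simp only [wq_one]; ring
  | more k h0 h1 => rw [wq_add_two, wq_add_two, h0, h1]; ring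

theorem wq_map {R S : Type*} [CommRing R] [CommRing S] (f : R →+* S) (T u : R) (k : ℕ) :
    f (wq T u k) = wq (f T) (f u) k := by
  induction k using Nat.twoStepInduction with
  | zero => simp [wq_zero]
  | one => simp [wq_one, map_ofNat f 3]
  | more k h0 h1 => rw [wq_add_two, wq_add_two]; simp [h0, h1, map_ofNat f 2]

theorem wq_intCast {S : Type*} [CommRing S] (T u : ℤ) (k : ℕ) :
    ((wq T u k : ℤ) : S) = wq (T : S) (u : S) k := wq_map (Int.castRingHom S) T u k

theorem exists_ab {F : Type*} [Field F] [IsAlgClosed F] (T u : F) :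
    ∃ a b : F, (a + b) ^ 2 = T ∧ a * b = u := by
  obtain ⟨s, hs⟩ := IsAlgClosed.exists_pow_nat_eq T (n := 2) (by norm_num)
  obtain ⟨a, ha⟩ := IsAlgClosed.exists_root
    (Polynomial.X ^ 2 - Polynomial.C s * Polynomial.X + Polynomial.C u) (by
      have : (Polynomial.X ^ 2 - Polynomial.C s * Polynomial.X + Polynomial.C u).degree = 2 := by
        compute_degree!
      rw [this]; norm_num)
  refine ⟨a, s - a, by rw [← hs]; ring, ?_⟩
  simp [Polynomial.IsRoot] at ha
  linear_combination -ha

theorem wq_mod_prime (p h : ℕ) [Fact p.Prime] (hp : p = 2 * h + 1) (T u : ℤ)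
    (hT : (T : ZMod p) ≠ 0) : ((wq T u h : ℤ) : ZMod p) = (T : ZMod p) ^ h := by
  let F := AlgebraicClosure (ZMod p)
  have hinj := (algebraMap (ZMod p) F).injective
  have : CharP F p := charP_of_injective_algebraMap hinj p
  apply hinj
  rw [map_pow, map_intCast, map_intCast, wq_intCast]
  obtain ⟨a, b, h1, h2⟩ := exists_ab (T : F) (u : F)
  have hm := wq_main a b h
  rw [← hp, ← add_pow_char a b p, h1, h2] at hm
  have hpp : (a + b) ^ p = (T : F) ^ h * (a + b) := by
    rw [show (a + b) ^ p = (a + b) ^ (2 * h + 1) from congrArg _ hp, pow_succ, pow_mul, h1]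
  rw [hpp] at hm
  have hab : a + b ≠ 0 := by
    intro h0
    rw [h0] at h1
    apply hT
    apply hinj
    simp [← h1]
  rw [mul_comm] at hm
  exact mul_right_cancel₀ hab hm

theorem prod_pair {M : Type*} [CommMonoid M] (h : ℕ) (f : ℕ → M) :
    ∏ i ∈ Finset.range (2 * h + 1), f i =
      f 0 * ∏ i ∈ Finset.Icc 1 h, (f i * f (2 * h + 1 - i)) := by
  rw [Finset.prod_mul_distrib, Finset.prod_range_succ']
  rw [mul_comm]; congr 1
  have e1 : ∏ i ∈ Finset.Icc 1 h, f i = ∏ i ∈ Finset.range h, f (i + 1) := by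
    rw [← Finset.Ico_add_one_right_eq_Icc, Finset.prod_Ico_eq_prod_range]
    simp [add_comm]
  have e2 : ∏ i ∈ Finset.Icc 1 h, f (2 * h + 1 - i) =
      ∏ i ∈ Finset.range h, f (h + i + 1) := by
    rw [← Finset.Ico_add_one_right_eq_Icc, Finset.prod_Ico_eq_prod_range,
      ← Finset.prod_range_reflect]
    apply Finset.prod_congr (by simp)
    intro i hi
    simp at hi
    congr 1; simp; omega
  rw [e1, e2, two_mul, Finset.prod_range_add]

theorem wq_prod_complex (h : ℕ) {ζ : ℂ} (hζ : IsPrimitiveRoot ζ (2 * h + 1)) (T u : ℂ)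
    (hT : T ≠ 0) :
    wq T u h = ∏ i ∈ Finset.Icc 1 h, (T - u * (2 - ζ ^ i - ζ ^ (2 * h + 1 - i))) := by
  obtain ⟨a, b, h1, h2⟩ := exists_ab T u
  have hab : a + b ≠ 0 := by rintro h0; rw [h0] at h1; apply hT; simp [← h1]
  have hm := wq_main a b h
  have hodd : Odd (2 * h + 1) := ⟨h, rfl⟩
  rw [hζ.pow_add_pow_eq_prod_add_mul a b hodd] at hm
  have hp : ∏ ζ ∈ Polynomial.nthRootsFinset (2 * h + 1) (1 : ℂ), (a + ζ * b) =
      ∏ i ∈ Finset.range (2 * h + 1), (a + ζ ^ i * b) := by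
    symm
    apply Finset.prod_bij (fun i _ => ζ ^ i)
    · intro i _
      rw [Polynomial.mem_nthRootsFinset (by omega)]
      rw [← pow_mul, mul_comm, pow_mul, hζ.pow_eq_one, one_pow]
    · intro i hi j hj hij
      exact hζ.pow_inj (by simpa using hi) (by simpa using hj) hij
    · intro x hx
      rw [Polynomial.mem_nthRootsFinset (by omega)] at hx
      obtain ⟨i, hi, rfl⟩ := hζ.eq_pow_of_pow_eq_one hx
      exact ⟨i, by simpa using hi, rfl⟩
    · intros; rfl
  rw [hp, prod_pair, pow_zero, one_mul, h1, h2] at hm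
  rw [mul_left_cancel₀ hab hm]
  apply Finset.prod_congr rfl
  intro i hi
  simp at hi
  have : ζ ^ i * ζ ^ (2 * h + 1 - i) = 1 := by
    rw [← pow_add, Nat.add_sub_cancel' (by omega), hζ.pow_eq_one]
  rw [← h1, ← h2]
  linear_combination b ^ 2 * this

theorem wq_prod_real (h : ℕ) (T u : ℝ) (hT : T ≠ 0) :
    wq T u h = ∏ i ∈ Finset.Icc 1 h,
      (T - u * (4 * Real.sin (Real.pi * i / (2 * h + 1)) ^ 2)) := by
  have hz := Complex.isPrimitiveRoot_exp (2 * h + 1) (by omega)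
  have := wq_prod_complex h hz (T : ℂ) (u : ℂ) (by exact_mod_cast hT)
  have e := wq_map Complex.ofRealHom T u h
  simp only [Complex.ofRealHom_eq_coe] at e
  apply Complex.ofReal_injective
  rw [e, this]
  push_cast
  apply Finset.prod_congr rfl
  intro i hi
  simp at hi
  congr 2
  set x := Real.pi * i / (2 * h + 1) with hx
  have hh : (2 * (h : ℂ) + 1) ≠ 0 := by norm_cast
  have e1 : Complex.exp (2 * Real.pi * Complex.I / ((2 * h + 1 : ℕ) : ℂ)) ^ i =
      Complex.exp (2 * x * Complex.I) := by
    rw [← Complex.exp_nat_mul]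
    congr 1
    rw [hx]; push_cast; field_simp
  have e2 : Complex.exp (2 * Real.pi * Complex.I / ((2 * h + 1 : ℕ) : ℂ)) ^ (2 * h + 1 - i) =
      Complex.exp (-(2 * x) * Complex.I) := by
    have h3 := hz.pow_eq_one
    rw [show 2 * h + 1 = (2 * h + 1 - i) + i by omega, pow_add, ] at h3
    rw [show 2 * h + 1 - i + i = 2 * h + 1 by omega] at h3
    rw [e1] at h3
    rw [neg_mul, Complex.exp_neg]
    exact eq_inv_of_mul_eq_one_left h3
  push_cast at e1 e2
  rw [e1, e2]
  have h4 := Complex.two_cos (2 * x)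
  rw [Complex.cos_two_mul] at h4
  have h5 := Complex.sin_sq_add_cos_sq x
  have h6 : Complex.sin (Real.pi * i / (2 * h + 1)) = Complex.sin (x : ℂ) := by
    rw [hx]; push_cast; rfl
  rw [h6]
  linear_combination h4 - 4 * h5

theorem exists_abs_le_one_of_prod {ι : Type*} (s : Finset ι) (hs : s.Nonempty) (f : ι → ℝ)
    (h : |∏ i ∈ s, f i| ≤ 1) : ∃ i ∈ s, |f i| ≤ 1 := by
  by_contra! hc
  rw [Finset.abs_prod] at h
  have := Finset.prod_lt_prod_of_nonempty (s := s) (f := fun _ => (1 : ℝ)) (g := fun i => |f i|)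
    (fun _ _ => one_pos) hc hs
  simp at this
  linarith

theorem sin_lower (h i : ℕ) (h1 : 1 ≤ i) (h2 : i ≤ h) :
    16 / ((2 * h + 1 : ℝ)) ^ 2 ≤ 4 * Real.sin (Real.pi * i / (2 * h + 1)) ^ 2 := by
  have hp : (0 : ℝ) < 2 * h + 1 := by positivity
  have hpi := Real.pi_pos
  have hi : (i : ℝ) ≤ h := by exact_mod_cast h2
  have hi1 : (1 : ℝ) ≤ i := by exact_mod_cast h1
  have := Real.mul_le_sin (x := Real.pi * i / (2 * h + 1)) (by positivity) (by
    rw [div_le_div_iff₀ hp (by norm_num)]; nlinarith)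
  have e : 2 / Real.pi * (Real.pi * i / (2 * h + 1)) = 2 * i / (2 * h + 1) := by
    field_simp
  rw [e] at this
  have h3 : 2 / (2 * h + 1 : ℝ) ≤ Real.sin (Real.pi * i / (2 * h + 1)) := by
    refine le_trans ?_ this
    gcongr; linarith
  have h4 : (2 / (2 * h + 1 : ℝ)) ^ 2 ≤ Real.sin (Real.pi * i / (2 * h + 1)) ^ 2 := by
    gcongr
  calc 16 / ((2 * h + 1 : ℝ)) ^ 2 = 4 * (2 / (2 * h + 1 : ℝ)) ^ 2 := by field_simp; norm_num
    _ ≤ _ := by linarith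

theorem size_bound (h : ℕ) (hh : 1 ≤ h) (T u : ℤ) (hT : T ≠ 0) (hu : 0 ≤ u)
    (hW : |wq T u h| ≤ 1) : 16 * u ≤ (2 * h + 1) ^ 2 * (T + 1) := by
  have hw : |wq (T : ℝ) (u : ℝ) h| ≤ 1 := by
    rw [← wq_intCast]; exact_mod_cast hW
  rw [wq_prod_real h _ _ (by exact_mod_cast hT)] at hw
  obtain ⟨i, hi, hi2⟩ := exists_abs_le_one_of_prod _ ⟨1, by simp [hh]⟩ _ hw
  simp at hi
  have := sin_lower h i hi.1 hi.2
  have hp : (0 : ℝ) < (2 * h + 1) ^ 2 := by positivity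
  have huR : (0 : ℝ) ≤ u := by exact_mod_cast hu
  have h3 := (abs_le.1 hi2).1
  rw [div_le_iff₀ hp] at this
  have : (16 * u : ℝ) ≤ (2 * h + 1) ^ 2 * (T + 1) := by nlinarith
  exact_mod_cast this

/-- power lemma -/
theorem odd_pow_lem {R : Type*} [CommRing R] (v Y : R) (m : ℕ) :
    ∃ η : R, (1 + 4 * v * Y) ^ m = 1 + 4 * v * (m * Y + 2 * v * η) := by
  induction m with
  | zero => exact ⟨0, by simp⟩
  | succ m ih =>
    obtain ⟨η, h⟩ := ih
    refine ⟨η + 2 * Y * (m * Y + 2 * v * η), ?_⟩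
    rw [pow_succ, h]; push_cast; ring

theorem two_pow_lem {R : Type*} [CommRing R] (v Y : R) (m e : ℕ) :
    ∃ η : R, (1 + 4 * v * Y) ^ (2 ^ e * m) = 1 + 4 * 2 ^ e * v * (m * Y + 2 * v * η) := by
  induction e with
  | zero => simpa using odd_pow_lem v Y m
  | succ e ih =>
    obtain ⟨η, h⟩ := ih
    refine ⟨η + 2 ^ e * (m * Y + 2 * v * η) ^ 2, ?_⟩
    rw [show 2 ^ (e + 1) * m = 2 ^ e * m * 2 by ring, pow_mul, h]; ring

theorem wq_repr (T u d c e f : ℤ) (h1 : 2 * c = T - 2 * u) (h2 : c ^ 2 - d * e ^ 2 = u ^ 2)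
    (h3 : c + f * e = T - 3 * u) (k : ℕ) :
    wq T u k = ((⟨c, e⟩ : ℤ√d) ^ k).re + f * ((⟨c, e⟩ : ℤ√d) ^ k).im := by
  induction k using Nat.twoStepInduction with
  | zero => simp [wq_zero]
  | one => simp [wq_one, h3]
  | more k g0 g1 =>
    rw [wq_add_two, g1, g0, pow_succ _ (k + 1), pow_succ _ k]
    generalize ((⟨c, e⟩ : ℤ√d) ^ k) = x
    simp only [Zsqrtd.re_mul, Zsqrtd.im_mul]
    rw [← h1, ← h2]
    ring

theorem wq_two_one (q : ℕ) : wq (2 : ℤ) 1 (2 * q) = (-1) ^ q ∧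
    wq (2 : ℤ) 1 (2 * q + 1) = -(-1) ^ q := by
  induction q with
  | zero => simp [wq_zero, wq_one]
  | succ q ih =>
    constructor
    · rw [show 2 * (q + 1) = 2 * q + 2 by ring, wq_add_two, ih.1]; ring
    · rw [show 2 * (q + 1) + 1 = 2 * q + 1 + 2 by ring, wq_add_two, ih.2]; ring

theorem wq_two_congr (p h : ℕ) [Fact p.Prime] (hp : p = 2 * h + 1) (u : ℤ) :
    (p : ℤ) ∣ wq (2 : ℤ) u h - wq (2 : ℤ) 1 h := by
  have h2 : ((2 : ℤ) : ZMod p) ≠ 0 := by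
    intro h0
    rw [ZMod.intCast_zmod_eq_zero_iff_dvd] at h0
    have := Int.le_of_dvd (by norm_num) h0
    have := (Fact.out : p.Prime).two_le
    have : p = 2 := by omega
    omega
  rw [← ZMod.intCast_zmod_eq_zero_iff_dvd]
  push_cast
  rw [wq_mod_prime p h hp 2 u h2, wq_mod_prime p h hp 2 1 h2]
  simp

theorem neg_one_pow_cases (q : ℕ) : (-1 : ℤ) ^ q = 1 ∨ (-1 : ℤ) ^ q = -1 := neg_one_pow_eq_or ℤ q

theorem case_F1 (p h : ℕ) [Fact p.Prime] (hp : p = 2 * h + 1) (t : ℤ) (ht : 3 ≤ t)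
    (hto : Odd t) (hW : wq 2 t h = 1 ∨ wq 2 t h = -1) : False := by
  have hp2 := (Fact.out : p.Prime).two_le
  obtain ⟨v, hv⟩ := hto
  have hv1 : 1 ≤ v := by omega
  let z : ℤ√(1 - 2 * t) := ⟨1 - t, 1⟩
  have hr := wq_repr 2 t (1 - 2 * t) (1 - t) 1 (1 - 2 * t) (by ring) (by ring) (by ring)
  change ∀ k, wq 2 t k = (z ^ k).re + (1 - 2 * t) * (z ^ k).im at hr
  let Y : ℤ√(1 - 2 * t) := ⟨1 - v, 1⟩
  have hz2 : z ^ 2 = -(1 + 4 * (v : ℤ√(1 - 2 * t)) * Y) := by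
    have : (4 : ℤ√(1 - 2 * t)) = ((4 : ℤ) : ℤ√(1 - 2 * t)) := by norm_cast
    rw [this]
    ext <;> simp [pow_two, z, Y] <;> (subst hv; ring)
  obtain ⟨q, hq | hq⟩ : ∃ q, h = 2 * q ∨ h = 2 * q + 1 := ⟨h / 2, by omega⟩
  · have hq0 : q ≠ 0 := by omega
    obtain ⟨e, m, hm, hqm⟩ := Nat.exists_eq_two_pow_mul_odd hq0
    obtain ⟨η, hη⟩ := two_pow_lem (v : ℤ√(1 - 2 * t)) Y m e
    have hzh : z ^ h = (((-1) ^ q * (1 : ℤ) : ℤ) : ℤ√(1 - 2 * t)) + (((-1) ^ q * (4 * 2 ^ e * v) : ℤ) : ℤ√(1 - 2 * t)) * (((m : ℤ) : ℤ√(1 - 2 * t)) * Y + ((2 * v : ℤ) : ℤ√(1 - 2 * t)) * η) := by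
      rw [hq, pow_mul, hz2, neg_pow, hqm, hη]
      push_cast; ring
    have h1 := hr h
    rw [hzh] at h1
    have h2 : wq 2 t h = (-1) ^ q * (1 + 4 * (2 ^ e * v ^ 2 * (-5 * m + 2 * (η.re + (1 - 2 * t) * η.im)))) := by
      rw [h1]
      simp only [Zsqrtd.re_add, Zsqrtd.im_add, Zsqrtd.re_mul, Zsqrtd.im_mul, Zsqrtd.re_intCast, Zsqrtd.im_intCast, Y]
      linear_combination ((-1) ^ q * (4 * 2 ^ e * v) * m * (-2)) * hv
    have h3 : (-5 * m + 2 * (η.re + (1 - 2 * t) * η.im)) ≠ 0 := by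
      obtain ⟨m', hm'⟩ := hm
      intro h0
      have : (m : ℤ) = 2 * m' + 1 := by exact_mod_cast hm'
      generalize (η.re + (1 - 2 * t) * η.im) = g at h0
      omega
    have h4 : 2 ^ e * v ^ 2 * (-5 * m + 2 * (η.re + (1 - 2 * t) * η.im)) ≠ 0 := by
      apply mul_ne_zero _ h3
      positivity
    generalize 2 ^ e * v ^ 2 * (-5 * m + 2 * (η.re + (1 - 2 * t) * η.im)) = g at h2 h4
    rcases neg_one_pow_cases q with h5 | h5 <;> rw [h5] at h2 <;> omega
  · obtain ⟨η, hη⟩ := odd_pow_lem (v : ℤ√(1 - 2 * t)) Y q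
    set G := q * Y + 2 * (v : ℤ√(1 - 2 * t)) * η
    have hzh : z ^ h = (((-1) ^ q : ℤ) : ℤ√(1 - 2 * t)) * (z + ((4 * v : ℤ) : ℤ√(1 - 2 * t)) * (z * G)) := by
      rw [hq, pow_succ, pow_mul, hz2, neg_pow, hη]
      push_cast; ring
    have h1 := hr h
    rw [hzh] at h1
    generalize z * G = g at h1
    have h2 : wq 2 t h = (-1) ^ q * (-1 - 6 * v + 4 * v * (g.re + (1 - 2 * t) * g.im)) := by
      rw [h1]
      simp only [Zsqrtd.re_add, Zsqrtd.im_add, Zsqrtd.re_mul, Zsqrtd.im_mul, Zsqrtd.re_intCast, Zsqrtd.im_intCast, z]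
      linear_combination ((-1) ^ q * (-3)) * hv
    generalize (g.re + (1 - 2 * t) * g.im) = b at h2
    have h3 : v * (-3 + 2 * b) ≠ 0 := by
      apply mul_ne_zero (by omega); omega
    have h4 := wq_two_congr p h hp t
    have h5 : wq (2 : ℤ) 1 h = -(-1) ^ q := by rw [hq]; exact (wq_two_one q).2
    rw [h5] at h4
    have h6 : wq 2 t h ≠ -(-1) ^ q := by
      intro h7; apply h3; rw [h7] at h2
      rcases neg_one_pow_cases q with h8 | h8 <;> rw [h8] at h2 <;> linarith
    have h7 : (p : ℤ) ∣ 2 := by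
      rcases neg_one_pow_cases q with h8 | h8 <;> rw [h8] at h4 h6 <;> rcases hW with h9 | h9 <;> rw [h9] at h4 h6 <;> norm_num at h4 h6 <;> exact h4
    have := Int.le_of_dvd (by norm_num) h7
    omega

theorem wq_zmod8 (u : ZMod 8) (k : ℕ) : wq (0 : ZMod 8) u k = (-u) ^ k * (2 * k + 1) := by
  induction k using Nat.twoStepInduction with
  | zero => simp [wq_zero]
  | one => simp only [wq_one]; push_cast; ring
  | more k h0 h1 => rw [wq_add_two, h0, h1]; push_cast; ring

theorem wq_zmod3 (u : ZMod 3) (hu : u ≠ 1) (q : ℕ) : wq (2 : ZMod 3) u (2 * q) = 1 ∧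
    wq (2 : ZMod 3) u (2 * q + 1) = 2 := by
  induction q with
  | zero =>
    refine ⟨rfl, ?_⟩
    rw [show 2 * 0 + 1 = 1 from rfl, wq_one]
    revert u; decide
  | succ q ih =>
    have h1 : wq (2 : ZMod 3) u (2 * (q + 1)) = 1 := by
      rw [show 2 * (q + 1) = 2 * q + 2 by ring, wq_add_two, ih.1, ih.2]
      clear ih
      revert u; decide
    refine ⟨h1, ?_⟩
    rw [show 2 * (q + 1) + 1 = 2 * q + 1 + 2 by ring, wq_add_two, ih.2,
      show 2 * q + 1 + 1 = 2 * (q + 1) by ring, h1]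
    clear ih h1
    revert u; decide

theorem case_p1 (m j : ℕ) (hm : 1 ≤ m) (hj : 1 ≤ j) (u : ℤ) (hu : u % 4 = 1)
    (hW : wq ((2 : ℤ) ^ (2 * m + 1)) u (2 * j) = 1) : False := by
  obtain ⟨m', rfl⟩ : ∃ m', m = m' + 1 := ⟨m - 1, by omega⟩
  set S : ℤ := 2 * 4 ^ m' with hS
  have hT : (2 : ℤ) ^ (2 * (m' + 1) + 1) = 4 * S := by
    rw [hS, pow_succ, pow_mul]; norm_num [pow_succ]; ring
  rw [hT] at hW
  set M := u - S with hM
  let z : ℤ√(-(S * M)) := ⟨2 * S - u, 2⟩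
  have hr := wq_repr (4 * S) u (-(S * M)) (2 * S - u) 2 (-M) (by ring) (by rw [hM]; ring)
    (by rw [hM]; ring)
  change ∀ k, wq (4 * S) u k = (z ^ k).re + (-M) * (z ^ k).im at hr
  obtain ⟨w, hw⟩ : ∃ w, u = 4 * w + 1 := ⟨u / 4, by omega⟩
  let Y : ℤ√(-(S * M)) := ⟨2 * (4 ^ m' * (2 * S) - 4 ^ m' * (2 * u) + 2 * w ^ 2 + w), 2 * S - u⟩
  have hz2 : z ^ 2 = 1 + 4 * ((1 : ℤ) : ℤ√(-(S * M))) * Y := by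
    have h4 : (4 : ℤ√(-(S * M))) = ((4 : ℤ) : ℤ√(-(S * M))) := by norm_cast
    rw [h4]
    ext
    · simp only [pow_two, z, Y, Zsqrtd.re_mul, Zsqrtd.re_add, Zsqrtd.re_intCast,
        Zsqrtd.im_intCast, Zsqrtd.re_one]
      simp only [Zsqrtd.im_mul, Zsqrtd.re_intCast, Zsqrtd.im_intCast]
      linear_combination (u + 4 * w + 1) * hw + (8 * S - 8 * u) * hS - 4 * S * hM
    · simp [pow_two, z, Y]; ring
  obtain ⟨e, q, hq, hqm⟩ := Nat.exists_eq_two_pow_mul_odd (show j ≠ 0 by omega)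
  obtain ⟨η, hη⟩ := two_pow_lem ((1 : ℤ) : ℤ√(-(S * M))) Y q e
  have hzh : z ^ (2 * j) = 1 + (((4 * 2 ^ e) : ℤ) : ℤ√(-(S * M))) * (((q : ℤ) : ℤ√(-(S * M))) * Y + ((2 : ℤ) : ℤ√(-(S * M))) * η) := by
    rw [pow_mul, hz2, hqm, hη]; push_cast; ring
  have h1 := hr (2 * j)
  rw [hzh, hW] at h1
  obtain ⟨q', hq'⟩ := hq
  have hMo : ∃ c, M * (2 * S - u) = 2 * c + 1 := by
    refine ⟨(w * 2 - 4 ^ m') * (2 * S - u) + S - 2 * w - 1, ?_⟩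
    linear_combination (2 * S - u) * (hM + hw - hS) - hw
  obtain ⟨c, hc⟩ := hMo
  have h2 : (4 * 2 ^ e : ℤ) * (2 * (q * (4 ^ m' * (2 * S) - 4 ^ m' * (2 * u) + 2 * w ^ 2 + w) + η.re - M * η.im - q * c - q') - 1) = 0 := by
    simp only [Zsqrtd.re_add, Zsqrtd.im_add, Zsqrtd.re_mul, Zsqrtd.im_mul, Zsqrtd.re_intCast, Zsqrtd.im_intCast, Y, Zsqrtd.re_one, Zsqrtd.im_one] at h1
    have hq2 : (q : ℤ) = 2 * q' + 1 := by exact_mod_cast hq'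
    linear_combination -h1 + (4 * 2 ^ e) * q * hc + (4 * 2 ^ e) * hq2
  rcases mul_eq_zero.1 h2 with h3 | h3
  · have : (0 : ℤ) < 4 * 2 ^ e := by positivity
    omega
  · generalize (q * (4 ^ m' * (2 * S) - 4 ^ m' * (2 * u) + 2 * w ^ 2 + w) + η.re - M * η.im - q * c - q') = g at h3
    omega

theorem case_F4 (p h m : ℕ) [Fact p.Prime] (hp : p = 2 * h + 1) (hm : 1 ≤ m) (u : ℤ)
    (hu : u % 4 = 1) (hW : wq ((2 : ℤ) ^ (2 * m + 1)) u h = 1 ∨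
      wq ((2 : ℤ) ^ (2 * m + 1)) u h = -1) :
    p % 8 = 7 ∧ u % 8 = 1 ∧ u % 3 = 1 ∧ wq ((2 : ℤ) ^ (2 * m + 1)) u h = 1 := by
  have hpp := (Fact.out : p.Prime)
  have hp2 := hpp.two_le
  have h2 : ((2 : ℤ) : ZMod p) ≠ 0 := by
    intro h0
    rw [ZMod.intCast_zmod_eq_zero_iff_dvd] at h0
    have := Int.le_of_dvd (by norm_num) h0
    omega
  have hcong : (p : ℤ) ∣ wq ((2 : ℤ) ^ (2 * m + 1)) u h - wq (2 : ℤ) 1 h := by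
    rw [← ZMod.intCast_zmod_eq_zero_iff_dvd]
    rw [Int.cast_sub, wq_mod_prime p h hp _ u (by rw [Int.cast_pow]; exact pow_ne_zero _ h2),
      wq_mod_prime p h hp 2 1 h2, sub_eq_zero, Int.cast_pow, ← pow_mul,
      show (2 * m + 1) * h = (2 * h) * m + h by ring, pow_add, pow_mul,
      show 2 * h = p - 1 by omega, ZMod.pow_card_sub_one_eq_one h2, one_pow, one_mul]
  have h8 : ((wq ((2 : ℤ) ^ (2 * m + 1)) u h : ℤ) : ZMod 8) = (-(u : ZMod 8)) ^ h * (2 * h + 1) := by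
    rw [wq_intCast]
    have : (((2 : ℤ) ^ (2 * m + 1) : ℤ) : ZMod 8) = 0 := by
      obtain ⟨m', rfl⟩ : ∃ m', m = m' + 1 := ⟨m - 1, by omega⟩
      rw [show 2 * (m' + 1) + 1 = 3 + 2 * m' by ring, pow_add]
      push_cast
      rw [show (8 : ZMod 8) = 0 by decide, zero_mul]
    rw [this, wq_zmod8]
  have hsol : ∀ s : ℤ, wq (2 : ℤ) 1 h = s → (s = 1 ∨ s = -1) → wq ((2 : ℤ) ^ (2 * m + 1)) u h = s := by
    intro s hs hs1
    rw [hs] at hcong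
    have h3 : 3 ≤ p := by omega
    rcases hW with h9 | h9 <;> rcases hs1 with h10 | h10 <;> rw [h9] at hcong ⊢ <;> rw [h10] at hcong ⊢ <;> norm_num at hcong ⊢
    all_goals
      have := Int.le_of_dvd (by norm_num) hcong
      omega
  have hu8 : u % 8 = 1 ∨ u % 8 = 5 := by omega
  have hu8' : (u : ZMod 8) = 1 ∨ (u : ZMod 8) = 5 := by
    rcases hu8 with h | h
    · left
      have := (ZMod.intCast_eq_intCast_iff_dvd_sub 1 u 8).2 (by omega)
      rw [← this]; norm_num
    · right
      have := (ZMod.intCast_eq_intCast_iff_dvd_sub 5 u 8).2 (by omega)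
      rw [← this]; norm_num
  have hu2 : (-(u : ZMod 8)) ^ 2 = 1 := by rcases hu8' with h | h <;> rw [h] <;> decide
  have h4 : ∀ j : ℕ, (4 * (j : ZMod 8) * 2) = 0 := by
    intro j
    have h80 : (8 : ZMod 8) = 0 := by decide
    linear_combination (j : ZMod 8) * h80
  obtain ⟨j, hj⟩ : ∃ j, h = 4 * j ∨ h = 4 * j + 1 ∨ h = 4 * j + 2 ∨ h = 4 * j + 3 :=
    ⟨h / 4, by omega⟩
  have hpw : (-(u : ZMod 8)) ^ (4 * j) = 1 := by
    rw [show 4 * j = 2 * (2 * j) by ring, pow_mul, hu2, one_pow]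
  rcases hj with hj | hj | hj | hj
  · exfalso
    have := (wq_two_one (2 * j)).1
    rw [show 2 * (2 * j) = h by omega, pow_mul] at this
    norm_num at this
    have h1 := hsol _ this (Or.inl rfl)
    rw [show h = 2 * (2 * j) by omega] at h1
    exact case_p1 m (2 * j) hm (by omega) u hu h1
  · exfalso
    have := (wq_two_one (2 * j)).2
    rw [show 2 * (2 * j) + 1 = h by omega, pow_mul] at this
    norm_num at this
    have h1 := hsol _ this (Or.inr rfl)
    rw [h1, hj, pow_succ, hpw] at h8
    push_cast at h8
    have h5 : (-1 : ZMod 8) = -u * 3 := by linear_combination h8 - u * h4 j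
    rcases hu8' with h | h <;> rw [h] at h5 <;> revert h5 <;> decide
  · exfalso
    have := (wq_two_one (2 * j + 1)).1
    rw [show 2 * (2 * j + 1) = h by omega, pow_succ, pow_mul] at this
    norm_num at this
    have h1 := hsol _ this (Or.inr rfl)
    rw [h1, hj, pow_add, hpw, hu2] at h8
    push_cast at h8
    have h5 : (-1 : ZMod 8) = 5 := by linear_combination h8 + h4 j
    revert h5; decide
  · have := (wq_two_one (2 * j + 1)).2
    rw [show 2 * (2 * j + 1) + 1 = h by omega, pow_succ, pow_mul] at this
    norm_num at this
    have h1 := hsol _ this (Or.inl rfl)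
    refine ⟨by omega, ?_, ?_, h1⟩
    · rw [h1, hj, pow_add, hpw, pow_succ, hu2] at h8
      push_cast at h8
      have h5 : (1 : ZMod 8) = -u * 7 := by linear_combination h8 - u * h4 j
      rcases hu8 with h | h
      · exact h
      · exfalso
        rcases hu8' with h' | h' <;> rw [h'] at h5
        · have := (ZMod.intCast_eq_intCast_iff_dvd_sub 1 u 8).1 (by rw [h']; norm_num)
          omega
        · revert h5; decide
    · have h3 : ((wq ((2 : ℤ) ^ (2 * m + 1)) u h : ℤ) : ZMod 3) = wq (2 : ZMod 3) (u : ZMod 3) h := by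
        rw [wq_intCast]
        congr 1
        push_cast
        rw [pow_succ, pow_mul, show (2 : ZMod 3) ^ 2 = 1 by decide, one_pow, one_mul]
      by_contra hc
      have hu3 : (u : ZMod 3) ≠ 1 := by
        intro h0
        have := (ZMod.intCast_eq_intCast_iff_dvd_sub 1 u 3).1 (by rw [h0]; norm_num)
        omega
      have h6 := (wq_zmod3 (u : ZMod 3) hu3 (2 * j + 1)).2
      rw [show 2 * (2 * j + 1) + 1 = h by omega] at h6
      rw [h1, h6] at h3
      revert h3; decide

/-- the chosen square root -/
noncomputable def sqD (D : ℤ) : ℂ := (D : ℂ) ^ ((1 : ℂ) / 2)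

theorem sqD_sq (D : ℤ) : sqD D ^ 2 = D := by
  have := Complex.cpow_nat_inv_pow (D : ℂ) (n := 2) (by norm_num)
  rw [sqD, one_div]; exact_mod_cast this

theorem sqD_mem (D : ℤ) : sqD D ∈ quadField D := mem_adjoin_simple_self ℚ _

theorem sqD_int (D : ℤ) : IsIntegral ℤ (sqD D) := by
  apply IsIntegral.of_pow (n := 2) (by norm_num)
  rw [sqD_sq]
  exact isIntegral_algebraMap (R := ℤ) (x := D)

theorem conj_sqD (D : ℤ) (hD : D < 0) : (starRingEnd ℂ) (sqD D) = - sqD D := by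
  have h := sqD_sq D
  rw [pow_two] at h
  have h1 := congrArg Complex.re h
  have h2 := congrArg Complex.im h
  simp at h1 h2
  have hD' : (D : ℝ) < 0 := by exact_mod_cast hD
  have : (sqD D).re = 0 := by
    have : (sqD D).re * (sqD D).im = 0 := by linarith
    rcases mul_eq_zero.1 this with h3 | h3
    · exact h3
    · rw [h3] at h1; nlinarith
  apply Complex.ext <;> simp [this]

theorem mem_quadField (D : ℤ) {x : ℂ} (hx : x ∈ quadField D) :
    ∃ a b : ℚ, x = a + b * sqD D := by
  have halg : IsAlgebraic ℚ ((D : ℂ) ^ ((1 : ℂ) / 2)) :=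
    ((sqD_int D).tower_top (A := ℚ)).isAlgebraic
  have hx' : x ∈ (quadField D).toSubalgebra := hx
  rw [quadField, adjoin_simple_toSubalgebra_of_isAlgebraic halg] at hx'
  clear hx
  induction hx' using Algebra.adjoin_induction with
  | mem x hx =>
    rw [Set.mem_singleton_iff] at hx
    exact ⟨0, 1, by simp [hx, sqD]⟩
  | algebraMap r => exact ⟨r, 0, by simp⟩
  | add x y hx hy h1 h2 =>
    obtain ⟨a, b, rfl⟩ := h1
    obtain ⟨c, d, rfl⟩ := h2
    exact ⟨a + c, b + d, by push_cast; ring⟩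
  | mul x y hx hy h1 h2 =>
    obtain ⟨a, b, rfl⟩ := h1
    obtain ⟨c, d, rfl⟩ := h2
    refine ⟨a * c + b * d * D, a * d + b * c, ?_⟩
    push_cast
    linear_combination b * d * sqD_sq D

theorem int_of_rat_integral {q : ℚ} (h : IsIntegral ℤ (q : ℂ)) : ∃ z : ℤ, (q : ℂ) = z := by
  have h1 : IsIntegral ℤ q := by
    rw [← isIntegral_algebraMap_iff (algebraMap ℚ ℂ).injective]
    simpa using h
  obtain ⟨z, hz⟩ := IsIntegrallyClosed.isIntegral_iff.1 h1
  refine ⟨z, ?_⟩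
  rw [← hz]; simp

theorem conj_int {x : ℂ} (h : IsIntegral ℤ x) : IsIntegral ℤ ((starRingEnd ℂ) x) :=
  h.map ((starRingEnd ℂ).toIntAlgHom)

theorem trace_int (D : ℤ) (hD : D < 0) {x : ℂ} (hx : x ∈ quadField D) (hi : IsIntegral ℤ x) :
    ∃ t : ℤ, x + (starRingEnd ℂ) x = t := by
  obtain ⟨a, b, rfl⟩ := mem_quadField D hx
  have e : (a + b * sqD D : ℂ) + (starRingEnd ℂ) (a + b * sqD D : ℂ) = ((2 * a : ℚ) : ℂ) := by
    simp [conj_sqD D hD]; ring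
  have := hi.add (conj_int hi)
  rw [e] at this ⊢
  exact int_of_rat_integral this

theorem norm_int (D : ℤ) (hD : D < 0) {x : ℂ} (hx : x ∈ quadField D) (hi : IsIntegral ℤ x) :
    ∃ t : ℕ, x * (starRingEnd ℂ) x = t := by
  obtain ⟨a, b, rfl⟩ := mem_quadField D hx
  have e : (a + b * sqD D : ℂ) * (starRingEnd ℂ) (a + b * sqD D : ℂ) =
      ((a ^ 2 - b ^ 2 * D : ℚ) : ℂ) := by
    simp [conj_sqD D hD]; linear_combination - (b : ℂ) ^ 2 * sqD_sq D
  have := hi.mul (conj_int hi)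
  rw [e] at this
  obtain ⟨z, hz⟩ := int_of_rat_integral this
  rw [← e, Complex.mul_conj] at hz
  rw [Complex.mul_conj]
  have hz' : Complex.normSq (a + b * sqD D) = z := by exact_mod_cast hz
  have : 0 ≤ z := by
    have := Complex.normSq_nonneg (a + b * sqD D)
    rw [hz'] at this; exact_mod_cast this
  obtain ⟨m, rfl⟩ := Int.eq_ofNat_of_zero_le this
  exact ⟨m, by rw [hz']; simp⟩

theorem sqD_ne (D : ℤ) (hD : D < 0) : sqD D ≠ 0 := by
  intro h
  have := sqD_sq D
  rw [h] at this
  have h2 : (D : ℂ) = 0 := by rw [← this]; simp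
  have : D = 0 := by exact_mod_cast h2
  omega

instance (D : ℤ) : NumberField (quadField D) := by
  have : FiniteDimensional ℚ (quadField D) :=
    adjoin.finiteDimensional ((sqD_int D).tower_top (A := ℚ))
  exact { to_charZero := inferInstance, to_finiteDimensional := this }

/-- lift an integral element of the field to the ring of integers -/
theorem exists_lift (D : ℤ) {x : ℂ} (hx : x ∈ quadField D) (hi : IsIntegral ℤ x) :
    ∃ y : 𝓞 (quadField D), ((y : quadField D) : ℂ) = x := by
  have : IsIntegral ℤ (⟨x, hx⟩ : quadField D) := by
    rw [← isIntegral_algebraMap_iff (algebraMap (quadField D) ℂ).injective]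
    exact hi
  exact ⟨⟨_, this⟩, rfl⟩

theorem coe_int (D : ℤ) (y : 𝓞 (quadField D)) : IsIntegral ℤ ((y : quadField D) : ℂ) := by
  have := y.2
  exact (this : IsIntegral ℤ (y : quadField D)).map ((quadField D).val.restrictScalars ℤ)

theorem class_step {R : Type*} [CommRing R] [IsDedekindDomain R] (n : ℕ) (hn0 : 0 < n)
    (hn : ¬ n ∣ Nat.card (ClassGroup R)) (α α' Y : R) (hY : Y ≠ 0) (hprod : α * α' = Y ^ n)
    (hco : IsCoprime (α + α') Y) :
    ∃ p, p.Prime ∧ p ∣ n ∧ ∃ β : R, Associated (β ^ p) α := by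
  have hcop : IsCoprime α α' := by
    have h1 : IsCoprime (α + α') (Y ^ n) := hco.pow_right
    rw [← hprod] at h1
    have h2 : IsCoprime (α + α') α := h1.of_mul_right_left
    have : IsCoprime (α' + α * 1) α := by convert h2 using 1; ring
    exact (IsCoprime.of_add_mul_left_left this).symm
  have hI : IsCoprime (Ideal.span {α}) (Ideal.span {α'}) := by
    rwa [Ideal.isCoprime_span_singleton_iff]
  obtain ⟨J, hJ⟩ := exists_eq_pow_of_mul_eq_pow_of_coprime hI
    (show Ideal.span {α} * Ideal.span {α'} = (Ideal.span {Y}) ^ n by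
      rw [Ideal.span_singleton_mul_span_singleton, hprod, Ideal.span_singleton_pow])
  have hα : α ≠ 0 := by
    rintro rfl
    rw [zero_mul] at hprod
    exact pow_ne_zero n hY hprod.symm
  have hJ0 : J ≠ 0 := by
    rintro rfl
    rw [zero_pow (by omega)] at hJ
    exact hα (Ideal.span_singleton_eq_bot.1 hJ)
  have hJm : J ∈ nonZeroDivisors (Ideal R) := mem_nonZeroDivisors_of_ne_zero hJ0
  set c := ClassGroup.mk0 ⟨J, hJm⟩ with hc
  have hpow : ∀ m : ℕ, c ^ m = 1 ↔ (J ^ m).IsPrincipal := by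
    intro m
    rw [hc, ← map_pow]
    exact ClassGroup.mk0_eq_one_iff (I := J ^ m) (pow_mem hJm m)
  have hcn : c ^ n = 1 := by
    rw [hpow, ← hJ]
    exact ⟨α, rfl⟩
  have h1 : orderOf c ∣ n := orderOf_dvd_of_pow_eq_one hcn
  have h2 : orderOf c ∣ Nat.card (ClassGroup R) := orderOf_dvd_natCard c
  obtain ⟨r, hr⟩ := h1
  have hr1 : r ≠ 1 := by
    rintro rfl
    rw [mul_one] at hr
    rw [hr] at hn
    exact hn h2
  obtain ⟨p, hp, hpr⟩ := Nat.exists_prime_and_dvd hr1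
  obtain ⟨q, rfl⟩ := hpr
  have hn' : n = (orderOf c * q) * p := by rw [hr]; ring
  refine ⟨p, hp, Dvd.intro_left _ hn'.symm, ?_⟩
  have h3 : c ^ (orderOf c * q) = 1 := by rw [pow_mul, pow_orderOf_eq_one, one_pow]
  rw [hpow] at h3
  obtain ⟨β, hβ⟩ := h3
  refine ⟨β, ?_⟩
  rw [← Ideal.span_singleton_eq_span_singleton, ← Ideal.span_singleton_pow, hJ]
  rw [show J ^ n = J ^ ((orderOf c * q) * p) from congrArg _ hn', pow_mul, hβ]

local notation "cj" => starRingEnd ℂ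

theorem unit_step (D : ℤ) (hD : D < 0) {ε : ℂ} (hε : ε ∈ quadField D) (hi : IsIntegral ℤ ε)
    (hN : ε * cj ε = 1) :
    (∀ p : ℕ, p.Prime → p ≠ 2 → (p = 3 → ε ^ 4 = 1) → (ε ^ p) ^ p = ε) ∧
      (ε ^ 4 = 1 ∨ (ε ^ 2 + ε + 1 = 0 ∧ ε + cj ε = -1) ∨
        (ε ^ 2 - ε + 1 = 0 ∧ ε + cj ε = 1)) := by
  obtain ⟨t, ht⟩ := trace_int D hD hε hi
  have hq : ε ^ 2 = t * ε - 1 := by linear_combination ε * ht - hN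
  have hre : 2 * ε.re = t := by
    have := congrArg Complex.re ht
    simp at this; linarith
  have hn1 : ε.re ^ 2 + ε.im ^ 2 = 1 := by
    have := congrArg Complex.re hN
    simp at this; linarith
  have ht2 : t ^ 2 ≤ 4 := by
    have : (t : ℝ) ^ 2 ≤ 4 := by rw [← hre]; nlinarith [sq_nonneg ε.im]
    exact_mod_cast this
  have htb : -2 ≤ t ∧ t ≤ 2 := by constructor <;> nlinarith
  have hcases : ε ^ 4 = 1 ∨ (ε ^ 2 + ε + 1 = 0 ∧ ε + cj ε = -1) ∨
        (ε ^ 2 - ε + 1 = 0 ∧ ε + cj ε = 1) := by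
    have : t = -2 ∨ t = -1 ∨ t = 0 ∨ t = 1 ∨ t = 2 := by omega
    rcases this with rfl | rfl | rfl | rfl | rfl
    · left
      push_cast at hq
      have : (ε + 1) ^ 2 = 0 := by linear_combination hq
      have : ε = -1 := by
        have := pow_eq_zero_iff (two_ne_zero) |>.1 this
        linear_combination this
      rw [this]; norm_num
    · right; left
      push_cast at hq ht
      exact ⟨by linear_combination hq, ht⟩
    · left
      push_cast at hq
      linear_combination (ε ^ 2 - 1) * hq
    · right; right
      push_cast at hq ht
      exact ⟨by linear_combination hq, ht⟩
    · left
      push_cast at hq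
      have : (ε - 1) ^ 2 = 0 := by linear_combination hq
      have : ε = 1 := by
        have := pow_eq_zero_iff (two_ne_zero) |>.1 this
        linear_combination this
      rw [this]; norm_num
  refine ⟨?_, hcases⟩
  intro p hp h2 h3
  rw [← pow_mul]
  have h12 : ε ^ 12 = 1 := by
    rcases hcases with h | ⟨h, _⟩ | ⟨h, _⟩
    · rw [show 12 = 4 * 3 from rfl, pow_mul, h, one_pow]
    · have : ε ^ 3 = 1 := by linear_combination (ε - 1) * h
      rw [show 12 = 3 * 4 from rfl, pow_mul, this, one_pow]
    · have : ε ^ 3 = -1 := by linear_combination (ε + 1) * h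
      rw [show 12 = 3 * 4 from rfl, pow_mul, this]; norm_num
  by_cases hp3 : p = 3
  · subst hp3
    have := h3 rfl
    linear_combination (ε ^ 5 + ε) * this
  · have hd2 : ¬ 2 ∣ p := fun h => h2 ((Nat.prime_dvd_prime_iff_eq Nat.prime_two hp).1 h).symm
    have hd3 : ¬ 3 ∣ p := fun h => hp3 ((Nat.prime_dvd_prime_iff_eq Nat.prime_three hp).1 h).symm
    have hmod : (p * p) % 12 = 1 := by
      have : p % 12 = 1 ∨ p % 12 = 5 ∨ p % 12 = 7 ∨ p % 12 = 11 := by omega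
      rcases this with h | h | h | h <;> simp [Nat.mul_mod, h]
    rw [← Nat.div_add_mod (p * p) 12, hmod, pow_add, pow_mul, h12, one_pow]
    simp

theorem F_main (D : ℤ) (hD : D < 0) (n : ℕ) (hno : Odd n) (hn : ¬ n ∣ quadClassNumber D)
    (α : ℂ) (hα : α ∈ quadField D) (hi : IsIntegral ℤ α) (Y : ℕ) (hY : 0 < Y) (t : ℤ)
    (hN : α * cj α = (Y : ℂ) ^ n) (htr : α + cj α = t) (hco : IsCoprime t (Y : ℤ)) :
    (∃ p : ℕ, p.Prime ∧ p ∣ n ∧ ∃ β : ℂ, β ∈ quadField D ∧ IsIntegral ℤ β ∧ β ^ p = α ∧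
      β * cj β = (Y : ℂ) ^ (n / p)) ∨
    (3 ∣ n ∧ ∃ β ε : ℂ, β ∈ quadField D ∧ IsIntegral ℤ β ∧ ε ∈ quadField D ∧ IsIntegral ℤ ε ∧
      β ^ 3 = ε * α ∧ ε ^ 2 + ε + 1 = 0 ∧ ε * cj ε = 1 ∧ ε + cj ε = -1 ∧
      β * cj β = (Y : ℂ) ^ (n / 3)) := by
  have hnpos : 0 < n := hno.pos
  obtain ⟨a, ha⟩ := exists_lift D hα hi
  let R := 𝓞 (quadField D)
  let ι : R →+* ℂ := (algebraMap (quadField D) ℂ).comp (algebraMap R (quadField D))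
  have hιinj : Function.Injective ι :=
    (algebraMap (quadField D) ℂ).injective.comp RingOfIntegers.coe_injective
  have hιa : ι a = α := ha
  let a' : R := (t : R) - a
  have hιa' : ι a' = cj α := by
    have hti : ι ((t : ℤ) : R) = (t : ℂ) := map_intCast ι t
    simp only [a', map_sub, hti, hιa]
    linear_combination -htr
  obtain ⟨p, hp, hpn, b, hb⟩ := class_step n hnpos hn a a' (Y : R)
    (by
      have : ((Y : ℕ) : R) ≠ 0 := by exact_mod_cast hY.ne'
      exact this)
    (by
      apply hιinj
      have hyi : ι ((Y : ℕ) : R) = (Y : ℂ) := map_natCast ι Y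
      rw [map_mul, map_pow, hιa, hιa', hN, hyi])
    (by
      have : a + a' = ((t : ℤ) : R) := by simp [a']
      rw [this]
      have := hco.map (Int.castRingHom R)
      simpa using this)
  obtain ⟨u, hu⟩ := hb.symm
  set β₀ := ι b with hβ₀
  set ε := ι (u : R) with hεd
  have hβm : β₀ ∈ quadField D := (b : quadField D).2
  have hεm : ε ∈ quadField D := ((u : R) : quadField D).2
  have hβi : IsIntegral ℤ β₀ := coe_int D b
  have hεi : IsIntegral ℤ ε := coe_int D (u : R)
  have hpow : β₀ ^ p = ε * α := by
    rw [hβ₀, ← map_pow, ← hu, map_mul, hιa]; ring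
  have hεN : ε * cj ε = 1 := by
    obtain ⟨r, hr⟩ := norm_int D hD hεm hεi
    obtain ⟨r', hr'⟩ := norm_int D hD ((((u⁻¹ : Rˣ) : R) : quadField D).2)
      (coe_int D ((u⁻¹ : Rˣ) : R))
    change ι ((u⁻¹ : Rˣ) : R) * cj (ι ((u⁻¹ : Rˣ) : R)) = _ at hr'
    have h1 : ε * ι ((u⁻¹ : Rˣ) : R) = 1 := by rw [hεd, ← map_mul]; simp
    have h2 : (r : ℂ) * r' = 1 := by
      rw [← hr, ← hr']
      have : cj ε * cj (ι ((u⁻¹ : Rˣ) : R)) = 1 := by rw [← map_mul, h1, map_one]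
      linear_combination cj ε * cj (ι ((u⁻¹ : Rˣ) : R)) * h1 + this
    have h3 : r * r' = 1 := by exact_mod_cast h2
    have h4 : r = 1 := Nat.eq_one_of_mul_eq_one_right h3
    rw [hr, h4]; simp
  have hβN : β₀ * cj β₀ = (Y : ℂ) ^ (n / p) := by
    obtain ⟨r, hr⟩ := norm_int D hD hβm hβi
    have h1 : ((r ^ p : ℕ) : ℂ) = ((Y ^ n : ℕ) : ℂ) := by
      push_cast
      rw [← hr, mul_pow, ← map_pow cj, hpow, ← hN, map_mul]
      linear_combination α * cj α * hεN
    have h2 : r ^ p = Y ^ n := by exact_mod_cast h1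
    have h3 : r = Y ^ (n / p) := by
      apply Nat.pow_left_injective hp.ne_zero
      simp only
      rw [h2, ← pow_mul, Nat.div_mul_cancel hpn]
    rw [hr, h3]; simp
  have hp2 : p ≠ 2 := by
    rintro rfl
    obtain ⟨c, hc⟩ := hno
    omega
  obtain ⟨hroot, hcases⟩ := unit_step D hD hεm hεi hεN
  by_cases hgood : p = 3 → ε ^ 4 = 1
  · left
    have h1 := hroot p hp hp2 hgood
    have hε0 : ε ≠ 0 := by rintro h0; rw [h0] at hεN; simp at hεN
    have hinv : ε⁻¹ = cj ε := by
      rw [eq_comm]; apply eq_inv_of_mul_eq_one_right; exact hεN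
    refine ⟨p, hp, hpn, β₀ * (ε⁻¹) ^ p, mul_mem hβm (pow_mem (inv_mem hεm) _), ?_, ?_, ?_⟩
    · rw [hinv]; exact hβi.mul ((conj_int hεi).pow p)
    · rw [mul_pow, hpow, inv_pow, inv_pow, h1]; field_simp
    · rw [map_mul, map_pow, map_inv₀, ← hβN]
      have : ε⁻¹ ^ p * (cj ε)⁻¹ ^ p = 1 := by rw [← mul_pow, ← mul_inv, hεN]; simp
      linear_combination β₀ * cj β₀ * this
  · right
    push Not at hgood
    obtain ⟨rfl, h4⟩ := hgood
    refine ⟨hpn, ?_⟩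
    rcases hcases with h | ⟨h, h'⟩ | ⟨h, h'⟩
    · exact absurd h h4
    · exact ⟨β₀, ε, hβm, hβi, hεm, hεi, hpow, h, hεN, h', hβN⟩
    · refine ⟨-β₀, -ε, neg_mem hβm, hβi.neg, neg_mem hεm, hεi.neg, ?_, ?_, ?_, ?_, ?_⟩
      · linear_combination -hpow
      · linear_combination h
      · rw [map_neg]; linear_combination hεN
      · rw [map_neg]; linear_combination -h'
      · rw [map_neg]; linear_combination hβN

theorem trace_eq (D : ℤ) (hD : D < 0) {β α : ℂ} (hβ : β ∈ quadField D) (hi : IsIntegral ℤ β)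
    (h : ℕ) (hpow : β ^ (2 * h + 1) = α) (u : ℕ) (hu : β * cj β = u) (t : ℤ)
    (ht : α + cj α = t) : ∃ b : ℤ, β + cj β = b ∧ b * wq (b ^ 2) (u : ℤ) h = t := by
  obtain ⟨b, hb⟩ := trace_int D hD hβ hi
  refine ⟨b, hb, ?_⟩
  have := wq_main β (cj β) h
  rw [hb, hu, ← map_pow, hpow, ht] at this
  have h2 := wq_intCast (S := ℂ) (b ^ 2) (u : ℤ) h
  push_cast at h2
  rw [← h2] at this
  exact_mod_cast this

theorem no_sqrt3 (D : ℤ) (hD : D < 0) {ε : ℂ} (hε : ε ∈ quadField D) (h1 : ε ^ 2 + ε + 1 = 0)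
    (h2 : ε + cj ε = -1) : ∃ b : ℚ, D * b ^ 2 = -3 := by
  obtain ⟨a, b, rfl⟩ := mem_quadField D hε
  simp [conj_sqD D hD] at h2
  have h3 : (2 * b : ℂ) * sqD D = 2 * (a + b * sqD D) + 1 := by linear_combination -h2
  refine ⟨2 * b, ?_⟩
  have h4 : ((2 * b : ℂ) * sqD D) ^ 2 = -3 := by
    rw [h3]; linear_combination 4 * h1
  rw [mul_pow, sqD_sq] at h4
  have h5 : (D : ℂ) * (2 * b) ^ 2 = -3 := by rw [← h4]; ring
  exact_mod_cast h5

theorem sqrt3_mod4 (D : ℤ) (b : ℚ) (h : D * b ^ 2 = -3) (hD : D % 4 = 2 ∨ D % 4 = 3) : False := by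
  have hb := Rat.num_div_den b
  have hd : (b.den : ℚ) ≠ 0 := by exact_mod_cast b.den_ne_zero
  rw [← hb, div_pow] at h
  have h2 : D * b.num ^ 2 = -3 * (b.den : ℤ) ^ 2 := by
    field_simp at h
    have : (D : ℚ) * (b.num : ℚ) ^ 2 = -3 * (b.den : ℚ) ^ 2 := by linarith
    exact_mod_cast this
  have hco : ¬ (2 ∣ b.num ∧ 2 ∣ (b.den : ℤ)) := by
    rintro ⟨h3, h4⟩
    have h5 : IsCoprime b.num (b.den : ℤ) := Rat.isCoprime_num_den b
    have := h5.isUnit_of_dvd' h3 h4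
    norm_num [Int.isUnit_iff] at this
  generalize b.num = x at *
  generalize (b.den : ℤ) = y at *
  have h4 : (D * x ^ 2 + 3 * y ^ 2) % 4 = 0 := by rw [h2]; ring_nf; norm_num
  have hx : x % 4 = 0 ∨ x % 4 = 1 ∨ x % 4 = 2 ∨ x % 4 = 3 := by omega
  have hy : y % 4 = 0 ∨ y % 4 = 1 ∨ y % 4 = 2 ∨ y % 4 = 3 := by omega
  have hco' : ¬ (x % 2 = 0 ∧ y % 2 = 0) := by omega
  rcases hD with hD | hD <;> rcases hx with hx | hx | hx | hx <;>
    rcases hy with hy | hy | hy | hy <;>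
    first
    | (exfalso; omega)
    | (simp [Int.add_emod, Int.mul_emod, pow_two, hD, hx, hy] at h4)

theorem wq_odd (T u : ℤ) (hT : T % 2 = 0) (hu : u % 2 = 1) (k : ℕ) : wq T u k % 2 = 1 := by
  induction k using Nat.twoStepInduction with
  | zero => simp [wq_zero]
  | one => rw [wq_one]; omega
  | more k h0 h1 =>
    rw [wq_add_two]
    have : u ^ 2 % 2 = 1 := by simp [pow_two, Int.mul_emod, hu]
    simp [Int.sub_emod, Int.mul_emod, h0, h1, hT, this]

theorem odd_mul_two_pow (b w : ℤ) (m : ℕ) (hw : w % 2 = 1) (h : b * w = 2 ^ m) :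
    (w = 1 ∨ w = -1) ∧ b ^ 2 = 4 ^ m := by
  have h1 : IsCoprime w ((2 : ℤ) ^ m) := by
    apply IsCoprime.pow_right
    exact (Int.isCoprime_iff_gcd_eq_one.2 (by
      have := Int.odd_iff.2 hw
      rw [Int.gcd_comm]
      have h3 : Int.gcd 2 w ∣ 2 := by exact_mod_cast Int.gcd_dvd_left 2 w
      rcases (Nat.dvd_prime Nat.prime_two).1 h3 with h4 | h4
      · exact h4
      · have : ((Int.gcd 2 w : ℕ) : ℤ) ∣ w := Int.gcd_dvd_right 2 w
        rw [h4] at this; omega))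
  have h2 : w ∣ 2 ^ m := ⟨b, by rw [← h]; ring⟩
  have h3 : IsUnit w := h1.isUnit_of_dvd' dvd_rfl h2
  rw [Int.isUnit_iff] at h3
  refine ⟨h3, ?_⟩
  rw [show (4 : ℤ) ^ m = (2 ^ m) ^ 2 by rw [← pow_mul, mul_comm, pow_mul]; norm_num, ← h]
  rcases h3 with h | h <;> rw [h] <;> ring

theorem F_even (D : ℤ) (hD : D < 0) (n : ℕ) (hno : Odd n) (hn : ¬ n ∣ quadClassNumber D)
    (hD4 : D % 4 = 2 ∨ D % 4 = 3) (θ : ℂ) (hθ : θ ∈ quadField D) (hcj : cj θ = -θ)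
    (m Y : ℕ) (hY : Odd Y) (hθ2 : θ ^ 2 = 4 ^ m - 2 * (Y : ℂ) ^ n) :
    ∃ p h : ℕ, p.Prime ∧ p = 2 * h + 1 ∧ p ∣ n ∧
      (wq ((2 : ℤ) ^ (2 * m + 1)) ((Y ^ (n / p) : ℕ) : ℤ) h = 1 ∨
        wq ((2 : ℤ) ^ (2 * m + 1)) ((Y ^ (n / p) : ℕ) : ℤ) h = -1) := by
  have hIntZ : ∀ z : ℤ, IsIntegral ℤ (z : ℂ) := fun z => isIntegral_algebraMap (R := ℤ) (x := z)
  have hθi : IsIntegral ℤ θ := by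
    apply IsIntegral.of_pow (n := 2) (by norm_num)
    rw [hθ2]
    have := hIntZ (4 ^ m - 2 * (Y : ℤ) ^ n)
    push_cast at this; exact this
  have cj2 : cj 2 = 2 := map_ofNat _ 2
  have cj4 : cj 4 = 4 := map_ofNat _ 4
  have h42 : (4 : ℂ) ^ m = (2 ^ m) ^ 2 := by rw [← pow_mul, mul_comm, pow_mul]; norm_num
  set α' : ℂ := ((4 ^ m - Y ^ n : ℤ) : ℂ) + ((2 ^ m : ℤ) : ℂ) * θ with hα'
  set α : ℂ := ((2 ^ m : ℤ) : ℂ) + θ with hα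
  have hα2 : α ^ 2 = 2 * α' := by
    rw [hα, hα']; push_cast; linear_combination hθ2 - h42
  have hαN : α * cj α = 2 * (Y : ℂ) ^ n := by
    rw [hα, map_add, hcj]; simp [cj2]; linear_combination -hθ2 - h42
  have hα'm : α' ∈ quadField D := add_mem (intCast_mem _ _) (mul_mem (intCast_mem _ _) hθ)
  have hαm : α ∈ quadField D := add_mem (intCast_mem _ _) hθ
  have hα'i : IsIntegral ℤ α' := (hIntZ _).add ((hIntZ _).mul hθi)
  have hαi : IsIntegral ℤ α := (hIntZ _).add hθi
  have hα'N : α' * cj α' = ((Y ^ 2 : ℕ) : ℂ) ^ n := by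
    have h1 : cj α ^ 2 = 2 * cj α' := by rw [← map_pow, hα2, map_mul, cj2]
    have : 4 * (α' * cj α') = 4 * ((Y ^ 2 : ℕ) : ℂ) ^ n := by
      push_cast
      calc 4 * (α' * cj α') = (2 * α') * (2 * cj α') := by ring
        _ = (α * cj α) ^ 2 := by rw [← hα2, ← h1]; ring
        _ = _ := by rw [hαN]; ring
    exact mul_left_cancel₀ (by norm_num) this
  have hco : IsCoprime (2 * (4 ^ m - (Y : ℤ) ^ n)) ((Y ^ 2 : ℕ) : ℤ) := by
    have hY2 : IsCoprime (2 : ℤ) (Y : ℤ) := by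
      have := (Nat.coprime_two_left.2 hY)
      exact_mod_cast Nat.isCoprime_iff_coprime.2 this
    push_cast
    apply IsCoprime.pow_right
    apply IsCoprime.mul_left hY2
    have h4 : IsCoprime ((4 : ℤ) ^ m) (Y : ℤ) := by
      apply IsCoprime.pow_left
      rw [show (4 : ℤ) = 2 * 2 by norm_num]
      exact hY2.mul_left hY2
    obtain ⟨n', hn'⟩ : ∃ n', n = n' + 1 := ⟨n - 1, by have := hno.pos; omega⟩
    have := h4.add_mul_left_left (-(Y : ℤ) ^ n')
    have e : (4 : ℤ) ^ m - (Y : ℤ) ^ n = 4 ^ m + Y * (-(Y : ℤ) ^ n') := by rw [hn']; ring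
    rw [e]; exact this
  rcases F_main D hD n hno hn α' hα'm hα'i (Y ^ 2) (pow_pos hY.pos 2) (2 * (4 ^ m - (Y : ℤ) ^ n))
    hα'N (by rw [hα']; simp [hcj, cj2, cj4]; ring) hco with ⟨p, hp, hpn, β', hβm, hβi, hβp, hβN⟩ |
      ⟨_, β, ε, _, _, h3, _, _, h4, _, h5, _⟩
  · have hpo : Odd p := hno.of_dvd_nat hpn
    obtain ⟨h, hh⟩ := hpo
    refine ⟨p, h, hp, hh, hpn, ?_⟩
    set u := Y ^ (n / p) with hu
    have hYC : (Y : ℂ) ≠ 0 := by exact_mod_cast hY.pos.ne'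
    have hα0 : α ≠ 0 := by
      intro h0; rw [h0, zero_mul] at hαN
      have : 2 * (Y : ℂ) ^ n ≠ 0 := mul_ne_zero two_ne_zero (pow_ne_zero _ hYC)
      exact this hαN.symm
    have hβ'0 : β' ≠ 0 := by
      rintro h0; rw [h0, zero_pow hp.ne_zero] at hβp
      rw [← hβp] at hα2; simp at hα2; exact hα0 hα2
    set β := α / β' ^ h with hβ
    have hb2 : β ^ 2 = 2 * β' := by
      rw [hβ, div_pow, hα2, ← hβp, hh]; field_simp; ring
    have hβi' : IsIntegral ℤ β := by
      apply IsIntegral.of_pow (n := 2) (by norm_num)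
      rw [hb2]
      have := (hIntZ 2).mul hβi
      simpa using this
    have hβm' : β ∈ quadField D := div_mem hαm (pow_mem hβm h)
    have hβp' : β ^ (2 * h + 1) = 2 ^ h * α := by
      rw [pow_succ, pow_mul, hb2, mul_pow, hβ]; field_simp
    have hN : β * cj β = ((2 * u : ℕ) : ℂ) := by
      obtain ⟨r, hr⟩ := norm_int D hD hβm' hβi'
      have h1 : (r : ℂ) ^ 2 = ((2 * u : ℕ) : ℂ) ^ 2 := by
        rw [← hr, mul_pow, ← map_pow, hb2, map_mul]
        simp only [map_ofNat]
        have : 2 * β' * (2 * cj β') = 4 * (β' * cj β') := by ring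
        rw [this, hβN, hu]; push_cast; ring
      have h2 : r ^ 2 = (2 * u) ^ 2 := by exact_mod_cast h1
      have h3 : r = 2 * u := Nat.pow_left_injective two_ne_zero h2
      rw [hr, h3]
    obtain ⟨c, hc, hc2⟩ := trace_eq D hD hβm' hβi' h hβp' (2 * u) hN (2 ^ h * (2 * 2 ^ m))
      (by rw [map_mul, hα, map_add, hcj]; simp [cj2]; ring)
    obtain ⟨c', hc'⟩ := trace_int D hD hβm hβi
    have hceven : c ^ 2 = 2 * c' + 4 * u := by
      have : (c : ℂ) ^ 2 = 2 * c' + 4 * u := by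
        have h2 : cj β ^ 2 = 2 * cj β' := by rw [← map_pow, hb2, map_mul, cj2]
        push_cast at hN
        rw [← hc, ← hc']; linear_combination hb2 + h2 + 2 * hN
      exact_mod_cast this
    have hce : Even c := by
      have : Even (c ^ 2) := ⟨c' + 2 * u, by rw [hceven]; ring⟩
      exact (Int.even_pow.1 this).1
    obtain ⟨b, hb⟩ := hce
    have hcb : c ^ 2 = 2 * (2 * b ^ 2) := by rw [hb]; ring
    have h2u : ((2 * u : ℕ) : ℤ) = 2 * (u : ℤ) := by push_cast; ring
    rw [hcb, h2u, wq_hom, hb] at hc2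
    have hfin : b * wq (2 * b ^ 2) (u : ℤ) h = 2 ^ m := by
      have : (2 * 2 ^ h : ℤ) * (b * wq (2 * b ^ 2) (u : ℤ) h) = (2 * 2 ^ h) * 2 ^ m := by
        linear_combination hc2
      exact mul_left_cancel₀ (by positivity) this
    have huo : (u : ℤ) % 2 = 1 := by
      have : Odd u := hY.pow
      have := Nat.odd_iff.1 this
      omega
    obtain ⟨h1, h2⟩ := odd_mul_two_pow b _ m (wq_odd _ _ (by omega) huo h) hfin
    rw [h2] at h1
    have h3 : (2 : ℤ) ^ (2 * m + 1) = 2 * 4 ^ m := by rw [pow_succ, pow_mul]; norm_num; ring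
    rw [h3]; exact h1
  · exfalso
    obtain ⟨b, hb⟩ := no_sqrt3 D hD h3 h4 h5
    exact sqrt3_mod4 D b hb hD4

theorem size_bound2 (h : ℕ) (hh : 1 ≤ h) (T u : ℤ) (hT : T ≠ 0) (hu : 0 ≤ u)
    (hW : |wq T u h| ≤ 2) : 16 * u ≤ (2 * h + 1) ^ 2 * (T + 2) := by
  have hw : |wq (T : ℝ) (u : ℝ) h| ≤ 2 := by
    rw [← wq_intCast]; exact_mod_cast hW
  rw [wq_prod_real h _ _ (by exact_mod_cast hT)] at hw
  have : ∃ i ∈ Finset.Icc 1 h, |(T : ℝ) - u * (4 * Real.sin (Real.pi * i / (2 * h + 1)) ^ 2)| ≤ 2 := by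
    by_contra! hc
    rw [Finset.abs_prod] at hw
    have h1 := Finset.prod_lt_prod_of_nonempty (s := Finset.Icc 1 h) (f := fun _ => (2 : ℝ))
      (fun _ _ => two_pos) hc ⟨1, by simp [hh]⟩
    simp only [Finset.prod_const, Nat.card_Icc, Nat.add_sub_cancel] at h1
    have h2 : (2 : ℝ) ^ 1 ≤ 2 ^ h := pow_le_pow_right₀ (by norm_num) hh
    linarith
  obtain ⟨i, hi, hi2⟩ := this
  simp at hi
  have := sin_lower h i hi.1 hi.2
  have hp : (0 : ℝ) < (2 * h + 1) ^ 2 := by positivity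
  have huR : (0 : ℝ) ≤ u := by exact_mod_cast hu
  have h3 := (abs_le.1 hi2).1
  rw [div_le_iff₀ hp] at this
  have : (16 * u : ℝ) ≤ (2 * h + 1) ^ 2 * (T + 2) := by nlinarith
  exact_mod_cast this

theorem kill_size (h p n U : ℕ) (hp : p.Prime) (hh : p = 2 * h + 1) (hn : 0 < n) (hpn : p ∣ n)
    (hU : 3 ^ n ≤ U) (T : ℤ) (hT : 1 ≤ T) (hT4 : T ≤ 4)
    (hW : |wq T ((U ^ (n / p) : ℕ) : ℤ) h| ≤ 2) : False := by
  have hp2 := hp.two_le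
  have h1 : 1 ≤ h := by omega
  have h2 := size_bound2 h h1 T _ (by omega) (by positivity) hW
  have h3 : U ≤ U ^ (n / p) := Nat.le_self_pow (Nat.div_pos (Nat.le_of_dvd hn hpn) hp.pos).ne' U
  have h4 : 3 ^ p ≤ 3 ^ n := Nat.pow_le_pow_right (by norm_num) (Nat.le_of_dvd hn hpn)
  have h5 : ∀ q : ℕ, 3 ≤ q → q ^ 2 ≤ 3 ^ q := by
    intro q hq
    induction q, hq using Nat.le_induction with
    | base => norm_num
    | succ q hq ih => rw [pow_succ 3]; nlinarith
  have h6 := h5 p (by omega)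
  have h7 : p ^ 2 ≤ U ^ (n / p) := by omega
  have h8 : ((2 * h + 1 : ℤ)) ^ 2 ≤ ((U ^ (n / p) : ℕ) : ℤ) := by
    have h70 : (2 * h + 1) ^ 2 ≤ U ^ (n / p) := by rw [← hh]; exact h7
    exact_mod_cast h70
  have h9 : (0 : ℤ) < ((2 * h + 1 : ℤ)) ^ 2 := by positivity
  rw [← hh] at *
  nlinarith

theorem F_three (D : ℤ) (n U : ℕ) (hn : 3 ≤ n) (hno : Odd n) (hU : 3 ^ n ≤ U)
    (hDU : D = 1 - 4 * (U : ℤ) ^ n) : n ∣ quadClassNumber D := by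
  by_contra hnd
  have hU1 : 1 < U := lt_of_lt_of_le (Nat.one_lt_pow (by omega) (by norm_num)) hU
  have hD : D < 0 := by
    have : (0 : ℤ) < (U : ℤ) ^ n := by positivity
    omega
  have cj2 : cj 2 = 2 := map_ofNat _ 2
  have hs := sqD_sq D
  have hc := conj_sqD D hD
  have hDC : (D : ℂ) = 1 - 4 * (U : ℂ) ^ n := by rw [hDU]; push_cast; ring
  set α : ℂ := (1 + sqD D) / 2 with hα
  have hαm : α ∈ quadField D :=
    div_mem (add_mem (one_mem _) (sqD_mem D)) (by exact_mod_cast intCast_mem (quadField D) 2)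
  have hc' : cj α = (1 - sqD D) / 2 := by rw [hα, map_div₀, map_add, hc, cj2]; simp; ring
  have hαN : α * cj α = (U : ℂ) ^ n := by
    rw [hc', hα]; linear_combination (-1 / 4) * hs - (1 / 4) * hDC
  have hαt : α + cj α = ((1 : ℤ) : ℂ) := by rw [hc', hα]; push_cast; ring
  have hαi : IsIntegral ℤ α := by
    refine ⟨Polynomial.X ^ 2 - Polynomial.X + Polynomial.C ((U : ℤ) ^ n), ?_, ?_⟩
    · monicity!
    · simp only [Polynomial.eval₂_add, Polynomial.eval₂_sub, Polynomial.eval₂_X_pow,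
        Polynomial.eval₂_X, Polynomial.eval₂_C]
      push_cast at hαt
      simp
      linear_combination α * hαt - hαN
  rcases F_main D hD n hno hnd α hαm hαi U (by omega) 1 hαN hαt isCoprime_one_left with
    ⟨p, hp, hpn, β, hβm, hβi, hβp, hβN⟩ | ⟨h3, β, ε, _, _, hε, _, _, hε2, _, hε3, _⟩
  · obtain ⟨h, hh⟩ := hno.of_dvd_nat hpn
    rw [hh] at hβp
    obtain ⟨b, _, hb⟩ := trace_eq D hD hβm hβi h hβp (U ^ (n / p)) (by rw [hβN]; push_cast; rfl) 1 hαt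
    have hb2 : b ^ 2 = 1 := by
      rcases Int.eq_one_or_neg_one_of_mul_eq_one hb with h | h <;> rw [h] <;> norm_num
    rw [hb2] at hb
    refine kill_size h p n U hp hh (by omega) hpn hU 1 le_rfl (by norm_num) ?_
    rw [mul_comm] at hb
    rcases Int.eq_one_or_neg_one_of_mul_eq_one hb with h | h <;> rw [h] <;> norm_num
  · obtain ⟨b, hb⟩ := no_sqrt3 D hD hε hε2 hε3
    obtain ⟨e, he⟩ := h3
    have hb0 : b ≠ 0 := by rintro rfl; norm_num at hb
    set y : ℚ := (U : ℚ) ^ e with hy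
    have hy1 : 1 < y := one_lt_pow₀ (by exact_mod_cast hU1) (by omega)
    have hDQ : (D : ℚ) = 1 - 4 * y ^ 3 := by
      rw [hDU, hy, ← pow_mul, mul_comm e 3, ← he]; push_cast; ring
    set s : ℚ := 1 / b with hsd
    have hs3 : 4 * y ^ 3 - 1 = 3 * s ^ 2 := by
      rw [hsd]; field_simp; rw [hDQ] at hb; linarith
    have hy3 : 1 < y ^ 3 := one_lt_pow₀ hy1 (by norm_num)
    refine fermatLastTheoremFor_iff_rat.1 fermatLastTheoremThree (s - 1) (2 * y) (s + 1) ?_ ?_ ?_ ?_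
    · intro h; have : s = 1 := by linarith
      rw [this] at hs3; linarith
    · positivity
    · intro h; have : s = -1 := by linarith
      rw [this] at hs3; linarith
    · linear_combination 2 * hs3

theorem not_int_quarter (z : ℤ) (hz : z % 4 ≠ 0) (x : ℂ) (hx : IsIntegral ℤ x)
    (h : 4 * (x * cj x) = z) : False := by
  have h1 : IsIntegral ℤ (x * cj x) := hx.mul (conj_int hx)
  have h2 : x * cj x = ((z / 4 : ℚ) : ℂ) := by push_cast; linear_combination h / 4
  rw [h2] at h1
  obtain ⟨w, hw⟩ := int_of_rat_integral h1
  have : (z : ℂ) = 4 * w := by rw [← hw]; push_cast; ring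
  have : z = 4 * w := by exact_mod_cast this
  omega

theorem F_two (D : ℤ) (n U : ℕ) (hn : 3 ≤ n) (hno : Odd n) (hU : 3 ^ n ≤ U) (hU4 : U % 4 = 1)
    (hDU : D = 1 - (U : ℤ) ^ n) : n ∣ quadClassNumber D := by
  by_contra hnd
  have hU1 : 1 < U := lt_of_lt_of_le (Nat.one_lt_pow (by omega) (by norm_num)) hU
  have hD : D < 0 := by
    have : (1 : ℤ) < (U : ℤ) ^ n := one_lt_pow₀ (by exact_mod_cast hU1) (by omega)
    omega
  have hIntZ : ∀ z : ℤ, IsIntegral ℤ (z : ℂ) := fun z => isIntegral_algebraMap (R := ℤ) (x := z)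
  have hs := sqD_sq D
  have hc := conj_sqD D hD
  have hDC : (D : ℂ) = 1 - (U : ℂ) ^ n := by rw [hDU]; push_cast; ring
  set α : ℂ := 1 + sqD D with hα
  have hαm : α ∈ quadField D := add_mem (one_mem _) (sqD_mem D)
  have hc' : cj α = 1 - sqD D := by rw [hα, map_add, hc]; simp; ring
  have hαN : α * cj α = (U : ℂ) ^ n := by
    rw [hc', hα]; linear_combination - hs - hDC
  have hαt : α + cj α = ((2 : ℤ) : ℂ) := by rw [hc', hα]; push_cast; ring
  have hαi : IsIntegral ℤ α := isIntegral_one.add (sqD_int D)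
  have hUo : Odd U := Nat.odd_iff.2 (by omega)
  have hco : IsCoprime (2 : ℤ) (U : ℤ) := by
    exact_mod_cast Nat.isCoprime_iff_coprime.2 (Nat.coprime_two_left.2 hUo)
  rcases F_main D hD n hno hnd α hαm hαi U (by omega) 2 hαN hαt hco with
    ⟨p, hp, hpn, β, hβm, hβi, hβp, hβN⟩ | ⟨h3, β, ε, hβm, hβi, hε, hεi, hβ3, hε2, hεN, hε3, hβN⟩
  · obtain ⟨h, hh⟩ := hno.of_dvd_nat hpn
    rw [hh] at hβp
    obtain ⟨b, _, hb⟩ := trace_eq D hD hβm hβi h hβp (U ^ (n / p)) (by rw [hβN]; push_cast; rfl) 2 hαt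
    have hbd : b ∣ 2 := ⟨_, hb.symm⟩
    have hb2 : b ^ 2 ≤ 4 ∧ 1 ≤ b ^ 2 := by
      have h1 : b.natAbs ≤ 2 := Nat.le_of_dvd (by norm_num) (Int.natAbs_dvd_natAbs.2 hbd)
      have h0 : b ≠ 0 := by rintro rfl; simp at hb
      have h2 : |b| ≤ 2 := by rw [Int.abs_eq_natAbs]; exact_mod_cast h1
      have h4 := abs_le.1 h2
      constructor
      · nlinarith
      · have := sq_pos_of_ne_zero h0
        omega
    refine kill_size h p n U hp hh (by omega) hpn hU (b ^ 2) hb2.2 hb2.1 ?_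
    have : wq (b ^ 2) ((U ^ (n / p) : ℕ) : ℤ) h ∣ 2 := ⟨b, by rw [mul_comm, hb]⟩
    have h1 := Nat.le_of_dvd (by norm_num) (Int.natAbs_dvd_natAbs.2 this)
    rw [Int.abs_eq_natAbs]; exact_mod_cast h1
  · have h4D : D % 4 = 0 := by
      have : (U : ℤ) ^ n % 4 = 1 := by
        have : (U : ℤ) ≡ 1 [ZMOD 4] := by unfold Int.ModEq; omega
        have := this.pow n
        rw [one_pow] at this
        exact this
      omega
    set κ := sqD D / 2 with hκ
    have hκi : IsIntegral ℤ κ := by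
      apply IsIntegral.of_pow (n := 2) (by norm_num)
      have : κ ^ 2 = ((D / 4 : ℤ) : ℂ) := by
        have e : D = 4 * (D / 4) := by omega
        have e' : (D : ℂ) = 4 * ((D / 4 : ℤ) : ℂ) := by exact_mod_cast e
        rw [hκ, div_pow, hs, e']; ring
      rw [this]; exact hIntZ _
    have hακ : α = 1 + 2 * κ := by rw [hα, hκ]; ring
    obtain ⟨b, hb⟩ := trace_int D hD hβm hβi
    have huo : Odd (U ^ (n / 3)) := hUo.pow
    have hβN' : β * cj β = ((U ^ (n / 3) : ℕ) : ℂ) := by rw [hβN]; push_cast; rfl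
    set u := U ^ (n / 3)
    have hβ2 : β ^ 2 = b * β - u := by linear_combination -hβN' + β * hb
    rw [hακ] at hβ3
    obtain ⟨v, hv⟩ := huo
    have hvC : (u : ℂ) = 2 * v + 1 := by rw [hv]; push_cast; ring
    have hvi : IsIntegral ℤ (v : ℂ) := hIntZ v
    rcases Int.even_or_odd' b with ⟨c, hcb | hcb⟩
    · have hbC : (b : ℂ) = 2 * c := by rw [hcb]; push_cast; ring
      -- β² = 1 + 2 μ
      have hμ : β ^ 2 = 1 + 2 * (c * β - v - 1) := by rw [hβ2, hbC, hvC]; ring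
      set μ : ℂ := c * β - v - 1 with hμd
      have hμi : IsIntegral ℤ μ := (((hIntZ c).mul hβi).sub hvi).sub isIntegral_one
      have e6 : (1 + 2 * μ) ^ 3 = ε ^ 2 * (1 + 2 * κ) ^ 2 := by
        rw [← hμ, ← mul_pow, ← hβ3]; ring
      set x : ℂ := (-1 - (3 * μ + 6 * μ ^ 2 + 4 * μ ^ 3) + ε ^ 2 * (2 * κ + 2 * κ ^ 2)) with hx
      have hxe : 2 * x = ε := by
        rw [hx]; linear_combination -e6 - hε2
      have hi3 : IsIntegral ℤ (3 : ℂ) := by exact_mod_cast hIntZ 3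
      have hi6 : IsIntegral ℤ (6 : ℂ) := by exact_mod_cast hIntZ 6
      have hi4 : IsIntegral ℤ (4 : ℂ) := by exact_mod_cast hIntZ 4
      have hi2 : IsIntegral ℤ (2 : ℂ) := by exact_mod_cast hIntZ 2
      have hi1 : IsIntegral ℤ (-1 : ℂ) := by exact_mod_cast hIntZ (-1)
      have hxi : IsIntegral ℤ x :=
        (hi1.sub (((hi3.mul hμi).add (hi6.mul (hμi.pow 2))).add (hi4.mul (hμi.pow 3)))).add
          ((hεi.pow 2).mul ((hi2.mul hκi).add (hi2.mul (hκi.pow 2))))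
      refine not_int_quarter 1 (by norm_num) x hxi ?_
      rw [← hxe, map_mul, map_ofNat (starRingEnd ℂ) 2] at hεN
      push_cast; linear_combination hεN
    · have hbC : (b : ℂ) = 2 * c + 1 := by rw [hcb]; push_cast; ring
      have hβ3' : β ^ 3 = (b ^ 2 - u) * β - u * b := by
        linear_combination (β + b) * hβ2
      set x : ℂ := (2 * c ^ 2 + 2 * c - v) * β - (2 * c * v + v + c) - 1 - ε * κ with hx
      have hxe : 2 * x = ε - 1 := by
        rw [hβ3', hbC, hvC] at hβ3
        rw [hx]; linear_combination hβ3
      have hi2 : IsIntegral ℤ (2 : ℂ) := by exact_mod_cast hIntZ 2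
      have hci : IsIntegral ℤ (c : ℂ) := hIntZ c
      have hxi : IsIntegral ℤ x :=
        ((((((hi2.mul (hci.pow 2)).add (hi2.mul hci)).sub hvi).mul hβi).sub
          ((((hi2.mul hci).mul hvi).add hvi).add hci)).sub isIntegral_one).sub (hεi.mul hκi)
      refine not_int_quarter 3 (by norm_num) x hxi ?_
      have hcx : 2 * cj x = cj ε - 1 := by
        have := congrArg cj hxe
        rwa [map_mul, map_ofNat (starRingEnd ℂ) 2, map_sub cj ε 1, map_one] at this
      push_cast
      linear_combination 2 * cj x * hxe + (ε - 1) * hcx + hεN - hε3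

def TheoremX : Prop := ∀ (p h N : ℕ) (u : ℤ), p.Prime → p = 2 * h + 1 → p % 8 = 7 → 3 ≤ N →
  Odd u → (13 : ℤ) ^ p ≤ u → wq ((2 : ℤ) ^ N) u h = 1 → False

theorem odd_pow_zmod4 (a : ℤ) (n : ℕ) (hn : Odd n) (ha : Odd a) : a ^ n % 4 = a % 4 := by
  obtain ⟨j, rfl⟩ := hn
  have h1 : a ^ 2 ≡ 1 [ZMOD 4] := by
    have : a % 4 = 1 ∨ a % 4 = 3 := by have := Int.odd_iff.1 ha; omega
    rcases this with h | h <;> simp [Int.ModEq, pow_two, Int.mul_emod, h]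
  have h2 : a ^ (2 * j + 1) ≡ 1 ^ j * a [ZMOD 4] := by
    rw [pow_succ, pow_mul]; exact (h1.pow j).mul_right a
  simpa [Int.ModEq] using h2

theorem pow_mod3 (a : ℤ) (n : ℕ) (hn : Odd n) : a ^ n % 3 = a % 3 := by
  obtain ⟨j, rfl⟩ := hn
  induction j with
  | zero => simp
  | succ j ih =>
    have e : a ^ (2 * (j + 1) + 1) = a ^ (2 * j + 1) * (a * a) := by ring
    rw [e, Int.mul_emod, ih]
    have : a % 3 = 0 ∨ a % 3 = 1 ∨ a % 3 = 2 := by omega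
    rcases this with h | h | h <;> simp [Int.mul_emod, h]

theorem odd_pow_mod8 (a : ℤ) (n : ℕ) (hn : Odd n) (ha : Odd a) : a ^ n % 8 = a % 8 := by
  obtain ⟨j, rfl⟩ := hn
  have h1 : a ^ 2 ≡ 1 [ZMOD 8] := by
    have : a % 8 = 1 ∨ a % 8 = 3 ∨ a % 8 = 5 ∨ a % 8 = 7 := by have := Int.odd_iff.1 ha; omega
    rcases this with h | h | h | h <;> simp [Int.ModEq, pow_two, Int.mul_emod, h]
  have h2 : a ^ (2 * j + 1) ≡ 1 ^ j * a [ZMOD 8] := by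
    rw [pow_succ, pow_mul]; exact (h1.pow j).mul_right a
  simpa [Int.ModEq] using h2

theorem stmt_of_X (hX : TheoremX) (k n : ℕ) (hk : 3 ≤ k) (hko : Odd k) (hn : 3 ≤ n) (hno : Odd n)
    (d : ℤ) (hd : d = (1 - 2 * (k : ℤ) ^ n) ^ n) :
    ∀ D : ℤ,
      (D = d ∨ D = d + 1 ∨ D = 4 * d + 1 ∨
        ∃ m : ℕ, 1 ≤ (4 : ℤ) ^ m ∧ (4 : ℤ) ^ m ≤ 2 * |d| ∧ D = 2 * d + 4 ^ m) →
      D < 0 ∧ n ∣ quadClassNumber D := by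
  have hkn : 1 ≤ k ^ n := Nat.one_le_pow _ _ (by omega)
  obtain ⟨U, hU⟩ : ∃ U : ℕ, U + 1 = 2 * k ^ n := ⟨2 * k ^ n - 1, by omega⟩
  have hUZ : (1 - 2 * (k : ℤ) ^ n) = -(U : ℤ) := by
    have : (U : ℤ) + 1 = 2 * (k : ℤ) ^ n := by exact_mod_cast hU
    linarith
  have hko' : Odd (k ^ n) := hko.pow
  have hU4 : U % 4 = 1 := by have := Nat.odd_iff.1 hko'; omega
  have hUo : Odd U := Nat.odd_iff.2 (by omega)
  have hkU : k ^ n ≤ U := by omega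
  have h3k : 3 ^ n ≤ k ^ n := Nat.pow_le_pow_left hk n
  have h3U : 3 ^ n ≤ U := h3k.trans hkU
  have hU1 : 1 < U := lt_of_lt_of_le (Nat.one_lt_pow (by omega) (by norm_num)) h3U
  rw [hUZ, hno.neg_pow] at hd
  have hUn : (1 : ℤ) < (U : ℤ) ^ n := one_lt_pow₀ (by exact_mod_cast hU1) (by omega)
  have hUn4 : (U : ℤ) ^ n % 4 = 1 := by
    rw [odd_pow_zmod4 _ _ hno (by exact_mod_cast hUo)]; omega
  rintro D (rfl | rfl | rfl | ⟨m, -, hm2, rfl⟩)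
  · have hD : D < 0 := by omega
    refine ⟨hD, ?_⟩
    by_contra hnd
    obtain ⟨j, hj⟩ := hno
    have hUC : (U : ℂ) ≠ 0 := by exact_mod_cast (by omega : U ≠ 0)
    obtain ⟨p, h, hp, hh, hpn, hw⟩ := F_even D hD n ⟨j, hj⟩ hnd (by omega) (sqD D / (U : ℂ) ^ j)
      (div_mem (sqD_mem D) (pow_mem (IntermediateField.natCast_mem _ U) j))
      (by rw [map_div₀, conj_sqD D hD]; simp; ring) 0 k hko (by
        rw [div_pow, sqD_sq, hd, hj]
        have : (1 : ℂ) - 2 * (k : ℂ) ^ n = -(U : ℂ) := by exact_mod_cast hUZ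
        rw [hj] at this
        rw [pow_zero, this]; push_cast; field_simp; ring)
    have : Fact p.Prime := ⟨hp⟩
    refine case_F1 p h hh ((k ^ (n / p) : ℕ) : ℤ) ?_ ?_ (by simpa using hw)
    · have : k ≤ k ^ (n / p) :=
        Nat.le_self_pow (Nat.div_pos (Nat.le_of_dvd (by omega) hpn) hp.pos).ne' k
      exact_mod_cast hk.trans this
    · have : Odd (k ^ (n / p)) := hko.pow
      exact_mod_cast this
  · exact ⟨by omega, F_two _ n U hn hno h3U hU4 (by rw [hd]; ring)⟩
  · exact ⟨by omega, F_three _ n U hn hno h3U (by rw [hd]; ring)⟩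
  · have hdabs : |d| = (U : ℤ) ^ n := by rw [hd, abs_neg, abs_of_pos (by omega)]
    rw [hdabs] at hm2
    have hm4 : m = 0 ∧ (4 : ℤ) ^ m = 1 ∨ 1 ≤ m ∧ (4 : ℤ) ^ m % 4 = 0 := by
      rcases m with _ | m
      · left; simp
      · right; refine ⟨by omega, ?_⟩; rw [pow_succ]; omega
    have hD : 2 * d + 4 ^ m < 0 := by omega
    refine ⟨hD, ?_⟩
    by_contra hnd
    obtain ⟨p, h, hp, hh, hpn, hw⟩ := F_even _ hD n hno hnd (by omega) (sqD (2 * d + 4 ^ m))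
      (sqD_mem _) (conj_sqD _ hD) m U hUo (by rw [sqD_sq, hd]; push_cast; ring)
    rcases hm4 with ⟨rfl, -⟩ | ⟨hm1, -⟩
    · refine kill_size h p n U hp hh (by omega) hpn h3U 2 (by norm_num) (by norm_num) ?_
      simp only [mul_zero, zero_add, pow_one] at hw
      rcases hw with h | h <;> rw [h] <;> norm_num
    · have : Fact p.Prime := ⟨hp⟩
      have hnp : Odd (n / p) := hno.of_dvd_nat (Nat.div_dvd_of_dvd hpn)
      have hUoZ : Odd (U : ℤ) := by exact_mod_cast hUo
      push_cast at hw
      have hu4 : ((U : ℤ) ^ (n / p)) % 4 = 1 := by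
        rw [odd_pow_zmod4 _ _ hnp hUoZ]; omega
      obtain ⟨h7, h8, h9, h10⟩ := case_F4 p h m hh hm1 _ hu4 hw
      rw [odd_pow_mod8 _ _ hnp hUoZ] at h8
      rw [pow_mod3 _ _ hnp] at h9
      have hk4 := odd_pow_zmod4 (k : ℤ) n hno (by exact_mod_cast hko)
      have hk3 := pow_mod3 (k : ℤ) n hno
      have hk13 : 13 ≤ k := by
        have h1 := Nat.odd_iff.1 hko
        omega
      have h13 : 13 ^ n ≤ k ^ n := Nat.pow_le_pow_left hk13 n
      have h14 : 13 ^ p ≤ 13 ^ n := Nat.pow_le_pow_right (by norm_num) (Nat.le_of_dvd (by omega) hpn)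
      have h15 : U ≤ U ^ (n / p) :=
        Nat.le_self_pow (Nat.div_pos (Nat.le_of_dvd (by omega) hpn) hp.pos).ne' U
      have h16 : 13 ^ p ≤ U ^ (n / p) := by omega
      exact hX p h (2 * m + 1) _ hp hh h7 (by omega) hUoZ.pow (by exact_mod_cast h16) h10

/-- The facts about the ring of integers of the `p`-th cyclotomic field used below. -/
structure CycData (p h : ℕ) (R : Type) [CommRing R] where
  ζ : R
  e : ℕ → R →+* ℂ
  prim : IsPrimitiveRoot ζ p
  e_zeta : ∀ a, 1 ≤ a → a ≤ h → e a ζ = Complex.exp (2 * Real.pi * Complex.I / p) ^ a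
  norm_ge : ∀ y : R, y ≠ 0 → 1 ≤ ∏ a ∈ Finset.Icc 1 h, ‖e a y‖
  indep : ∀ F : ℕ → ℤ, (2 : R) ∣ ∑ j ∈ Finset.range p, (F j : R) * ζ ^ j →
    ∀ j, j < p → 2 ∣ F j - F (p - 1)
  gen : ∀ x : R, ∃ f : Polynomial ℤ, x = Polynomial.aeval ζ f

theorem indep_aux {R : Type} [CommRing R] [IsDomain R] (p : ℕ) (hp : 2 ≤ p) (ζ : R)
    (hζ : IsPrimitiveRoot ζ p) (pb : PowerBasis ℤ R) (hg : pb.gen = ζ) (hd : pb.dim = p - 1)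
    (F : ℕ → ℤ) (h2 : (2 : R) ∣ ∑ j ∈ Finset.range p, (F j : R) * ζ ^ j) :
    ∀ j, j < p → 2 ∣ F j - F (p - 1) := by
  intro j hj
  rcases Nat.lt_or_ge j (p - 1) with hj1 | hj1
  swap
  · have : j = p - 1 := by omega
    rw [this, sub_self]; exact dvd_zero _
  obtain ⟨y, hy⟩ := h2
  have h0 := hζ.geom_sum_eq_zero (by omega)
  have e1 : ∑ j ∈ Finset.range (p - 1), ((F j - F (p - 1) : ℤ) : R) * ζ ^ j = 2 * y := by
    have e2 : ∑ j ∈ Finset.range p, ((F j - F (p - 1) : ℤ) : R) * ζ ^ j = 2 * y := by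
      rw [← hy]
      have : ∀ j ∈ Finset.range p, ((F j - F (p - 1) : ℤ) : R) * ζ ^ j =
          (F j : R) * ζ ^ j - (F (p - 1) : R) * ζ ^ j := by
        intro j _; push_cast; ring
      rw [Finset.sum_congr rfl this, Finset.sum_sub_distrib, ← Finset.mul_sum, h0]; ring
    obtain ⟨q, hq⟩ : ∃ q, p = q + 1 := ⟨p - 1, by omega⟩
    subst hq
    rw [Finset.sum_range_succ] at e2
    simpa using e2
  rw [← hd, Finset.sum_range] at e1
  have e3 : ∑ i : Fin pb.dim, (F i - F (p - 1)) • pb.basis i = (2 : ℤ) • y := by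
    rw [zsmul_eq_mul]; push_cast; rw [← e1]
    apply Finset.sum_congr rfl
    intro i _
    rw [pb.coe_basis, hg, zsmul_eq_mul]
    have hF : F (p - 1) = F pb.dim := by rw [hd]
    rw [hF]
  have e4 := congrArg (fun z => pb.basis.repr z ⟨j, by omega⟩) e3
  beta_reduce at e4
  rw [Module.Basis.repr_sum_self, map_zsmul] at e4
  exact ⟨_, by simpa using e4⟩

theorem cyc_exists_aux (p h : ℕ) (hp : p.Prime) (hh : p = 2 * h + 1) [NeZero p]
    (K : Type) [Field K] [NumberField K] [IsCyclotomicExtension {p} ℚ K] (z : K)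
    (hζ : IsPrimitiveRoot z p) : Nonempty (CycData p h (𝓞 K)) := by
  have hirr : Irreducible (Polynomial.cyclotomic p ℚ) :=
    Polynomial.cyclotomic.irreducible_rat hp.pos
  set ω := Complex.exp (2 * Real.pi * Complex.I / p) with hω
  have hωp : IsPrimitiveRoot ω p := Complex.isPrimitiveRoot_exp p hp.ne_zero
  have hex : ∀ a : ℕ, ∃ σ : K →ₐ[ℚ] ℂ, ¬ p ∣ a → σ z = ω ^ a := by
    intro a
    by_cases ha : p ∣ a
    · exact ⟨(hζ.embeddingsEquivPrimitiveRoots ℂ hirr).symm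
        ⟨ω, (mem_primitiveRoots hp.pos).2 hωp⟩, fun h => absurd ha h⟩
    · have hc : a.Coprime p := Nat.Coprime.symm ((Nat.Prime.coprime_iff_not_dvd hp).2 ha)
      refine ⟨(hζ.embeddingsEquivPrimitiveRoots ℂ hirr).symm
        ⟨ω ^ a, (mem_primitiveRoots hp.pos).2 (hωp.pow_of_coprime a hc)⟩, fun _ => ?_⟩
      rw [← hζ.embeddingsEquivPrimitiveRoots_apply_coe ℂ hirr]
      simp
  choose σ hσ using hex
  have hnd : ∀ a, 1 ≤ a → a ≤ 2 * h → ¬ p ∣ a := by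
    intro a h1 h2 h3
    have := Nat.le_of_dvd (by omega) h3
    omega
  have hprod : ∀ x : K, ∏ τ : K →ₐ[ℚ] ℂ, ‖τ x‖ = ∏ a ∈ Finset.Icc 1 (2 * h), ‖σ a x‖ := by
    intro x
    symm
    apply Finset.prod_bij (fun a _ => σ a)
    · intro a _; exact Finset.mem_univ _
    · intro a ha b hb hab
      simp only [Finset.mem_Icc] at ha hb
      have h1 := hσ a (hnd a ha.1 ha.2)
      rw [hab, hσ b (hnd b hb.1 hb.2)] at h1
      exact (hωp.pow_inj (by omega) (by omega) h1).symm
    · intro τ _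
      have h1 : τ z ^ p = 1 := by
        rw [← map_pow, hζ.pow_eq_one, map_one]
      obtain ⟨a, ha, ha2⟩ := hωp.eq_pow_of_pow_eq_one h1
      have ha0 : a ≠ 0 := by
        rintro rfl
        rw [pow_zero] at ha2
        have : z = 1 := by
          apply τ.toRingHom.injective; simp [← ha2]
        rw [this] at hζ
        have := hζ.eq_orderOf
        simp at this
        have := hp.two_le; omega
      refine ⟨a, by simp; omega, ?_⟩
      apply (hζ.powerBasis ℚ).algHom_ext
      rw [hζ.powerBasis_gen ℚ, hσ a (hnd a (by omega) (by omega)), ha2]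
    · intro a _; rfl
  have hconj : ∀ a, 1 ≤ a → a ≤ h → ∀ x : K, ‖σ (p - a) x‖ = ‖σ a x‖ := by
    intro a h1 h2 x
    have : σ (p - a) = ((Complex.conjAe.restrictScalars ℚ : ℂ ≃ₐ[ℚ] ℂ) : ℂ →ₐ[ℚ] ℂ).comp (σ a) := by
      apply (hζ.powerBasis ℚ).algHom_ext
      rw [hζ.powerBasis_gen ℚ, hσ (p - a) (hnd _ (by omega) (by omega))]
      simp only [AlgHom.comp_apply]
      rw [hσ a (hnd _ (by omega) (by omega))]
      change _ = (starRingEnd ℂ) (ω ^ a)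
      have hω1 : ω * (starRingEnd ℂ) ω = 1 := by
        rw [Complex.mul_conj, Complex.normSq_eq_norm_sq, hωp.norm'_eq_one hp.ne_zero]; simp
      have h3 : ω ^ (p - a) * ω ^ a = 1 := by
        rw [← pow_add, Nat.sub_add_cancel (by omega), hωp.pow_eq_one]
      have h4 : (starRingEnd ℂ) (ω ^ a) * ω ^ a = 1 := by
        rw [map_pow, ← mul_pow, mul_comm, hω1, one_pow]
      have h5 : ω ^ a ≠ 0 := pow_ne_zero _ (hωp.ne_zero hp.ne_zero)
      exact mul_right_cancel₀ h5 (h3.trans h4.symm)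
    rw [this]
    change ‖(starRingEnd ℂ) (σ a x)‖ = _
    exact RCLike.norm_conj _
  refine ⟨{
    ζ := hζ.toInteger
    e := fun a => (σ a).toRingHom.comp (algebraMap (𝓞 K) K)
    prim := hζ.toInteger_isPrimitiveRoot
    e_zeta := fun a h1 h2 => hσ a (hnd a h1 (by omega))
    norm_ge := ?_
    indep := indep_aux p hp.two_le _ hζ.toInteger_isPrimitiveRoot hζ.integralPowerBasis
      (by simp) (by simp [Nat.totient_prime hp])
    gen := ?_ }⟩
  · intro y hy
    have hN : (1 : ℝ) ≤ ∏ a ∈ Finset.Icc 1 (2 * h), ‖σ a (y : K)‖ := by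
      rw [← hprod, ← norm_prod, ← Algebra.norm_eq_prod_embeddings ℚ ℂ (y : K),
        ← Algebra.coe_norm_int]
      have h0 : Algebra.norm ℤ y ≠ 0 := Algebra.norm_ne_zero_iff.2 hy
      have h1 : 1 ≤ |Algebra.norm ℤ y| := Int.one_le_abs h0
      simp only [eq_ratCast, Rat.cast_intCast, Complex.norm_intCast]
      exact_mod_cast h1
    have hsplit : ∏ a ∈ Finset.Icc 1 (2 * h), ‖σ a (y : K)‖ =
        (∏ a ∈ Finset.Icc 1 h, ‖σ a (y : K)‖) ^ 2 := by
      have hd : Finset.Icc 1 (2 * h) = Finset.Icc 1 h ∪ Finset.Icc (h + 1) (2 * h) := by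
        ext x; simp; omega
      have hdis : Disjoint (Finset.Icc 1 h) (Finset.Icc (h + 1) (2 * h)) := by
        rw [Finset.disjoint_left]; intro x; simp; omega
      rw [hd, Finset.prod_union hdis, pow_two]
      congr 1
      apply Finset.prod_bij (fun a _ => p - a)
      · intro a; simp; omega
      · intro a ha b hb; simp at ha hb ⊢; omega
      · intro b hb; simp at hb; exact ⟨p - b, by simp; omega, by omega⟩
      · intro a ha
        simp at ha
        have := hconj (p - a) (by omega) (by omega) (y : K)
        rw [← this]; congr 3; omega
    rw [hsplit] at hN
    have h0 : 0 ≤ ∏ a ∈ Finset.Icc 1 h, ‖σ a (y : K)‖ := Finset.prod_nonneg fun _ _ => norm_nonneg _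
    change 1 ≤ ∏ a ∈ Finset.Icc 1 h, ‖σ a (y : K)‖
    nlinarith
  · intro x
    obtain ⟨f, hf⟩ := hζ.integralPowerBasis.exists_eq_aeval' x
    exact ⟨f, by rw [hf]; simp⟩

theorem cyc_exists (p h : ℕ) (hp : p.Prime) (hh : p = 2 * h + 1) :
    ∃ (R : Type) (_ : CommRing R) (_ : IsDomain R) (_ : CharZero R), Nonempty (CycData p h R) := by
  have : NeZero p := ⟨hp.ne_zero⟩
  have : NeZero ((p : ℕ) : ℚ) := ⟨by exact_mod_cast hp.ne_zero⟩
  have : IsCyclotomicExtension {p} ℚ (CyclotomicField p ℚ) :=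
    CyclotomicField.isCyclotomicExtension p ℚ
  exact ⟨𝓞 (CyclotomicField p ℚ), inferInstance, inferInstance, inferInstance,
    cyc_exists_aux p h hp hh (CyclotomicField p ℚ) _ (IsCyclotomicExtension.zeta_spec p ℚ _)⟩

set_option linter.unusedSectionVars false

theorem abs_sub_inv_le (z : ℝ) (hz : z ≠ 0) :
    abs (z - z⁻¹) ≤ Real.exp (abs (Real.log (abs z))) - Real.exp (-(abs (Real.log (abs z)))) := by
  have h1 : abs (z - z⁻¹) = abs (abs z - (abs z)⁻¹) := by
    rcases lt_or_gt_of_ne hz with h | h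
    · rw [abs_of_neg h, ← abs_neg]; congr 1; rw [inv_neg]; ring
    · rw [abs_of_pos h]
  have hpos : 0 < abs z := abs_pos.2 hz
  have he : abs z = Real.exp (Real.log (abs z)) := (Real.exp_log hpos).symm
  rw [h1]
  generalize Real.log (abs z) = t at *
  rw [he, ← Real.exp_neg]
  rcases le_total 0 t with h | h
  · rw [abs_of_nonneg h, abs_of_nonneg]
    have : Real.exp (-t) ≤ Real.exp t := Real.exp_le_exp.2 (by linarith)
    linarith
  · rw [abs_of_nonpos h, abs_of_nonpos]
    · simp
    have : Real.exp t ≤ Real.exp (-t) := Real.exp_le_exp.2 (by linarith)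
    linarith

theorem exp_two_thirds : Real.exp (2 / 3) < 2 := by
  have h1 : Real.exp (2 / 3) ^ 3 = Real.exp 1 ^ 2 := by
    rw [← Real.exp_nat_mul, ← Real.exp_nat_mul]; norm_num
  have h2 := Real.exp_one_lt_d9
  have h3 := Real.exp_pos 1
  by_contra! hc
  have h4 : (2 : ℝ) ^ 3 ≤ Real.exp (2 / 3) ^ 3 := by gcongr
  nlinarith

namespace CycData
variable {p h : ℕ} {R : Type} [CommRing R] [IsDomain R] [CharZero R] (E : CycData p h R)

theorem e_ne_zero {a : ℕ} (ha : 1 ≤ a) (ha' : a ≤ h) {y : R} (hy : y ≠ 0) : E.e a y ≠ 0 := by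
  intro h0
  have := E.norm_ge y hy
  rw [Finset.prod_eq_zero (i := a) (by simp [ha, ha']) (by rw [h0, norm_zero])] at this
  linarith

theorem e_inj {a : ℕ} (ha : 1 ≤ a) (ha' : a ≤ h) {x y : R} (hxy : E.e a x = E.e a y) : x = y := by
  by_contra hne
  exact E.e_ne_zero ha ha' (sub_ne_zero.2 hne) (by rw [map_sub, hxy, sub_self])

/-- logarithmic embedding -/
noncomputable def lg (a : ℕ) (x : Rˣ) : ℝ := Real.log ‖E.e a x‖

theorem e_unit_ne (a : ℕ) (x : Rˣ) : E.e a x ≠ 0 := by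
  have : E.e a x * E.e a (x⁻¹ : Rˣ) = 1 := by rw [← map_mul, Units.mul_inv, map_one]
  exact left_ne_zero_of_mul_eq_one this

theorem lg_mul (a : ℕ) (x y : Rˣ) : E.lg a (x * y) = E.lg a x + E.lg a y := by
  unfold lg
  rw [Units.val_mul, map_mul, norm_mul, Real.log_mul]
  · exact norm_ne_zero_iff.2 (E.e_unit_ne a x)
  · exact norm_ne_zero_iff.2 (E.e_unit_ne a y)

/-- logarithmic embedding as a homomorphism -/
noncomputable def lgHom (a : ℕ) : Rˣ →* Multiplicative ℝ where
  toFun x := Multiplicative.ofAdd (E.lg a x)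
  map_one' := by unfold lg; simp
  map_mul' x y := by rw [lg_mul]; rfl

theorem lg_inv (a : ℕ) (x : Rˣ) : E.lg a x⁻¹ = - E.lg a x := by
  have := E.lg_mul a x x⁻¹
  rw [mul_inv_cancel] at this
  have h1 : E.lg a 1 = 0 := by unfold lg; simp
  linarith

theorem lg_zpow (a : ℕ) (x : Rˣ) (n : ℤ) : E.lg a (x ^ n) = n * E.lg a x := by
  have := map_zpow (E.lgHom a) x n
  have h2 := congrArg Multiplicative.toAdd this
  simpa [lgHom] using h2

theorem lg_pow (a : ℕ) (x : Rˣ) (n : ℕ) : E.lg a (x ^ n) = n * E.lg a x := by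
  have := E.lg_zpow a x n
  simpa using this

theorem lg_prod {ι : Type*} (a : ℕ) (s : Finset ι) (f : ι → Rˣ) :
    E.lg a (∏ i ∈ s, f i) = ∑ i ∈ s, E.lg a (f i) := by
  classical
  induction s using Finset.induction_on with
  | empty => unfold lg; simp
  | insert i s hi ih => rw [Finset.prod_insert hi, Finset.sum_insert hi, lg_mul, ih]

theorem prod_unit (x : Rˣ) : ∏ a ∈ Finset.Icc 1 h, ‖E.e a x‖ = 1 := by
  have h1 := E.norm_ge (x : R) x.ne_zero
  have h2 := E.norm_ge ((x⁻¹ : Rˣ) : R) (x⁻¹).ne_zero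
  have h3 : (∏ a ∈ Finset.Icc 1 h, ‖E.e a x‖) * (∏ a ∈ Finset.Icc 1 h, ‖E.e a (x⁻¹ : Rˣ)‖) = 1 := by
    rw [← Finset.prod_mul_distrib]
    apply Finset.prod_eq_one
    intro a _
    rw [← norm_mul, ← map_mul, Units.mul_inv, map_one, norm_one]
  nlinarith

theorem lg_sum (x : Rˣ) : ∑ a ∈ Finset.Icc 1 h, E.lg a x = 0 := by
  unfold lg
  rw [← Real.log_prod, E.prod_unit, Real.log_one]
  intro a _
  exact norm_ne_zero_iff.2 (E.e_unit_ne a x)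

/-- units that are real under all embeddings -/
def realUnits : Subgroup Rˣ where
  carrier := {x | ∀ a, 1 ≤ a → a ≤ h → ∃ z : ℝ, E.e a x = z}
  mul_mem' := by
    intro x y hx hy a h1 h2
    obtain ⟨z, hz⟩ := hx a h1 h2
    obtain ⟨w, hw⟩ := hy a h1 h2
    exact ⟨z * w, by rw [Units.val_mul, map_mul, hz, hw]; push_cast; rfl⟩
  one_mem' := by intro a _ _; exact ⟨1, by simp⟩
  inv_mem' := by
    intro x hx a h1 h2
    obtain ⟨z, hz⟩ := hx a h1 h2
    refine ⟨z⁻¹, ?_⟩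
    have : E.e a x * E.e a (x⁻¹ : Rˣ) = 1 := by rw [← map_mul, Units.mul_inv, map_one]
    rw [hz] at this
    push_cast
    exact eq_inv_of_mul_eq_one_right this

theorem mem_realUnits {x : Rˣ} : x ∈ E.realUnits ↔ ∀ a, 1 ≤ a → a ≤ h → ∃ z : ℝ, E.e a x = z :=
  Iff.rfl

theorem pm_one (h2 : 2 ≤ h) (x : Rˣ) (hx : x ∈ E.realUnits)
    (hl : ∀ a, 1 ≤ a → a < h → |E.lg a x| < 1 / 3) : x = 1 ∨ x = -1 := by
  by_cases hy : (x : R) - (x⁻¹ : Rˣ) = 0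
  · have h3 : (x : R) * x = 1 := by
      rw [sub_eq_zero] at hy
      nth_rewrite 2 [hy]
      exact Units.mul_inv x
    rcases mul_self_eq_one_iff.1 h3 with h4 | h4
    · left; exact Units.ext h4
    · right; exact Units.ext h4
  exfalso
  have h1 := E.norm_ge _ hy
  have hb : ∀ a, 1 ≤ a → a ≤ h → ‖E.e a ((x : R) - (x⁻¹ : Rˣ))‖ ≤
      Real.exp |E.lg a x| - Real.exp (-|E.lg a x|) := by
    intro a ha ha'
    obtain ⟨z, hz⟩ := (E.mem_realUnits.1 hx) a ha ha'
    have hz0 : z ≠ 0 := by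
      rintro rfl; exact E.e_unit_ne a x (by rw [hz]; simp)
    have : E.e a (x⁻¹ : Rˣ) = ((z⁻¹ : ℝ) : ℂ) := by
      have : E.e a x * E.e a (x⁻¹ : Rˣ) = 1 := by rw [← map_mul, Units.mul_inv, map_one]
      rw [hz] at this
      push_cast
      exact eq_inv_of_mul_eq_one_right this
    unfold lg
    rw [map_sub, this, hz, ← Complex.ofReal_sub, Complex.norm_real, Complex.norm_real]
    exact abs_sub_inv_le z hz0
  have hI : Finset.Icc 1 h = insert h (Finset.Icc 1 (h - 1)) := by ext i; simp; omega
  have hni : h ∉ Finset.Icc 1 (h - 1) := by simp; omega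
  have hs := E.lg_sum x
  rw [hI, Finset.sum_insert hni] at hs
  rw [hI, Finset.prod_insert hni] at h1
  have hth : |E.lg h x| ≤ ∑ a ∈ Finset.Icc 1 (h - 1), |E.lg a x| := by
    have : E.lg h x = - ∑ a ∈ Finset.Icc 1 (h - 1), E.lg a x := by linarith
    rw [this, abs_neg]; exact Finset.abs_sum_le_sum_abs _ _
  have hA : ‖E.e h ((x : R) - (x⁻¹ : Rˣ))‖ ≤ ∏ a ∈ Finset.Icc 1 (h - 1), Real.exp |E.lg a x| := by
    rw [← Real.exp_sum]
    refine (hb h (by omega) le_rfl).trans ?_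
    have := Real.exp_le_exp.2 hth
    have := Real.exp_pos (-|E.lg h x|)
    linarith
  have hB : ∏ a ∈ Finset.Icc 1 (h - 1), ‖E.e a ((x : R) - (x⁻¹ : Rˣ))‖ ≤
      ∏ a ∈ Finset.Icc 1 (h - 1), (Real.exp |E.lg a x| - Real.exp (-|E.lg a x|)) := by
    apply Finset.prod_le_prod
    · intro a _; exact norm_nonneg _
    · intro a ha; simp at ha; exact hb a (by omega) (by omega)
  have hC : ∏ a ∈ Finset.Icc 1 (h - 1), (Real.exp |E.lg a x| *
      (Real.exp |E.lg a x| - Real.exp (-|E.lg a x|))) < 1 := by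
    have hfac : ∀ a ∈ Finset.Icc 1 (h - 1), 0 ≤ (Real.exp |E.lg a x| *
      (Real.exp |E.lg a x| - Real.exp (-|E.lg a x|))) ∧ (Real.exp |E.lg a x| *
      (Real.exp |E.lg a x| - Real.exp (-|E.lg a x|))) < 1 := by
      intro a ha
      simp at ha
      have hla := hl a (by omega) (by omega)
      have h0 := abs_nonneg (E.lg a x)
      generalize |E.lg a x| = t at *
      rw [mul_sub, ← Real.exp_add, ← Real.exp_add, add_neg_cancel, Real.exp_zero]
      have e1 : Real.exp (t + t) ≤ Real.exp (2 / 3) := Real.exp_le_exp.2 (by linarith)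
      have e2 := Real.add_one_le_exp (t + t)
      have := exp_two_thirds
      constructor <;> linarith
    have hm : (1 : ℕ) ∈ Finset.Icc 1 (h - 1) := by simp; omega
    rw [← Finset.mul_prod_erase _ _ hm]
    have h3 : ∏ a ∈ (Finset.Icc 1 (h - 1)).erase 1, (Real.exp |E.lg a x| *
      (Real.exp |E.lg a x| - Real.exp (-|E.lg a x|))) ≤ 1 := by
      apply Finset.prod_le_one
      · intro a ha; exact (hfac a (Finset.mem_of_mem_erase ha)).1
      · intro a ha; exact (hfac a (Finset.mem_of_mem_erase ha)).2.le
    have h4 := hfac 1 hm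
    nlinarith
  rw [Finset.prod_mul_distrib] at hC
  have h0 : 0 ≤ ∏ a ∈ Finset.Icc 1 (h - 1), ‖E.e a ((x : R) - (x⁻¹ : Rˣ))‖ :=
    Finset.prod_nonneg fun _ _ => norm_nonneg _
  have h5 : 0 ≤ ∏ a ∈ Finset.Icc 1 (h - 1), Real.exp |E.lg a x| :=
    Finset.prod_nonneg fun _ _ => (Real.exp_pos _).le
  have := mul_le_mul hA hB h0 h5
  linarith

end CycData

set_option linter.unusedSectionVars false

namespace CycData
variable {p h : ℕ} {R : Type} [CommRing R] [IsDomain R] [CharZero R] (E : CycData p h R)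

/-- `ζ^i + ζ^(-i)` -/
def w (i : ℕ) : R := E.ζ ^ i + E.ζ ^ ((p - 1) * i)

theorem w_sq (hp : 1 ≤ p) (i : ℕ) : E.w (2 * i) = E.w i ^ 2 - 2 := by
  have h1 : E.ζ ^ i * E.ζ ^ ((p - 1) * i) = 1 := by
    rw [← pow_add]
    have : i + (p - 1) * i = p * i := by
      obtain ⟨q, rfl⟩ : ∃ q, p = q + 1 := ⟨p - 1, by omega⟩
      simp; ring
    rw [this, pow_mul, E.prim.pow_eq_one, one_pow]
  unfold w
  have h2 : E.ζ ^ (2 * i) = (E.ζ ^ i) ^ 2 := by rw [mul_comm, pow_mul]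
  have h3 : E.ζ ^ ((p - 1) * (2 * i)) = (E.ζ ^ ((p - 1) * i)) ^ 2 := by
    rw [← pow_mul]; congr 1; ring
  rw [h2, h3]
  linear_combination (-2) * h1

theorem sum_pairs (z : R) (m : ℕ) :
    ∑ t ∈ Finset.range m, (z ^ (2 * t) + z ^ (2 * t + 1)) = ∑ k ∈ Finset.range (2 * m), z ^ k := by
  induction m with
  | zero => simp
  | succ m ih =>
    rw [Finset.sum_range_succ, ih, show 2 * (m + 1) = 2 * m + 1 + 1 by ring,
      Finset.sum_range_succ, Finset.sum_range_succ]
    ring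

/-- inverse of `w i` -/
def nu (q i : ℕ) : R := ∑ c ∈ Finset.Ico (q + 1) (3 * q + 3), E.ζ ^ (4 * i * c)

theorem w_mul_nu (hp : p.Prime) (q : ℕ) (hq : p = 4 * q + 3) (i : ℕ) (hi : ¬ p ∣ i) :
    E.w i * E.nu q i = 1 := by
  have hy : (E.ζ ^ i) ^ p = 1 := by rw [← pow_mul, mul_comm, pow_mul, E.prim.pow_eq_one, one_pow]
  have hprim : IsPrimitiveRoot ((E.ζ ^ i) ^ 2) p := by
    rw [← pow_mul]
    apply E.prim.pow_of_coprime
    rw [Nat.coprime_comm, hp.coprime_iff_not_dvd, hp.dvd_mul]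
    rintro (h1 | h1)
    · exact hi h1
    · have := Nat.le_of_dvd (by norm_num) h1; omega
  unfold w nu
  rw [Finset.sum_Ico_eq_sum_range, Finset.mul_sum]
  have hterm : ∀ t ∈ Finset.range (3 * q + 3 - (q + 1)),
      (E.ζ ^ i + E.ζ ^ ((p - 1) * i)) * E.ζ ^ (4 * i * (q + 1 + t)) =
      (((E.ζ ^ i) ^ 2) ^ (2 * t) + ((E.ζ ^ i) ^ 2) ^ (2 * t + 1)) := by
    intro t _
    have e1 : E.ζ ^ i * E.ζ ^ (4 * i * (q + 1 + t)) =
        (E.ζ ^ i) ^ p * ((E.ζ ^ i) ^ 2) ^ (2 * t + 1) := by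
      simp only [← pow_mul, ← pow_add]; congr 1; rw [hq]; ring
    have e2 : E.ζ ^ ((p - 1) * i) * E.ζ ^ (4 * i * (q + 1 + t)) =
        ((E.ζ ^ i) ^ p) ^ 2 * ((E.ζ ^ i) ^ 2) ^ (2 * t) := by
      simp only [← pow_mul, ← pow_add]; congr 1; rw [hq]
      rw [show 4 * q + 3 - 1 = 4 * q + 2 by omega]; ring
    rw [add_mul, e1, e2, hy]; ring
  rw [Finset.sum_congr rfl hterm, sum_pairs,
    show 2 * (3 * q + 3 - (q + 1)) = p + 1 by omega, Finset.sum_range_succ,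
    hprim.geom_sum_eq_zero hp.one_lt, hprim.pow_eq_one, zero_add]

/-- unit version of `w i` -/
theorem exists_w (hp : p.Prime) (q : ℕ) (hq : p = 4 * q + 3) (i : ℕ) :
    ∃ x : Rˣ, ¬ p ∣ i → (x : R) = E.w i ∧ ((x⁻¹ : Rˣ) : R) = E.nu q i := by
  by_cases hi : p ∣ i
  · exact ⟨1, fun h => absurd hi h⟩
  · exact ⟨⟨E.w i, E.nu q i, E.w_mul_nu hp q hq i hi, by
      rw [mul_comm]; exact E.w_mul_nu hp q hq i hi⟩, fun _ => ⟨rfl, rfl⟩⟩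

/-! ### reducedness modulo 2 -/

theorem two_not_dvd_one (E : CycData p h R) (hp : 2 ≤ p) : ¬ (2 : R) ∣ 1 := by
  intro h1
  have := E.indep (fun j => if j = 0 then 1 else 0) (by
    rw [Finset.sum_eq_single 0]
    · simpa using h1
    · intro b _ hb; simp [hb]
    · intro h; simp at h; omega) 0 (by omega)
  rw [if_pos rfl, if_neg (by omega)] at this
  norm_num at this

theorem frob (E : CycData p h R) (hp : p.Prime) (hp2 : p ≠ 2) (x : R) : (2 : R) ∣ x ^ (2 ^ (p - 1)) - x := by
  let I : Ideal R := Ideal.span {2}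
  have hch : CharP (R ⧸ I) 2 := by
    have hnt : Nontrivial (R ⧸ I) := by
      rw [Ideal.Quotient.nontrivial_iff, Ne, Ideal.span_singleton_eq_top]
      intro hu
      exact E.two_not_dvd_one hp.two_le hu.dvd
    apply CharTwo.of_one_ne_zero_of_two_eq_zero one_ne_zero
    have : (Ideal.Quotient.mk I) 2 = 0 := by
      rw [Ideal.Quotient.eq_zero_iff_mem]; exact Ideal.mem_span_singleton_self _
    rwa [map_ofNat] at this
  have : Fact (Nat.Prime 2) := ⟨Nat.prime_two⟩
  have key : (Ideal.Quotient.mk I) x = (iterateFrobenius (R ⧸ I) 2 (p - 1)) ((Ideal.Quotient.mk I) x) := by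
    obtain ⟨f, rfl⟩ := E.gen x
    have h1 : ∀ g : R →+* (R ⧸ I), g (Polynomial.aeval E.ζ f) =
        Polynomial.eval₂ (Int.castRingHom _) (g E.ζ) f := by
      intro g
      rw [Polynomial.aeval_def, Polynomial.hom_eval₂]
      congr 1
      exact RingHom.ext_int _ _
    have h2 := h1 ((iterateFrobenius (R ⧸ I) 2 (p - 1)).comp (Ideal.Quotient.mk I))
    rw [RingHom.comp_apply] at h2
    rw [h2, h1]
    congr 1
    rw [RingHom.comp_apply, iterateFrobenius_def, ← map_pow]
    congr 1
    have h3 : 2 ^ (p - 1) ≡ 1 [MOD p] := by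
      have := Nat.ModEq.pow_totient (x := 2) (n := p) (by
        rw [Nat.coprime_comm, hp.coprime_iff_not_dvd]
        intro hd; have := Nat.le_of_dvd (by norm_num) hd; have := hp.two_le; omega)
      rwa [Nat.totient_prime hp] at this
    rw [pow_eq_pow_mod _ E.prim.pow_eq_one, h3, ← pow_eq_pow_mod _ E.prim.pow_eq_one, pow_one]
  rw [iterateFrobenius_def, ← map_pow] at key
  have := Ideal.Quotient.eq.1 key.symm
  exact Ideal.mem_span_singleton.1 this

theorem red_pow (E : CycData p h R) (hp : p.Prime) (hp2 : p ≠ 2) (x : R) (s : ℕ) (hx : (2 : R) ∣ x ^ s) : (2 : R) ∣ x := by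
  have hf : ∀ k : ℕ, (2 : R) ∣ x ^ ((2 ^ (p - 1)) ^ k) - x := by
    intro k
    induction k with
    | zero => simp
    | succ k ih =>
      have := E.frob hp hp2 (x ^ ((2 ^ (p - 1)) ^ k))
      rw [← pow_mul, ← pow_succ] at this
      have := dvd_add this ih
      simpa using this
  have h1 : 2 ≤ 2 ^ (p - 1) := by
    calc 2 = 2 ^ 1 := rfl
      _ ≤ 2 ^ (p - 1) := Nat.pow_le_pow_right (by norm_num) (by have := hp.two_le; omega)
  have h2 : s ≤ (2 ^ (p - 1)) ^ s := (Nat.lt_pow_self (by omega)).le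
  have h3 := hx.trans (pow_dvd_pow x h2)
  have := dvd_sub h3 (hf s)
  simpa using this

/-! ### step one -/

theorem step_one (E : CycData p h R) (hp : p.Prime) (hp2 : p ≠ 2) (e : R) (s : ℕ)
    (he : (2 : R) ^ (s + 2) ∣ e ^ (2 ^ s) - 1 ∨ (2 : R) ^ (s + 2) ∣ e ^ (2 ^ s) + 1) :
    ∃ z, e = 1 + 2 * z ∧ (2 : R) ∣ z + z ^ 2 := by
  rcases Nat.eq_zero_or_pos s with rfl | hs
  · rcases he with ⟨v, hv⟩ | ⟨v, hv⟩
    · refine ⟨2 * v, by simp at hv; linear_combination hv, ⟨v + 2 * v ^ 2, by ring⟩⟩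
    · refine ⟨2 * v - 1, by simp at hv; linear_combination hv, ⟨2 * v ^ 2 - v, by ring⟩⟩
  obtain ⟨t, rfl⟩ : ∃ t, s = t + 1 := ⟨s - 1, by omega⟩
  have hchar : ∀ (a : R) (k : ℕ), (2 : R) ∣ (a - 1) ^ 2 ^ k - (a ^ 2 ^ k - 1) := by
    intro a k
    induction k with
    | zero => simp
    | succ k ih =>
      obtain ⟨g, hg⟩ := ih
      refine ⟨2 * g ^ 2 + 2 * g * (a ^ 2 ^ k - 1) + (1 - a ^ 2 ^ k), ?_⟩
      rw [pow_succ 2 k, pow_mul, pow_mul]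
      have : (a - 1) ^ 2 ^ k = a ^ 2 ^ k - 1 + 2 * g := by linear_combination hg
      rw [this]; ring
  have h2e : (2 : R) ∣ e ^ 2 ^ (t + 1) - 1 := by
    have h22 : (2 : R) ∣ 2 ^ (t + 1 + 2) := dvd_pow_self _ (by omega)
    rcases he with he | he
    · exact h22.trans he
    · have := dvd_sub (h22.trans he) (dvd_refl (2 : R))
      convert this using 1; ring
  have h3 : (2 : R) ∣ (e - 1) ^ 2 ^ (t + 1) := by
    have := dvd_add (hchar e (t + 1)) h2e
    simpa using this
  obtain ⟨z, hz⟩ := E.red_pow hp hp2 _ _ h3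
  refine ⟨z, by linear_combination hz, ?_⟩
  have hg : ∀ k : ℕ, ∃ g, (1 + 4 * (z + z ^ 2)) ^ 2 ^ k = 1 + 2 ^ (k + 2) * (z + z ^ 2 + 2 * g) := by
    intro k
    induction k with
    | zero => exact ⟨0, by ring⟩
    | succ k ih =>
      obtain ⟨g, hg⟩ := ih
      refine ⟨g + 2 ^ k * (z + z ^ 2 + 2 * g) ^ 2, ?_⟩
      rw [pow_succ 2 k, pow_mul, hg]; ring
  obtain ⟨g, hg⟩ := hg t
  have hee : e ^ 2 ^ (t + 1) = 1 + 2 ^ (t + 2) * (z + z ^ 2 + 2 * g) := by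
    rw [← hg, pow_succ', pow_mul]; congr 1
    have : e = 1 + 2 * z := by linear_combination hz
    rw [this]; ring
  have two_ne : (2 : R) ^ (t + 2) ≠ 0 := pow_ne_zero _ two_ne_zero
  rcases he with ⟨v, hv⟩ | ⟨v, hv⟩
  · refine ⟨v - g, ?_⟩
    apply mul_left_cancel₀ two_ne
    rw [hee] at hv
    have e1 : (2 : R) ^ (t + 1 + 2) = 2 ^ (t + 2) * 2 := by ring
    rw [e1] at hv
    linear_combination hv
  · exfalso
    apply E.two_not_dvd_one hp.two_le
    rw [hee] at hv
    refine ⟨2 ^ (t + 1) * v - 2 ^ t * (z + z ^ 2 + 2 * g), ?_⟩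
    apply mul_left_cancel₀ (two_ne_zero : (2 : R) ≠ 0)
    have e1 : (2 : R) ^ (t + 1 + 2) = 2 ^ t * 8 := by ring
    have e2 : (2 : R) ^ (t + 2) = 2 ^ t * 4 := by ring
    have e3 : (2 : R) ^ (t + 1) = 2 ^ t * 2 := by ring
    rw [e1, e2] at hv
    rw [e3]
    linear_combination hv

theorem sq_sum_mod {ι : Type*} (s : Finset ι) (f : ι → R) :
    (2 : R) ∣ (∑ i ∈ s, f i) ^ 2 - ∑ i ∈ s, f i ^ 2 := by
  classical
  induction s using Finset.induction_on with
  | empty => simp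
  | insert i s hi ih =>
    rw [Finset.sum_insert hi, Finset.sum_insert hi]
    obtain ⟨g, hg⟩ := ih
    exact ⟨g + f i * ∑ i ∈ s, f i, by linear_combination hg⟩

theorem prod_mod_four {ι : Type*} (s : Finset ι) (f : ι → R) :
    ∃ g, ∏ i ∈ s, (1 - 2 * f i) = 1 - 2 * ∑ i ∈ s, f i + 4 * g := by
  classical
  induction s using Finset.induction_on with
  | empty => exact ⟨0, by simp⟩
  | insert i s hi ih =>
    rw [Finset.prod_insert hi, Finset.sum_insert hi]
    obtain ⟨g, hg⟩ := ih
    exact ⟨g + f i * (∑ i ∈ s, f i) - 2 * f i * g, by rw [hg]; ring⟩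

end CycData

set_option linter.unusedSectionVars false

namespace CycData
variable {p h : ℕ} {R : Type} [CommRing R] [IsDomain R] [CharZero R] (E : CycData p h R)

theorem count_parity (hp : 2 ≤ p) {ι : Type} [DecidableEq ι] (s : Finset ι) (g : ι → ℕ)
    (h2 : (2 : R) ∣ ∑ x ∈ s, E.ζ ^ g x) (j j' : ℕ) (hj : j < p) (hj' : j' < p) :
    (2 : ℤ) ∣ ((s.filter fun x => g x % p = j).card : ℤ) - (s.filter fun x => g x % p = j').card := by
  have h1 : ∑ x ∈ s, E.ζ ^ g x = ∑ j ∈ Finset.range p,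
      (((s.filter fun x => g x % p = j).card : ℤ) : R) * E.ζ ^ j := by
    rw [← Finset.sum_fiberwise_of_maps_to (t := Finset.range p) (g := fun x => g x % p)
      (fun x _ => Finset.mem_range.2 (Nat.mod_lt _ (by omega)))]
    apply Finset.sum_congr rfl
    intro j _
    rw [Finset.sum_congr rfl (g := fun _ => E.ζ ^ j)]
    · rw [Finset.sum_const, nsmul_eq_mul]; push_cast; rfl
    · intro x hx
      rw [Finset.mem_filter] at hx
      rw [pow_eq_pow_mod _ E.prim.pow_eq_one, hx.2]
  rw [h1] at h2
  have a1 := E.indep (fun j => ((s.filter fun x => g x % p = j).card : ℤ)) h2 j hj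
  have a2 := E.indep (fun j => ((s.filter fun x => g x % p = j).card : ℤ)) h2 j' hj'
  have := dvd_sub a1 a2
  simpa using this

theorem combinat (hp : p.Prime) (q d : ℕ) (hq : p = 4 * q + 3) (hd1 : 2 ^ (d + 1) < p)
    (hd2 : p < 2 ^ (d + 2)) (J : Finset ℕ) (hJ : J.Nonempty) (hJd : ∀ l ∈ J, l < d)
    (h2 : (2 : R) ∣ ∑ x ∈ J ×ˢ (Finset.Ico (q + 1) (3 * q + 3)) ×ˢ Finset.range 2,
      E.ζ ^ (2 ^ (x.1 + 3 + x.2.2) * x.2.1)) : False := by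
  set S := J ×ˢ (Finset.Ico (q + 1) (3 * q + 3)) ×ˢ Finset.range 2 with hS
  set l0 := J.min' hJ with hl0
  have hl0J : l0 ∈ J := J.min'_mem hJ
  have hcop : ∀ k, Nat.Coprime p (2 ^ k) := by
    intro k
    apply Nat.Coprime.pow_right
    rw [hp.coprime_iff_not_dvd]
    intro hd; have := Nat.le_of_dvd (by norm_num) hd; omega
  have := E.count_parity hp.two_le S (fun x => 2 ^ (x.1 + 3 + x.2.2) * x.2.1) h2
    (2 ^ (d + 3 + l0) % p) 0 (Nat.mod_lt _ hp.pos) hp.pos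
  have c0 : (S.filter fun x => (2 ^ (x.1 + 3 + x.2.2) * x.2.1) % p = 0) = ∅ := by
    rw [Finset.filter_eq_empty_iff]
    rintro ⟨l, c, k⟩ hx hm
    rw [hS, Finset.mem_product, Finset.mem_product, Finset.mem_Ico] at hx
    simp only at hx hm
    have h1 := (hcop _).dvd_of_dvd_mul_left (Nat.dvd_of_mod_eq_zero hm)
    have := Nat.le_of_dvd (by omega) h1
    omega
  have c1 : (S.filter fun x => (2 ^ (x.1 + 3 + x.2.2) * x.2.1) % p = 2 ^ (d + 3 + l0) % p)
      = {(l0, 2 ^ d, 0)} := by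
    have hpd : 2 ^ (d + 1) = 2 * 2 ^ d := by ring
    have hpd2 : 2 ^ (d + 2) = 4 * 2 ^ d := by ring
    ext ⟨l, c, k⟩
    rw [Finset.mem_filter, hS, Finset.mem_product, Finset.mem_product, Finset.mem_Ico,
      Finset.mem_range, Finset.mem_singleton]
    simp only [Prod.mk.injEq]
    constructor
    · rintro ⟨⟨hl, hc, hk⟩, hm⟩
      have hll : l0 ≤ l := J.min'_le l hl
      have hld := hJd l hl
      have hm2 : 2 ^ (l + 3 + k) * c ≡ 2 ^ (l + 3 + k) * 2 ^ (d + l0 - l - k) [MOD p] := by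
        rw [← pow_add, show l + 3 + k + (d + l0 - l - k) = d + 3 + l0 by omega]
        exact hm
      have hm3 := Nat.ModEq.cancel_left_of_coprime (hcop _) hm2
      have hle : 2 ^ (d + l0 - l - k) ≤ 2 ^ d := Nat.pow_le_pow_right (by norm_num) (by omega)
      have hc2 : c = 2 ^ (d + l0 - l - k) :=
        Nat.ModEq.eq_of_lt_of_lt hm3 (by omega) (by omega)
      have hkl : d + l0 - l - k = d := by
        by_contra hne
        have : 2 ^ (d + l0 - l - k) * 2 ≤ 2 ^ d := by
          rw [← pow_succ]; exact Nat.pow_le_pow_right (by norm_num) (by omega)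
        omega
      refine ⟨by omega, by rw [hc2, hkl], by omega⟩
    · rintro ⟨rfl, rfl, rfl⟩
      refine ⟨⟨hl0J, by omega, by norm_num⟩, ?_⟩
      rw [← pow_add]; congr 2; omega
  rw [c0, c1] at this
  norm_num at this

theorem step_two (hp : p.Prime) (q d : ℕ) (hq : p = 4 * q + 3) (hd1 : 2 ^ (d + 1) < p)
    (hd2 : p < 2 ^ (d + 2)) (W : ℕ → Rˣ) (hW : ∀ l, (W l : R) = E.w (2 ^ (l + 2)))
    (b : ℕ → ℤ) (z : R) (hz : ((∏ l ∈ Finset.range d, W l ^ b l : Rˣ) : R) = 1 + 2 * z)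
    (hz2 : (2 : R) ∣ z + z ^ 2) : ∀ l, l < d → 2 ∣ b l := by
  by_contra! hcon
  have hp2 : p ≠ 2 := by omega
  set J := (Finset.range d).filter (fun l => ¬ 2 ∣ b l) with hJ
  have hJne : J.Nonempty := by
    obtain ⟨l, hl, hb⟩ := hcon
    exact ⟨l, by rw [hJ, Finset.mem_filter, Finset.mem_range]; exact ⟨hl, hb⟩⟩
  have hJd : ∀ l ∈ J, l < d := by
    intro l hl; rw [hJ, Finset.mem_filter, Finset.mem_range] at hl; exact hl.1
  have hnd : ∀ k, ¬ p ∣ 2 ^ k := by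
    intro k hk
    have := (Nat.prime_dvd_prime_iff_eq hp Nat.prime_two).1 (hp.dvd_of_dvd_pow hk)
    omega
  choose v hv using fun l => E.exists_w hp q hq (2 ^ (l + 1))
  set N : ℕ → R := fun l => E.nu q (2 ^ (l + 1)) with hN
  have hWv : ∀ l, (W l : R) = (v l : R) ^ 2 * (1 - 2 * N l ^ 2) := by
    intro l
    rw [hW, show 2 ^ (l + 2) = 2 * 2 ^ (l + 1) by ring, E.w_sq hp.one_le, (hv l (hnd _)).1]
    have := E.w_mul_nu hp q hq (2 ^ (l + 1)) (hnd _)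
    simp only [hN]
    linear_combination (2 * E.w (2 ^ (l + 1)) * E.nu q (2 ^ (l + 1)) + 2) * this
  set ε : Rˣ := (∏ l ∈ Finset.range d, W l ^ (b l / 2)) * ∏ l ∈ J, v l with hε
  have he : ((∏ l ∈ Finset.range d, W l ^ b l : Rˣ) : R) =
      (ε : R) ^ 2 * ∏ l ∈ J, (1 - 2 * N l ^ 2) := by
    have h1 : (∏ l ∈ Finset.range d, W l ^ b l : Rˣ) =
        (∏ l ∈ Finset.range d, W l ^ (b l / 2)) ^ 2 * ∏ l ∈ J, W l := by
      rw [hJ, Finset.prod_filter, ← Finset.prod_pow, ← Finset.prod_mul_distrib]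
      apply Finset.prod_congr rfl
      intro l _
      rw [← zpow_natCast, ← zpow_mul]
      split_ifs with hb
      · rw [mul_one]; congr 1; push_cast; omega
      · rw [← zpow_add_one]; congr 1; push_cast; omega
    rw [h1, hε]
    simp only [Units.val_mul, Units.val_pow_eq_pow_val, Units.coe_prod, hWv,
      Finset.prod_mul_distrib, Finset.prod_pow]
    ring
  obtain ⟨g, hg⟩ := prod_mod_four J (fun l => N l ^ 2)
  rw [he, hg] at hz
  have hε1 : (2 : R) ∣ (ε : R) - 1 := by
    apply E.red_pow hp hp2 _ 2
    refine ⟨z + (ε : R) ^ 2 * ∑ l ∈ J, N l ^ 2 - 2 * (ε : R) ^ 2 * g - ε + 1, ?_⟩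
    linear_combination hz
  obtain ⟨y, hy⟩ := hε1
  have hy : (ε : R) = 1 + 2 * y := by linear_combination hy
  obtain ⟨g', hg'⟩ : ∃ g', z = - ∑ l ∈ J, N l ^ 2 + 2 * g' := by
    refine ⟨(y + y ^ 2) * (1 - 2 * ∑ l ∈ J, N l ^ 2 + 4 * g) + g, ?_⟩
    apply mul_left_cancel₀ (two_ne_zero : (2 : R) ≠ 0)
    rw [hy] at hz
    linear_combination -hz
  have hsq : (2 : R) ∣ (∑ l ∈ J, N l + ∑ l ∈ J, N l ^ 2) ^ 2 := by
    obtain ⟨k, hk⟩ := sq_sum_mod J N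
    obtain ⟨k', hk'⟩ := hz2
    rw [hg'] at hk'
    set A := ∑ l ∈ J, N l
    set B := ∑ l ∈ J, N l ^ 2
    refine ⟨k + k' + B + A * B - g' - 2 * g' ^ 2 + 2 * B * g', ?_⟩
    linear_combination hk + hk'
  have hsum := E.red_pow hp hp2 _ _ hsq
  apply E.combinat hp q d hq hd1 hd2 J hJne hJd
  rw [Finset.sum_product]
  have hl : ∀ l, (2 : R) ∣ (∑ x ∈ (Finset.Ico (q + 1) (3 * q + 3)) ×ˢ Finset.range 2,
      E.ζ ^ (2 ^ (l + 3 + x.2) * x.1)) - (N l + N l ^ 2) := by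
    intro l
    rw [Finset.sum_product]
    simp only [Finset.sum_range_succ, Finset.sum_range_zero, zero_add, add_zero]
    rw [Finset.sum_add_distrib]
    obtain ⟨k, hk⟩ := sq_sum_mod (Finset.Ico (q + 1) (3 * q + 3)) (fun c => E.ζ ^ (4 * 2 ^ (l + 1) * c))
    have e1 : N l = ∑ c ∈ Finset.Ico (q + 1) (3 * q + 3), E.ζ ^ (4 * 2 ^ (l + 1) * c) := rfl
    have e2 : ∀ c, E.ζ ^ (2 ^ (l + 3) * c) = E.ζ ^ (4 * 2 ^ (l + 1) * c) := by
      intro c; congr 1; ring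
    have e3 : ∀ c, E.ζ ^ (2 ^ (l + 3 + 1) * c) = (E.ζ ^ (4 * 2 ^ (l + 1) * c)) ^ 2 := by
      intro c; rw [← pow_mul]; congr 1; ring
    simp only [e2, e3]
    rw [← e1] at hk ⊢
    exact ⟨-k, by linear_combination -hk⟩
  have := Finset.dvd_sum (s := J) (fun l _ => hl l)
  rw [Finset.sum_sub_distrib, Finset.sum_add_distrib] at this
  have := dvd_add this hsum
  simpa using this

theorem indep_two (hp : p.Prime) (q d N : ℕ) (hq : p = 4 * q + 3) (hd1 : 2 ^ (d + 1) < p)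
    (hd2 : p < 2 ^ (d + 2)) (hN : 1 ≤ N) (W : ℕ → Rˣ) (hW : ∀ l, (W l : R) = E.w (2 ^ (l + 2)))
    (c : ℕ → ℤ) (hc : ∀ l, l < d → |c l| < 2 ^ (N - 1))
    (hx : (2 : R) ^ N ∣ ((∏ l ∈ Finset.range d, W l ^ c l : Rˣ) : R) - 1 ∨
      (2 : R) ^ N ∣ ((∏ l ∈ Finset.range d, W l ^ c l : Rˣ) : R) + 1) :
    ∀ l, l < d → c l = 0 := by
  have hs : ∀ s, s ≤ N - 1 → ∀ l, l < d → (2 : ℤ) ^ s ∣ c l := by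
    intro s
    induction s with
    | zero => intro _ l _; simp
    | succ s ih =>
      intro hs
      have ih := ih (by omega)
      have hb : ∀ l, l < d → c l = 2 ^ s * (c l / 2 ^ s) := by
        intro l hl; rw [Int.mul_ediv_cancel' (ih l hl)]
      have hpr : ((∏ l ∈ Finset.range d, W l ^ c l : Rˣ) : R) =
          ((∏ l ∈ Finset.range d, W l ^ (c l / 2 ^ s) : Rˣ) : R) ^ 2 ^ s := by
        rw [← Units.val_pow_eq_pow_val, ← Finset.prod_pow]
        congr 1
        apply Finset.prod_congr rfl
        intro l hl
        rw [← zpow_natCast, ← zpow_mul]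
        congr 1
        rw [mul_comm]; push_cast
        exact hb l (Finset.mem_range.1 hl)
      rw [hpr] at hx
      have hdv : (2 : R) ^ (s + 2) ∣ 2 ^ N := pow_dvd_pow _ (by omega)
      obtain ⟨z, hz, hz2⟩ := E.step_one hp (by omega) _ s
        (hx.imp (fun a => hdv.trans a) (fun a => hdv.trans a))
      have := E.step_two hp q d hq hd1 hd2 W hW _ z hz hz2
      intro l hl
      rw [hb l hl, pow_succ]
      exact mul_dvd_mul_left _ (this l hl)
  intro l hl
  exact Int.eq_zero_of_abs_lt_dvd (hs (N - 1) le_rfl l hl) (hc l hl)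

end CycData

set_option linter.unusedSectionVars false

/-- `2 - 2 cos (2 π m / p)` -/
noncomputable def sv (p : ℕ) (m : ℤ) : ℝ := 2 - 2 * Real.cos (2 * Real.pi * m / p)

theorem sv_eq (p : ℕ) (m : ℤ) : sv p m = 4 * Real.sin (Real.pi * m / p) ^ 2 := by
  unfold sv
  rw [show 2 * Real.pi * m / p = 2 * (Real.pi * m / p) by ring, Real.cos_two_mul, Real.cos_sq']
  ring

theorem sv_le (p : ℕ) (m : ℤ) : sv p m ≤ 4 := by
  unfold sv; have := Real.neg_one_le_cos (2 * Real.pi * m / p); linarith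

theorem sv_nonneg (p : ℕ) (m : ℤ) : 0 ≤ sv p m := by
  unfold sv; have := Real.cos_le_one (2 * Real.pi * m / p); linarith

theorem sv_add (p : ℕ) (hp : 0 < p) (m k : ℤ) : sv p (m + p * k) = sv p m := by
  unfold sv
  have hp' : (p : ℝ) ≠ 0 := by positivity
  have : 2 * Real.pi * ((m + p * k : ℤ) : ℝ) / p = 2 * Real.pi * m / p + k * (2 * Real.pi) := by
    push_cast; field_simp
  rw [this, Real.cos_add_int_mul_two_pi]

theorem sv_neg (p : ℕ) (m : ℤ) : sv p (-m) = sv p m := by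
  unfold sv
  rw [show 2 * Real.pi * ((-m : ℤ) : ℝ) / p = -(2 * Real.pi * m / p) by push_cast; ring,
    Real.cos_neg]

theorem sv_ge (p h : ℕ) (hh : p = 2 * h + 1) (m : ℤ) (hm : ¬ (p : ℤ) ∣ m) :
    16 / (p : ℝ) ^ 2 ≤ sv p m := by
  have hp : 0 < p := by omega
  have key : ∀ i : ℕ, 1 ≤ i → i ≤ h → 16 / (p : ℝ) ^ 2 ≤ sv p i := by
    intro i h1 h2
    have := sin_lower h i h1 h2
    rw [sv_eq, hh]; push_cast; exact this
  have hr0 := Int.emod_nonneg m (by omega : (p : ℤ) ≠ 0)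
  have hr1 := Int.emod_lt_of_pos m (by omega : (0 : ℤ) < p)
  have hr2 : m % p ≠ 0 := fun h0 => hm (Int.dvd_of_emod_eq_zero h0)
  have e1 : sv p m = sv p (m % p) := by
    conv_lhs => rw [← Int.emod_add_mul_ediv m p]
    rw [sv_add p hp]
  rw [e1]
  generalize m % p = r at *
  obtain ⟨r, rfl⟩ := Int.eq_ofNat_of_zero_le hr0
  rcases Nat.lt_or_ge h r with hr | hr
  · have e2 : sv p (r : ℤ) = sv p ((p - r : ℕ) : ℤ) := by
      rw [← sv_neg p r, ← sv_add p hp _ 1]; congr 1; omega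
    rw [e2]
    exact key _ (by omega) (by omega)
  · exact key _ (by omega) hr

theorem sv_gap (p h : ℕ) (hh : p = 2 * h + 1) (m n : ℤ) (h1 : ¬ (p : ℤ) ∣ m + n)
    (h2 : ¬ (p : ℤ) ∣ m - n) : 16 / (p : ℝ) ^ 2 ≤ |sv p m - sv p n| := by
  have e : (sv p m - sv p n) ^ 2 = sv p (m + n) * sv p (m - n) := by
    rw [sv_eq p (m + n), sv_eq p (m - n)]
    unfold sv
    have := Real.cos_sub_cos (2 * Real.pi * m / p) (2 * Real.pi * n / p)
    rw [show (2 * Real.pi * m / p + 2 * Real.pi * n / p) / 2 = Real.pi * ((m + n : ℤ) : ℝ) / p by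
      push_cast; ring, show (2 * Real.pi * m / p - 2 * Real.pi * n / p) / 2 =
      Real.pi * ((m - n : ℤ) : ℝ) / p by push_cast; ring] at this
    rw [show (2 - 2 * Real.cos (2 * Real.pi * m / p) - (2 - 2 * Real.cos (2 * Real.pi * n / p)))
      = -2 * (Real.cos (2 * Real.pi * m / p) - Real.cos (2 * Real.pi * n / p)) by ring, this]
    ring
  have a1 := sv_ge p h hh _ h1
  have a2 := sv_ge p h hh _ h2
  have h0 : 0 ≤ 16 / (p : ℝ) ^ 2 := by positivity
  apply abs_le_of_sq_le_sq' _ (abs_nonneg _) |>.2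
  rw [sq_abs, e, sq]
  exact mul_le_mul a1 a2 h0 (h0.trans a1)

namespace CycData
variable {p h : ℕ} {R : Type} [CommRing R] [IsDomain R] [CharZero R] (E : CycData p h R)

theorem e_w (hp : 0 < p) (a i : ℕ) (h1 : 1 ≤ a) (h2 : a ≤ h) :
    E.e a (E.w i) = ((2 - sv p (a * i) : ℝ) : ℂ) := by
  have hp' : (p : ℂ) ≠ 0 := by exact_mod_cast hp.ne'
  unfold w sv
  rw [map_add, map_pow, map_pow, E.e_zeta a h1 h2, ← pow_mul, ← pow_mul, ← Complex.exp_nat_mul,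
    ← Complex.exp_nat_mul]
  have e1 : ((a * i : ℕ) : ℂ) * (2 * Real.pi * Complex.I / p) =
      ((2 * Real.pi * ((a * i : ℤ) : ℝ) / p : ℝ) : ℂ) * Complex.I := by push_cast; ring
  have e2 : ((a * ((p - 1) * i) : ℕ) : ℂ) * (2 * Real.pi * Complex.I / p) =
      -((2 * Real.pi * ((a * i : ℤ) : ℝ) / p : ℝ) : ℂ) * Complex.I +
        ((a * i : ℕ) : ℂ) * (2 * Real.pi * Complex.I) := by
    push_cast [Nat.cast_sub (show 1 ≤ p from hp)]
    field_simp
    ring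
  rw [e1, e2, Complex.exp_add, Complex.exp_nat_mul_two_pi_mul_I, mul_one]
  generalize (2 * Real.pi * ((a * i : ℤ) : ℝ) / p : ℝ) = θ
  rw [show (2 - (2 - 2 * Real.cos θ)) = 2 * Real.cos θ by ring]
  push_cast
  rw [Complex.two_cos]

theorem e_pi (hp : 0 < p) (a i : ℕ) (h1 : 1 ≤ a) (h2 : a ≤ h) :
    E.e a (2 - E.w i) = ((sv p (a * i) : ℝ) : ℂ) := by
  rw [map_sub, E.e_w hp a i h1 h2, map_ofNat]; push_cast; ring

theorem zeta_mul (hp : 0 < p) (i : ℕ) : E.ζ ^ i * E.ζ ^ ((p - 1) * i) = 1 := by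
  rw [← pow_add]
  have : i + (p - 1) * i = p * i := by
    obtain ⟨q, rfl⟩ : ∃ q, p = q + 1 := ⟨p - 1, by omega⟩
    simp; ring
  rw [this, pow_mul, E.prim.pow_eq_one, one_pow]

theorem exists_C (hp : p.Prime) (i : ℕ) :
    ∃ x : Rˣ, i.Coprime p → (x : R) * (2 - E.w 1) = 2 - E.w i := by
  by_cases hi : i.Coprime p
  swap
  · exact ⟨1, fun h => absurd h hi⟩
  have hη : IsPrimitiveRoot (E.ζ ^ (p - 1)) p := by
    apply E.prim.pow_of_coprime
    rw [Nat.coprime_comm, hp.coprime_iff_not_dvd]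
    intro hd; have := Nat.le_of_dvd (by have := hp.two_le; omega) hd
    have := hp.two_le; omega
  have u1 := E.prim.geom_sum_isUnit hp.two_le hi
  have u2 := hη.geom_sum_isUnit hp.two_le hi
  refine ⟨(u1.mul u2).unit, fun _ => ?_⟩
  rw [IsUnit.unit_spec]
  have g1 := geom_sum_mul E.ζ i
  have g2 := geom_sum_mul (E.ζ ^ (p - 1)) i
  have z1 := E.zeta_mul hp.pos 1
  have zi := E.zeta_mul hp.pos i
  unfold w
  rw [pow_mul E.ζ (p - 1) i] at zi ⊢
  rw [mul_one, pow_one] at z1 ⊢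
  generalize E.ζ ^ (p - 1) = η at *
  set A := ∑ j ∈ Finset.range i, E.ζ ^ j
  set B := ∑ j ∈ Finset.range i, η ^ j
  linear_combination (η - 1) * B * g1 + (E.ζ ^ i - 1) * g2 - A * B * z1 + zi

theorem prod_E (hp : p.Prime) (hh : p = 2 * h + 1) (h1 : 1 ≤ h) (T u : ℤ) (hT : T ≠ 0)
    (hW : wq T u h = 1) : ∏ i ∈ Finset.Icc 1 h, ((T : R) - u * (2 - E.w i)) = 1 := by
  apply E.e_inj le_rfl h1
  have hz := Complex.isPrimitiveRoot_exp p hp.pos.ne'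
  have hz' := hz
  rw [hh] at hz'
  have := wq_prod_complex h hz' (T : ℂ) (u : ℂ) (by exact_mod_cast hT)
  rw [← wq_intCast, hW, ← hh] at this
  rw [map_one, map_prod]
  push_cast at this
  rw [this]
  apply Finset.prod_congr rfl
  intro i hi
  rw [Finset.mem_Icc] at hi
  have hpow : Complex.exp (2 * Real.pi * Complex.I / p) ^ ((p - 1) * i) =
      Complex.exp (2 * Real.pi * Complex.I / p) ^ (p - i) := by
    have : (p - 1) * i = p - i + p * (i - 1) := by
      obtain ⟨j, rfl⟩ : ∃ j, i = j + 1 := ⟨i - 1, by omega⟩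
      obtain ⟨q, rfl⟩ : ∃ q, p = j + 1 + q := ⟨p - (j + 1), by omega⟩
      have e1 : j + 1 + q - 1 = j + q := by omega
      have e2 : j + 1 + q - (j + 1) = q := by omega
      rw [e1, e2]; simp; ring
    rw [this, pow_add, pow_mul, hz.pow_eq_one, one_pow, mul_one]
  unfold w
  simp only [map_sub, map_mul, map_add, map_pow, map_intCast, map_ofNat,
    E.e_zeta 1 le_rfl h1, pow_one, hpow]
  ring

theorem exists_E (hp : p.Prime) (hh : p = 2 * h + 1) (h1 : 1 ≤ h) (T u : ℤ) (hT : T ≠ 0)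
    (hW : wq T u h = 1) (i : ℕ) :
    ∃ x : Rˣ, 1 ≤ i → i ≤ h → (x : R) = (T : R) - u * (2 - E.w i) := by
  by_cases hi : 1 ≤ i ∧ i ≤ h
  swap
  · exact ⟨1, fun a b => absurd ⟨a, b⟩ hi⟩
  have := E.prod_E hp hh h1 T u hT hW
  have hu : IsUnit ((T : R) - u * (2 - E.w i)) := by
    refine isUnit_of_dvd_one ?_
    rw [← this]
    exact Finset.dvd_prod_of_mem (fun i => (T : R) - u * (2 - E.w i)) (by simp [hi])
  exact ⟨hu.unit, fun _ _ => hu.unit_spec⟩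

end CycData

set_option linter.unusedSectionVars false

namespace CycData
variable {p h : ℕ} {R : Type} [CommRing R] [IsDomain R] [CharZero R] {E : CycData p h R}

/-- The system of units attached to a hypothetical solution. -/
structure Sys (E : CycData p h R) (T u : ℤ) (Eu Cu : ℕ → Rˣ) : Prop where
  hp : p.Prime
  hh : p = 2 * h + 1
  h1 : 1 ≤ h
  hu : (p : ℤ) ^ 4 ≤ u
  hT : 0 < T
  hE : ∀ i, 1 ≤ i → i ≤ h → (Eu i : R) = (T : R) - u * (2 - E.w i)
  hC : ∀ i, 1 ≤ i → i ≤ h → (Cu i : R) * (2 - E.w 1) = 2 - E.w i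
  prodE : ∏ i ∈ Finset.Icc 1 h, Eu i = 1

namespace Sys
variable {T u : ℤ} {Eu Cu : ℕ → Rˣ}

theorem ndvd (S : Sys E T u Eu Cu) {a i : ℕ} (ha : 1 ≤ a) (ha' : a ≤ h) (hi : 1 ≤ i) (hi' : i ≤ h) :
    ¬ (p : ℤ) ∣ (a * i : ℤ) := by
  have hh := S.hh
  intro hd
  rcases (Nat.prime_iff_prime_int.1 S.hp).dvd_mul.1 hd with h1 | h1
  · have := Nat.le_of_dvd (by omega) (Int.natCast_dvd_natCast.1 h1); omega
  · have := Nat.le_of_dvd (by omega) (Int.natCast_dvd_natCast.1 h1); omega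

theorem p3 (S : Sys E T u Eu Cu) : (3 : ℝ) ≤ p := by
  have := S.hh; have := S.h1
  have : 3 ≤ p := by omega
  exact_mod_cast this

theorem ur (S : Sys E T u Eu Cu) : (p : ℝ) ^ 4 ≤ u := by exact_mod_cast S.hu

theorem u_pos (S : Sys E T u Eu Cu) : (0 : ℝ) < u := by
  have := S.p3
  have := S.ur
  have : (0 : ℝ) < (p : ℝ) ^ 4 := by positivity
  linarith

theorem eE (S : Sys E T u Eu Cu) {a i : ℕ} (ha : 1 ≤ a) (ha' : a ≤ h) (hi : 1 ≤ i) (hi' : i ≤ h) :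
    E.e a (Eu i) = ((T - u * sv p (a * i) : ℝ) : ℂ) := by
  rw [S.hE i hi hi', map_sub, map_mul, E.e_pi S.hp.pos a i ha ha', map_intCast, map_intCast]
  push_cast; rfl

theorem eC (S : Sys E T u Eu Cu) {a i : ℕ} (ha : 1 ≤ a) (ha' : a ≤ h) (hi : 1 ≤ i) (hi' : i ≤ h) :
    E.e a (Cu i) = ((sv p (a * i) / sv p (a * (1 : ℕ)) : ℝ) : ℂ) := by
  have h0 := congrArg (E.e a) (S.hC i hi hi')
  rw [map_mul, E.e_pi S.hp.pos a i ha ha', E.e_pi S.hp.pos a 1 ha ha'] at h0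
  have hs := sv_ge p h S.hh _ (S.ndvd ha ha' le_rfl S.h1)
  have : 0 < 16 / (p : ℝ) ^ 2 := by have := S.p3; positivity
  have hne : ((sv p (a * (1 : ℕ)) : ℝ) : ℂ) ≠ 0 := by
    rw [Complex.ofReal_ne_zero]; exact (lt_of_lt_of_le this hs).ne'
  rw [Complex.ofReal_div, eq_div_iff hne, h0]

theorem lgC (S : Sys E T u Eu Cu) {a i : ℕ} (ha : 1 ≤ a) (ha' : a ≤ h) (hi : 1 ≤ i) (hi' : i ≤ h) :
    |E.lg a (Cu i)| ≤ Real.log ((p : ℝ) ^ 2 / 4) := by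
  have hp3 := S.p3
  unfold lg
  rw [S.eC ha ha' hi hi', Complex.norm_real, Real.norm_eq_abs]
  have s1 := sv_ge p h S.hh _ (S.ndvd ha ha' le_rfl S.h1)
  have s2 := sv_ge p h S.hh _ (S.ndvd ha ha' hi hi')
  have t1 := sv_le p (a * (1 : ℕ))
  have t2 := sv_le p (a * i)
  generalize sv p (a * (1 : ℕ)) = x at *
  generalize sv p (a * i) = y at *
  have h16 : 0 < 16 / (p : ℝ) ^ 2 := by positivity
  have hx : 0 < x := by linarith
  have hy : 0 < y := by linarith
  rw [abs_of_pos (div_pos hy hx)]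
  have hup : ∀ x y : ℝ, 16 / (p : ℝ) ^ 2 ≤ x → y ≤ 4 → 0 < x → 0 < y → y / x ≤ (p : ℝ) ^ 2 / 4 := by
    intro x y h1 h2 hx hy
    rw [div_le_iff₀ hx]
    rw [div_le_iff₀ (by positivity)] at h1
    nlinarith
  rw [abs_le]
  constructor
  · rw [neg_le, ← Real.log_inv, inv_div]
    exact Real.log_le_log (div_pos hx hy) (hup y x s2 t1 hy hx)
  · exact Real.log_le_log (div_pos hy hx) (hup x y s1 t2 hx hy)

end Sys
end CycData

set_option linter.unusedSectionVars false

theorem prod_zpow_const {G : Type*} [CommGroup G] {ι : Type*} (s : Finset ι) (g : G) (b : ι → ℤ) :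
    ∏ i ∈ s, g ^ b i = g ^ ∑ i ∈ s, b i := by
  classical
  induction s using Finset.induction_on with
  | empty => simp
  | insert i s hi ih => rw [Finset.prod_insert hi, Finset.sum_insert hi, ih, zpow_add]

namespace CycData
variable {p h : ℕ} {R : Type} [CommRing R] [IsDomain R] [CharZero R] {E : CycData p h R}

theorem exists_small (E : CycData p h R) (h1 : 1 ≤ h) (x : Rˣ) :
    ∃ a, 1 ≤ a ∧ a ≤ h ∧ ‖E.e a x‖ ≤ 1 := by
  obtain ⟨a, ha, hb⟩ := exists_abs_le_one_of_prod (Finset.Icc 1 h) ⟨1, by simp [h1]⟩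
    (fun a => ‖E.e a x‖) (by rw [E.prod_unit, abs_one])
  rw [Finset.mem_Icc] at ha
  rw [abs_of_nonneg (norm_nonneg _)] at hb
  exact ⟨a, ha.1, ha.2, hb⟩

theorem lg_pm (E : CycData p h R) (a : ℕ) (x : Rˣ) (hx : x = 1 ∨ x = -1) : E.lg a x = 0 := by
  unfold lg
  rcases hx with rfl | rfl <;> simp

namespace Sys
variable {T u : ℤ} {Eu Cu : ℕ → Rˣ}

theorem T_le (S : Sys E T u Eu Cu) : (T : ℝ) ≤ 4 * u + 1 := by
  obtain ⟨a, h1, h2, h3⟩ := exists_small E S.h1 (Eu 1)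
  rw [S.eE h1 h2 le_rfl S.h1, Complex.norm_real, Real.norm_eq_abs, abs_le] at h3
  have t2 := sv_le p (a * (1 : ℕ))
  have := S.u_pos
  nlinarith [h3.2]

theorem normE_le (S : Sys E T u Eu Cu) {a i : ℕ} (ha : 1 ≤ a) (ha' : a ≤ h) (hi : 1 ≤ i)
    (hi' : i ≤ h) : ‖E.e a (Eu i)‖ ≤ 5 * u := by
  rw [S.eE ha ha' hi hi', Complex.norm_real, Real.norm_eq_abs, abs_le]
  have t2 := sv_le p (a * i)
  have t3 := sv_nonneg p (a * i)
  have hu := S.u_pos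
  have hu1 : (1 : ℝ) ≤ u := by
    have : (0 : ℤ) < u := by exact_mod_cast hu
    exact_mod_cast this
  have hT := S.T_le
  have hT0 : (0 : ℝ) < T := by exact_mod_cast S.hT
  constructor <;> nlinarith

theorem sum_lgE (S : Sys E T u Eu Cu) (a : ℕ) : ∑ i ∈ Finset.Icc 1 h, E.lg a (Eu i) = 0 := by
  rw [← E.lg_prod, S.prodE, E.lg_pm a 1 (Or.inl rfl)]

theorem lg_le (S : Sys E T u Eu Cu) {a i : ℕ} (ha : 1 ≤ a) (ha' : a ≤ h) (hi : 1 ≤ i)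
    (hi' : i ≤ h) : E.lg a (Eu i) ≤ Real.log (5 * u) :=
  Real.log_le_log (norm_pos_iff.2 (E.e_unit_ne a _)) (S.normE_le ha ha' hi hi')

theorem log_nonneg (S : Sys E T u Eu Cu) : 0 ≤ Real.log (5 * u) := by
  have hu := S.u_pos
  have hu1 : (1 : ℝ) ≤ u := by
    have : (0 : ℤ) < u := by exact_mod_cast hu
    exact_mod_cast this
  exact Real.log_nonneg (by linarith)

theorem Y_bound (S : Sys E T u Eu Cu) {a : ℕ} (ha : 1 ≤ a) (ha' : a ≤ h) :
    ∑ i ∈ Finset.Icc 1 h, |E.lg a (Eu i * (Cu i)⁻¹)| ≤ 3 * h * Real.log (5 * u) := by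
  have hp3 := S.p3
  have hur := S.ur
  have h0 := S.log_nonneg
  have hK : Real.log ((p : ℝ) ^ 2 / 4) ≤ Real.log (5 * u) := by
    apply Real.log_le_log (by positivity)
    nlinarith [sq_nonneg ((p : ℝ) ^ 2 - 1)]
  have hterm : ∀ i ∈ Finset.Icc 1 h, |E.lg a (Eu i * (Cu i)⁻¹)| ≤
      3 * Real.log (5 * u) - E.lg a (Eu i) := by
    intro i hi
    rw [Finset.mem_Icc] at hi
    have b1 := (S.lgC ha ha' hi.1 hi.2).trans hK
    have b2 := S.lg_le ha ha' hi.1 hi.2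
    rw [E.lg_mul, E.lg_inv]
    rw [abs_le] at b1 ⊢
    constructor <;> linarith [b1.1, b1.2]
  refine (Finset.sum_le_sum hterm).trans ?_
  rw [Finset.sum_sub_distrib, S.sum_lgE, Finset.sum_const, Nat.card_Icc, nsmul_eq_mul]
  simp
  linarith

theorem lgE_ge (S : Sys E T u Eu Cu) {a i j : ℕ} (ha : 1 ≤ a) (ha' : a ≤ h) (hi : 1 ≤ i)
    (hi' : i ≤ h) (hj : 1 ≤ j) (hj' : j ≤ h) (hij : i ≠ j) (hs : ‖E.e a (Eu j)‖ ≤ 1) :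
    Real.log (8 * u / (p : ℝ) ^ 2) ≤ E.lg a (Eu i) := by
  have hp3 := S.p3
  have hur := S.ur
  have hu := S.u_pos
  have hh := S.hh
  have hgen : ∀ m : ℤ, m ≠ 0 → |m| < p → ¬ (p : ℤ) ∣ a * m := by
    intro m hm hm' hd
    rcases (Nat.prime_iff_prime_int.1 S.hp).dvd_mul.1 hd with h1 | h1
    · have := Nat.le_of_dvd (by omega) (Int.natCast_dvd_natCast.1 h1); omega
    · exact hm (Int.eq_zero_of_abs_lt_dvd h1 hm')
  have gap := sv_gap p h S.hh (a * i) (a * j)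
    (by rw [← mul_add]; apply hgen <;> [omega; (rw [abs_lt]; omega)])
    (by rw [← mul_sub]; apply hgen <;> [omega; (rw [abs_lt]; omega)])
  rw [S.eE ha ha' hj hj', Complex.norm_real, Real.norm_eq_abs] at hs
  unfold lg
  apply Real.log_le_log (by positivity)
  rw [S.eE ha ha' hi hi', Complex.norm_real, Real.norm_eq_abs]
  generalize sv p (a * i) = x at *
  generalize sv p (a * j) = y at *
  have h1 : u * |x - y| ≤ |T - u * x| + |T - u * y| := by
    have : (u : ℝ) * |x - y| = |(T - u * y) - (T - u * x)| := by
      rw [← abs_of_pos hu, ← abs_mul, abs_of_pos hu]; congr 1; ring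
    rw [this, add_comm]
    exact abs_sub _ _
  have h2 : u * (16 / (p : ℝ) ^ 2) ≤ u * |x - y| := mul_le_mul_of_nonneg_left gap hu.le
  have h3 : (1 : ℝ) ≤ 8 * u / (p : ℝ) ^ 2 := by
    rw [le_div_iff₀ (by positivity)]
    nlinarith [sq_nonneg ((p : ℝ) ^ 2 - 1)]
  have h4 : u * (16 / (p : ℝ) ^ 2) = 2 * (8 * u / (p : ℝ) ^ 2) := by ring
  linarith

theorem no_rel_aux (S : Sys E T u Eu Cu) (c : ℕ → ℤ) (hc : ∑ i ∈ Finset.Icc 1 h, c i = 0)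
    (hr : ∏ i ∈ Finset.Icc 1 h, (Eu i * (Cu i)⁻¹) ^ c i = 1 ∨
      ∏ i ∈ Finset.Icc 1 h, (Eu i * (Cu i)⁻¹) ^ c i = -1)
    (j : ℕ) (hj : 1 ≤ j) (hj' : j ≤ h) (hmax : ∀ i ∈ Finset.Icc 1 h, |c i| ≤ c j)
    (hpos : 0 < c j) : False := by
  have hp3 := S.p3
  have hur := S.ur
  have hu := S.u_pos
  obtain ⟨a, ha, ha', hs⟩ := exists_small E S.h1 (Eu j)
  have h0 := E.lg_pm a _ hr
  rw [E.lg_prod] at h0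
  simp only [E.lg_zpow, E.lg_mul, E.lg_inv] at h0
  set K := Real.log ((p : ℝ) ^ 2 / 4) with hK
  set Λ := Real.log (8 * u / (p : ℝ) ^ 2) with hΛ
  have hKΛ : K < Λ := by
    apply Real.log_lt_log (by positivity)
    rw [lt_div_iff₀ (by positivity)]
    have : (0 : ℝ) < (p : ℝ) ^ 4 := by positivity
    nlinarith
  have hsum := S.sum_lgE a
  have hcR : ∑ i ∈ Finset.Icc 1 h, (c i : ℝ) = 0 := by exact_mod_cast hc
  have hposR : (0 : ℝ) < c j := by exact_mod_cast hpos
  have b1 : ∑ i ∈ Finset.Icc 1 h, ((c j : ℝ) - c i) * Λ ≤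
      ∑ i ∈ Finset.Icc 1 h, ((c j : ℝ) - c i) * E.lg a (Eu i) := by
    apply Finset.sum_le_sum
    intro i hi
    have hm := hmax i hi
    rw [Finset.mem_Icc] at hi
    by_cases hij : i = j
    · rw [hij]; simp
    · apply mul_le_mul_of_nonneg_left (S.lgE_ge ha ha' hi.1 hi.2 hj hj' hij hs)
      have : (c i : ℝ) ≤ c j := by exact_mod_cast (le_abs_self _).trans hm
      linarith
  have b2 : ∑ i ∈ Finset.Icc 1 h, -((c i : ℝ) * E.lg a (Cu i)) ≤
      ∑ i ∈ Finset.Icc 1 h, (c j : ℝ) * K := by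
    apply Finset.sum_le_sum
    intro i hi
    have hm : |(c i : ℝ)| ≤ c j := by exact_mod_cast hmax i hi
    rw [Finset.mem_Icc] at hi
    have hc2 := S.lgC ha ha' hi.1 hi.2
    refine (neg_le_abs _).trans ?_
    rw [abs_mul]
    exact mul_le_mul hm hc2 (abs_nonneg _) hposR.le
  have e1 : ∑ i ∈ Finset.Icc 1 h, ((c j : ℝ) - c i) * E.lg a (Eu i) =
      ∑ i ∈ Finset.Icc 1 h, -((c i : ℝ) * E.lg a (Cu i)) := by
    have e2 : ∀ i ∈ Finset.Icc 1 h, ((c j : ℝ) - c i) * E.lg a (Eu i) =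
        c j * E.lg a (Eu i) - c i * (E.lg a (Eu i) + - E.lg a (Cu i)) +
          -((c i : ℝ) * E.lg a (Cu i)) := by intro i _; ring
    rw [Finset.sum_congr rfl e2, Finset.sum_add_distrib, Finset.sum_sub_distrib, ← Finset.mul_sum,
      hsum, h0]
    ring
  rw [← Finset.sum_mul, Finset.sum_sub_distrib, hcR, Finset.sum_const, Nat.card_Icc,
    nsmul_eq_mul] at b1
  rw [Finset.sum_const, Nat.card_Icc, nsmul_eq_mul] at b2
  simp only [add_tsub_cancel_right, sub_zero] at b1 b2
  have hh1 : (0 : ℝ) < h := by exact_mod_cast S.h1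
  have : (h : ℝ) * c j * K < h * c j * Λ := by
    apply mul_lt_mul_of_pos_left hKΛ; positivity
  linarith

theorem no_rel (S : Sys E T u Eu Cu) (c : ℕ → ℤ) (hc : ∑ i ∈ Finset.Icc 1 h, c i = 0)
    (hr : ∏ i ∈ Finset.Icc 1 h, (Eu i * (Cu i)⁻¹) ^ c i = 1 ∨
      ∏ i ∈ Finset.Icc 1 h, (Eu i * (Cu i)⁻¹) ^ c i = -1) : ∀ i ∈ Finset.Icc 1 h, c i = 0 := by
  obtain ⟨j, hj, hmax⟩ := Finset.exists_max_image (Finset.Icc 1 h) (fun i => |c i|)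
    ⟨1, by simp [S.h1]⟩
  rw [Finset.mem_Icc] at hj
  rcases lt_trichotomy (c j) 0 with hcj | hcj | hcj
  · exfalso
    refine S.no_rel_aux (fun i => - c i) (by simp [hc]) ?_ j hj.1 hj.2 ?_ (by simpa using hcj)
    · simp only [zpow_neg, Finset.prod_inv_distrib]
      rcases hr with hr | hr
      · left; rw [hr, inv_one]
      · right; rw [hr]; simp
    · intro i hi
      have := hmax i hi
      rw [abs_of_neg hcj] at this
      rwa [abs_neg]
  · intro i hi
    have := hmax i hi
    simp only [hcj, abs_zero] at this
    exact abs_nonpos_iff.1 this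
  · exfalso
    refine S.no_rel_aux c hc hr j hj.1 hj.2 ?_ hcj
    intro i hi
    have := hmax i hi
    rwa [abs_of_pos hcj] at this

theorem collision (S : Sys E T u Eu Cu) (q d N : ℕ) (hq : p = 4 * q + 3) (hd1 : 2 ^ (d + 1) < p)
    (hd2 : p < 2 ^ (d + 2)) (hN : 1 ≤ N) (hTN : T = 2 ^ N) (W : ℕ → Rˣ)
    (hW : ∀ l, (W l : R) = E.w (2 ^ (l + 2)))
    (c b : ℕ → ℤ) (hc : ∀ l, l < d → |c l| < 2 ^ (N - 1)) (hb : ∑ i ∈ Finset.Icc 1 h, b i = 0)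
    (r : Rˣ) (hrdef : r = (∏ l ∈ Finset.range d, W l ^ c l) *
      ∏ i ∈ Finset.Icc 1 h, (Eu i * (Cu i)⁻¹) ^ b i) (hr : r = 1 ∨ r = -1) :
    (∀ l, l < d → c l = 0) ∧ ∀ i ∈ Finset.Icc 1 h, b i = 0 := by
  let I : Ideal R := Ideal.span {(2 : R) ^ N}
  let φ : Rˣ →* (R ⧸ I)ˣ := Units.map (Ideal.Quotient.mk I).toMonoidHom
  have hφ : ∀ x y : Rˣ, φ x = φ y ↔ (2 : R) ^ N ∣ (x : R) - y := by
    intro x y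
    rw [← Ideal.mem_span_singleton, ← Ideal.Quotient.eq, Units.ext_iff]
    rfl
  set Q := φ (Eu 1 * (Cu 1)⁻¹) with hQ
  have hEC : ∀ i ∈ Finset.Icc 1 h, φ (Eu i * (Cu i)⁻¹) = Q := by
    intro i hi
    rw [Finset.mem_Icc] at hi
    have h1 : φ (Eu i * Cu 1) = φ (Eu 1 * Cu i) := by
      rw [hφ, Units.val_mul, Units.val_mul, S.hE i hi.1 hi.2, S.hE 1 le_rfl S.h1]
      have c1 := S.hC i hi.1 hi.2
      have c2 := S.hC 1 le_rfl S.h1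
      refine ⟨Cu 1 - Cu i, ?_⟩
      rw [hTN]; push_cast
      linear_combination (u : R) * Cu 1 * c1 - (u : R) * Cu i * c2
    rw [hQ, map_mul, map_mul, map_inv, map_inv, ← div_eq_mul_inv, ← div_eq_mul_inv, div_eq_div_iff_mul_eq_mul,
      ← map_mul, h1, map_mul]
  have hprod : φ (∏ i ∈ Finset.Icc 1 h, (Eu i * (Cu i)⁻¹) ^ b i) = 1 := by
    rw [map_prod]
    have : ∀ i ∈ Finset.Icc 1 h, φ ((Eu i * (Cu i)⁻¹) ^ b i) = Q ^ b i := by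
      intro i hi; rw [map_zpow, hEC i hi]
    rw [Finset.prod_congr rfl this, prod_zpow_const, hb, zpow_zero]
  have hc0 : ∀ l, l < d → c l = 0 := by
    apply E.indep_two S.hp q d N hq hd1 hd2 hN W hW c hc
    have hφr : φ r = φ (∏ l ∈ Finset.range d, W l ^ c l) := by
      rw [hrdef, map_mul, hprod, mul_one]
    rcases hr with hr | hr
    · left
      have := (hφ _ _).1 hφr.symm
      rwa [hr, Units.val_one] at this
    · right
      have := (hφ _ _).1 hφr.symm
      rwa [hr, Units.val_neg, Units.val_one, sub_neg_eq_add] at this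
  refine ⟨hc0, ?_⟩
  apply S.no_rel b hb
  have : ∏ l ∈ Finset.range d, W l ^ c l = 1 := by
    apply Finset.prod_eq_one
    intro l hl; rw [hc0 l (Finset.mem_range.1 hl), zpow_zero]
  rw [this, one_mul] at hrdef
  rw [← hrdef]; exact hr

end Sys
end CycData

set_option linter.unusedSectionVars false

/-- extension of a digit function by zero -/
def extd {d A : ℕ} (α : Fin d → Fin A) (i : ℕ) : ℕ := if hi : i < d then (α ⟨i, hi⟩ : ℕ) else 0

theorem extd_le {d A : ℕ} (hA : 0 < A) (α : Fin d → Fin A) (i : ℕ) : extd α i + 1 ≤ A := by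
  unfold extd; split_ifs
  · exact (α _).2
  · omega

theorem extd_inj {d A : ℕ} (α β : Fin d → Fin A) (hab : ∀ i, i < d → extd α i = extd β i) :
    α = β := by
  funext i
  have := hab i i.2
  unfold extd at this
  rw [dif_pos i.2, dif_pos i.2] at this
  exact Fin.ext this

theorem prod_zpow_sub {G : Type*} [CommGroup G] {ι : Type*} (s : Finset ι) (g : ι → G)
    (a b : ι → ℕ) : ∏ i ∈ s, g i ^ ((a i : ℤ) - b i) =
      (∏ i ∈ s, g i ^ a i) * (∏ i ∈ s, g i ^ b i)⁻¹ := by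
  rw [← Finset.prod_inv_distrib, ← Finset.prod_mul_distrib]
  apply Finset.prod_congr rfl
  intro i _
  rw [zpow_sub, zpow_natCast, zpow_natCast]

namespace CycData
variable {p h : ℕ} {R : Type} [CommRing R] [IsDomain R] [CharZero R] {E : CycData p h R}

namespace Sys
variable {T u : ℤ} {Eu Cu : ℕ → Rˣ}

set_option maxHeartbeats 800000 in
theorem pigeon (S : Sys E T u Eu Cu) (h2 : 2 ≤ h) (q d N : ℕ) (hq : p = 4 * q + 3)
    (hd1 : 2 ^ (d + 1) < p) (hd2 : p < 2 ^ (d + 2)) (hN : 1 ≤ N) (hTN : T = 2 ^ N) (W : ℕ → Rˣ)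
    (hW : ∀ l, (W l : R) = E.w (2 ^ (l + 2)))
    (hcount : (h : ℝ) * (18 * h * Real.log (5 * u) + 1) ^ (h - 1) < ((2 : ℝ) ^ (N - 1)) ^ d) :
    False := by
  set A : ℕ := 2 ^ (N - 1) with hA
  have hApos : 0 < A := by positivity
  set X : ℝ := ∑ a ∈ Finset.Icc 1 h, ∑ l ∈ Finset.range d, |E.lg a (W l)| with hX
  have hX0 : 0 ≤ X := Finset.sum_nonneg fun _ _ => Finset.sum_nonneg fun _ _ => abs_nonneg _
  have hXa : ∀ a, 1 ≤ a → a ≤ h → ∑ l ∈ Finset.range d, |E.lg a (W l)| ≤ X := by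
    intro a h1 h2
    exact Finset.single_le_sum (f := fun a => ∑ l ∈ Finset.range d, |E.lg a (W l)|)
      (fun _ _ => Finset.sum_nonneg fun _ _ => abs_nonneg _) (by simp [h1, h2])
  set Y : ℝ := 3 * h * Real.log (5 * u) with hY
  have hY0 : 0 ≤ Y := by have := S.log_nonneg; positivity
  obtain ⟨B, hB⟩ := exists_nat_ge (6 * (A * X) + 1)
  have hB1 : 0 < B := by
    have : (0 : ℝ) < B := by
      have : 0 ≤ 6 * ((A : ℝ) * X) := by positivity
      linarith
    exact_mod_cast this
  set L : ℝ := A * X + B * Y with hL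
  have hL0 : 0 ≤ L := by positivity
  let f : (Fin d → Fin A) × (Fin h → Fin B) → Rˣ := fun v =>
    (∏ l ∈ Finset.range d, W l ^ extd v.1 l) *
      ∏ i ∈ Finset.Icc 1 h, (Eu i * (Cu i)⁻¹) ^ extd v.2 (i - 1)
  have hlgf : ∀ v a, 1 ≤ a → a ≤ h → |E.lg a (f v)| ≤ L := by
    intro v a ha ha'
    simp only [f]
    rw [E.lg_mul, E.lg_prod, E.lg_prod]
    refine (abs_add_le _ _).trans (add_le_add ?_ ?_)
    · refine (Finset.abs_sum_le_sum_abs _ _).trans ?_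
      refine le_trans ?_ (mul_le_mul_of_nonneg_left (hXa a ha ha') (by positivity))
      rw [Finset.mul_sum]
      apply Finset.sum_le_sum
      intro l _
      rw [E.lg_pow, abs_mul, Nat.abs_cast]
      apply mul_le_mul_of_nonneg_right _ (abs_nonneg _)
      have := extd_le hApos v.1 l
      exact_mod_cast (by omega : extd v.1 l ≤ A)
    · refine (Finset.abs_sum_le_sum_abs _ _).trans ?_
      refine le_trans ?_ (mul_le_mul_of_nonneg_left (S.Y_bound ha ha') (by positivity))
      rw [Finset.mul_sum]
      apply Finset.sum_le_sum
      intro l _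
      rw [E.lg_pow, abs_mul, Nat.abs_cast]
      apply mul_le_mul_of_nonneg_right _ (abs_nonneg _)
      have := extd_le hB1 v.2 (l - 1)
      exact_mod_cast (by omega : extd v.2 (l - 1) ≤ B)
  have hreal : ∀ v, f v ∈ E.realUnits := by
    intro v
    apply Subgroup.mul_mem
    · apply Subgroup.prod_mem
      intro l _
      apply Subgroup.pow_mem
      rw [E.mem_realUnits]
      intro a ha ha'
      rw [hW, E.e_w S.hp.pos a _ ha ha']
      exact ⟨_, rfl⟩
    · apply Subgroup.prod_mem
      intro i hi
      rw [Finset.mem_Icc] at hi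
      apply Subgroup.pow_mem
      apply Subgroup.mul_mem
      · rw [E.mem_realUnits]
        intro a ha ha'
        exact ⟨_, S.eE ha ha' hi.1 hi.2⟩
      · apply Subgroup.inv_mem
        rw [E.mem_realUnits]
        intro a ha ha'
        exact ⟨_, S.eC ha ha' hi.1 hi.2⟩
  set M : ℕ := ⌊6 * L⌋₊ + 1 with hM
  have hflo : ∀ v (k : Fin (h - 1)), ⌊3 * (E.lg (k + 1) (f v) + L)⌋₊ < M := by
    intro v k
    rw [hM, Nat.lt_succ_iff]
    apply Nat.floor_mono
    have := hlgf v (k + 1) (by omega) (by have := k.2; omega)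
    rw [abs_le] at this
    linarith [this.2]
  have hsumlt : ∀ v : (Fin d → Fin A) × (Fin h → Fin B),
      ∑ i ∈ Finset.Icc 1 h, extd v.2 (i - 1) < h * B := by
    intro v
    have : ∑ i ∈ Finset.Icc 1 h, extd v.2 (i - 1) < ∑ i ∈ Finset.Icc 1 h, B := by
      apply Finset.sum_lt_sum_of_nonempty ⟨1, by simp [S.h1]⟩
      intro i _
      have := extd_le hB1 v.2 (i - 1); omega
    simpa using this
  let lab : (Fin d → Fin A) × (Fin h → Fin B) → Fin (h * B) × (Fin (h - 1) → Fin M) := fun v =>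
    (⟨_, hsumlt v⟩, fun k => ⟨_, hflo v k⟩)
  have hMB : (M : ℝ) ≤ B * (18 * h * Real.log (5 * u) + 1) := by
    have : (⌊6 * L⌋₊ : ℝ) ≤ 6 * L := Nat.floor_le (by positivity)
    rw [hM]; push_cast
    have e : 18 * (h : ℝ) * Real.log (5 * u) = 6 * Y := by rw [hY]; ring
    rw [e]
    have e2 : 6 * L = 6 * (A * X) + 6 * B * Y := by rw [hL]; ring
    nlinarith
  have hcard : Fintype.card (Fin (h * B) × (Fin (h - 1) → Fin M)) <
      Fintype.card ((Fin d → Fin A) × (Fin h → Fin B)) := by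
    simp only [Fintype.card_prod, Fintype.card_fun, Fintype.card_fin]
    have hR : ((h * B * M ^ (h - 1) : ℕ) : ℝ) < ((A ^ d * B ^ h : ℕ) : ℝ) := by
      push_cast
      have hBR : (0 : ℝ) < B := by exact_mod_cast hB1
      have e1 : (B : ℝ) ^ h = B * B ^ (h - 1) := by
        rw [← pow_succ']; congr 1; omega
      calc (h : ℝ) * B * M ^ (h - 1)
          ≤ h * B * (B * (18 * h * Real.log (5 * u) + 1)) ^ (h - 1) := by gcongr
        _ = (h * (18 * h * Real.log (5 * u) + 1) ^ (h - 1)) * B ^ h := by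
            rw [e1, mul_pow]; ring
        _ < A ^ d * B ^ h := by
            apply mul_lt_mul_of_pos_right _ (by positivity)
            rw [hA]; push_cast; exact hcount
    exact_mod_cast hR
  obtain ⟨v, v', hne, hlab⟩ := Fintype.exists_ne_map_eq_of_card_lt lab hcard
  have hl1 : ∑ i ∈ Finset.Icc 1 h, extd v.2 (i - 1) = ∑ i ∈ Finset.Icc 1 h, extd v'.2 (i - 1) :=
    congrArg (fun x => (x.1 : ℕ)) hlab
  have hl2 : ∀ k : Fin (h - 1), ⌊3 * (E.lg (k + 1) (f v) + L)⌋₊ = ⌊3 * (E.lg (k + 1) (f v') + L)⌋₊ := by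
    intro k
    exact congrArg (fun x => (x.2 k : ℕ)) hlab
  have hr : f v * (f v')⁻¹ = 1 ∨ f v * (f v')⁻¹ = -1 := by
    apply E.pm_one h2 _ (Subgroup.mul_mem _ (hreal v) (Subgroup.inv_mem _ (hreal v')))
    intro a ha ha'
    have := hl2 ⟨a - 1, by omega⟩
    simp only [Nat.sub_add_cancel ha] at this
    have b1 := hlgf v a ha ha'.le
    have b2 := hlgf v' a ha ha'.le
    rw [abs_le] at b1 b2
    have f1 := Nat.floor_le (a := 3 * (E.lg a (f v) + L)) (by linarith [b1.1])
    have f2 := Nat.floor_le (a := 3 * (E.lg a (f v') + L)) (by linarith [b2.1])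
    have f3 := Nat.lt_floor_add_one (3 * (E.lg a (f v) + L))
    have f4 := Nat.lt_floor_add_one (3 * (E.lg a (f v') + L))
    rw [this] at f1 f3
    rw [E.lg_mul, E.lg_inv, abs_lt]
    constructor <;> linarith
  have hcol := S.collision q d N hq hd1 hd2 hN hTN W hW
    (fun l => (extd v.1 l : ℤ) - extd v'.1 l)
    (fun i => (extd v.2 (i - 1) : ℤ) - extd v'.2 (i - 1)) (by
      intro l _
      have a1 := extd_le hApos v.1 l
      have a2 := extd_le hApos v'.1 l
      have : ((2 : ℤ) ^ (N - 1)) = (A : ℤ) := by rw [hA]; push_cast; rfl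
      rw [this, abs_lt]
      omega) (by
      rw [Finset.sum_sub_distrib, sub_eq_zero]; exact_mod_cast hl1)
    (f v * (f v')⁻¹) (by
      rw [prod_zpow_sub, prod_zpow_sub]
      simp only [f]
      rw [mul_inv, mul_mul_mul_comm]) hr
  apply hne
  apply Prod.ext
  · apply extd_inj
    intro i hi
    have := hcol.1 i hi
    omega
  · apply extd_inj
    intro i hi
    have := hcol.2 (i + 1) (by rw [Finset.mem_Icc]; omega)
    simp only [Nat.add_sub_cancel] at this
    omega

end Sys
end CycData

theorem nat_ineq (p h d : ℕ) (hp : p.Prime) (hh : p = 2 * h + 1) (h7 : p % 8 = 7)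
    (hd1 : 2 ^ (d + 1) < p) (hd2 : p < 2 ^ (d + 2)) :
    h * (27 * p ^ 2) ^ (h - 1) * (p ^ 2) ^ d < (7 * 13 ^ p) ^ d := by
  rcases Nat.lt_or_ge d 3 with hd | hd
  · interval_cases d
    · norm_num at hd1 hd2; omega
    · norm_num at hd1 hd2
      have : p = 7 := by omega
      have : h = 3 := by omega
      subst_vars; norm_num
    · norm_num at hd1 hd2
      have : p = 15 := by omega
      subst this; norm_num at hp
  have hpe : 4 * (d + 1) ≤ p := by
    have h1 : 4 * (d + 1) ≤ 2 ^ (d + 1) := by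
      clear hd1 hd2
      induction d, hd using Nat.le_induction with
      | base => norm_num
      | succ n hn ih => rw [pow_succ]; omega
    omega
  have hL1 : h * (27 * p ^ 2) ^ (h - 1) ≤ (6 * p) ^ p := by
    calc h * (27 * p ^ 2) ^ (h - 1) ≤ (6 * p) * ((6 * p) ^ 2) ^ (h - 1) := by
          gcongr
          · omega
          · nlinarith [sq_nonneg p]
      _ = (6 * p) ^ (2 * (h - 1) + 1) := by rw [← pow_mul]; ring
      _ ≤ (6 * p) ^ p := Nat.pow_le_pow_right (by omega) (by omega)
  have hL2 : (6 * p) ^ p ≤ 2 ^ ((d + 5) * p) := by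
    rw [pow_mul]
    apply Nat.pow_le_pow_left
    have : 2 ^ (d + 5) = 8 * 2 ^ (d + 2) := by ring
    omega
  have hL3 : (p ^ 2) ^ d ≤ 2 ^ (2 * d * (d + 2)) := by
    rw [← pow_mul, mul_comm (2 * d) (d + 2), pow_mul 2]
    exact Nat.pow_le_pow_left hd2.le _
  have hexp : 2 * ((d + 5) * p + 2 * d * (d + 2)) ≤ 7 * (p * d) := by
    obtain ⟨e, rfl⟩ : ∃ e, d = e + 3 := ⟨d - 3, by omega⟩
    nlinarith
  have hL : h * (27 * p ^ 2) ^ (h - 1) * (p ^ 2) ^ d ≤ 2 ^ ((d + 5) * p + 2 * d * (d + 2)) := by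
    rw [pow_add]; exact Nat.mul_le_mul (hL1.trans hL2) hL3
  have hR : 2 ^ ((d + 5) * p + 2 * d * (d + 2)) ≤ 13 ^ (p * d) := by
    have h1 : (2 ^ ((d + 5) * p + 2 * d * (d + 2))) ^ 2 ≤ (13 ^ (p * d)) ^ 2 := by
      rw [← pow_mul, mul_comm _ 2]
      calc 2 ^ (2 * ((d + 5) * p + 2 * d * (d + 2))) ≤ 2 ^ (7 * (p * d)) :=
            Nat.pow_le_pow_right (by norm_num) hexp
        _ = (2 ^ 7) ^ (p * d) := by rw [pow_mul]
        _ ≤ (13 ^ 2) ^ (p * d) := Nat.pow_le_pow_left (by norm_num) _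
        _ = (13 ^ (p * d)) ^ 2 := by rw [← pow_mul, ← pow_mul, mul_comm]
    exact (Nat.pow_le_pow_iff_left (by norm_num)).1 h1
  have hR2 : 13 ^ (p * d) < (7 * 13 ^ p) ^ d := by
    rw [mul_pow, pow_mul]
    have : 1 < 7 ^ d := Nat.one_lt_pow (by omega) (by norm_num)
    have : 0 < (13 ^ p) ^ d := by positivity
    nlinarith
  omega

theorem real_ineq (p h d N : ℕ) (u : ℤ) (hp : p.Prime) (hh : p = 2 * h + 1) (h7 : p % 8 = 7)
    (hd1 : 2 ^ (d + 1) < p) (hd2 : p < 2 ^ (d + 2)) (hN : 1 ≤ N) (hu : (13 : ℤ) ^ p ≤ u)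
    (hu4 : (p : ℤ) ^ 4 ≤ u)
    (hs : 16 * u ≤ (p : ℤ) ^ 2 * (2 ^ N + 1)) :
    (h : ℝ) * (18 * h * Real.log (5 * u) + 1) ^ (h - 1) < ((2 : ℝ) ^ (N - 1)) ^ d := by
  have hp7 : (7 : ℝ) ≤ p := by exact_mod_cast (by omega : 7 ≤ p)
  have hp0 : (0 : ℝ) < p := by linarith
  have huR : (13 : ℝ) ^ p ≤ u := by exact_mod_cast hu
  have hu4R : (p : ℝ) ^ 4 ≤ u := by exact_mod_cast hu4
  have hu0 : (0 : ℝ) < u := lt_of_lt_of_le (by positivity) huR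
  have hhR : (p : ℝ) = 2 * h + 1 := by exact_mod_cast hh
  have hsR : 16 * (u : ℝ) ≤ (p : ℝ) ^ 2 * (2 ^ N + 1) := by exact_mod_cast hs
  have hA : 7 * (u : ℝ) ≤ (p : ℝ) ^ 2 * 2 ^ (N - 1) := by
    have e : (2 : ℝ) ^ N = 2 * 2 ^ (N - 1) := by rw [← pow_succ']; congr 1; omega
    rw [e] at hsR
    nlinarith [sq_nonneg ((p : ℝ) ^ 2 - 1)]
  set y : ℝ := (u : ℝ) ^ ((1 : ℝ) / p) with hy
  have hyp : y ^ p = u := by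
    rw [hy, ← Real.rpow_natCast, ← Real.rpow_mul hu0.le]
    rw [one_div_mul_cancel hp0.ne', Real.rpow_one]
  have hy0 : 0 ≤ y := Real.rpow_nonneg hu0.le _
  have hy13 : 13 ≤ y := by
    rw [← hyp] at huR
    exact le_of_pow_le_pow_left₀ (by omega) hy0 huR
  obtain ⟨x, hx⟩ : ∃ x, y = 13 * x := ⟨y / 13, by ring⟩
  have hx1 : 1 ≤ x := by linarith
  have l13 : Real.log 13 ≤ 2.6 := by
    rw [Real.log_le_iff_le_exp (by norm_num)]
    have e := Real.exp_one_gt_d9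
    have e2 : Real.exp 2.6 ^ 5 = Real.exp 1 ^ 13 := by
      rw [← Real.exp_nat_mul, ← Real.exp_nat_mul]; norm_num
    by_contra! hc
    have h1 : Real.exp 2.6 ^ 5 ≤ 13 ^ 5 := pow_le_pow_left₀ (Real.exp_pos _).le hc.le 5
    have h2 : (2.7 : ℝ) ^ 13 ≤ Real.exp 1 ^ 13 := pow_le_pow_left₀ (by norm_num) (by linarith) 13
    rw [e2] at h1
    have := h2.trans h1
    norm_num at this
  have l5 : Real.log 5 ≤ 2 := by
    rw [Real.log_le_iff_le_exp (by norm_num)]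
    have e := Real.exp_one_gt_d9
    have e2 : Real.exp 2 = Real.exp 1 ^ 2 := by rw [← Real.exp_nat_mul]; norm_num
    rw [e2]; nlinarith
  have hlog : Real.log (5 * u) ≤ 3 * p * x := by
    rw [Real.log_mul (by norm_num) hu0.ne', ← hyp, Real.log_pow, hx,
      Real.log_mul (by norm_num) (by linarith)]
    have := Real.log_le_sub_one_of_pos (show 0 < x by linarith)
    have h1 : (p : ℝ) * (Real.log 13 + Real.log x) ≤ p * (2.6 + (x - 1)) := by gcongr
    nlinarith
  have hlog0 : 0 ≤ Real.log (5 * u) := by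
    apply Real.log_nonneg
    have : (1 : ℝ) ≤ 13 ^ p := one_le_pow₀ (by norm_num)
    linarith
  have hbase : 18 * h * Real.log (5 * u) + 1 ≤ 27 * (p : ℝ) ^ 2 * x := by
    have h1 : 18 * (h : ℝ) * Real.log (5 * u) ≤ 18 * h * (3 * p * x) := by gcongr
    have e : 18 * (h : ℝ) = 9 * (p - 1) := by rw [hhR]; ring
    rw [e] at h1 ⊢
    nlinarith [mul_pos hp0 (show 0 < x by linarith)]
  have hnat := nat_ineq p h d hp hh h7 hd1 hd2
  have hnatR : (h : ℝ) * (27 * (p : ℝ) ^ 2) ^ (h - 1) * ((p : ℝ) ^ 2) ^ d < (7 * 13 ^ p) ^ d := by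
    exact_mod_cast hnat
  have hd0 : 1 ≤ d := by
    rcases Nat.eq_zero_or_pos d with rfl | h0
    · norm_num at hd2; omega
    · exact h0
  have hxp : x ^ (h - 1) ≤ (x ^ p) ^ d := by
    rw [← pow_mul]
    apply pow_le_pow_right₀ hx1
    nlinarith [Nat.sub_le h 1]
  have hpd : (0 : ℝ) < ((p : ℝ) ^ 2) ^ d := by positivity
  rw [← mul_lt_mul_iff_of_pos_right hpd]
  calc (h : ℝ) * (18 * h * Real.log (5 * u) + 1) ^ (h - 1) * ((p : ℝ) ^ 2) ^ d
      ≤ h * (27 * (p : ℝ) ^ 2 * x) ^ (h - 1) * ((p : ℝ) ^ 2) ^ d := by gcongr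
    _ = (h * (27 * (p : ℝ) ^ 2) ^ (h - 1) * ((p : ℝ) ^ 2) ^ d) * x ^ (h - 1) := by
        rw [mul_pow]; ring
    _ < (7 * 13 ^ p) ^ d * x ^ (h - 1) := by
        apply mul_lt_mul_of_pos_right hnatR; positivity
    _ ≤ (7 * 13 ^ p) ^ d * (x ^ p) ^ d := by gcongr
    _ = (7 * (u : ℝ)) ^ d := by rw [← hyp, hx, ← mul_pow, mul_pow 13 x p]; ring
    _ ≤ ((p : ℝ) ^ 2 * 2 ^ (N - 1)) ^ d := by gcongr
    _ = ((2 : ℝ) ^ (N - 1)) ^ d * ((p : ℝ) ^ 2) ^ d := by rw [mul_pow]; ring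

theorem theoremX : TheoremX := by
  intro p h N u hp hh h7 hN _ hu hW
  have hpow : ∀ n : ℕ, 7 ≤ n → (n : ℤ) ^ 4 ≤ 13 ^ n := by
    intro n hn
    induction n, hn using Nat.le_induction with
    | base => norm_num
    | succ n hn ih =>
      rw [pow_succ (13 : ℤ)]
      push_cast
      have hnZ : (7 : ℤ) ≤ n := by exact_mod_cast hn
      have h1 : ((n : ℤ) + 1) ^ 2 ≤ 2 * n ^ 2 := by nlinarith
      have h2 : (((n : ℤ) + 1) ^ 2) ^ 2 ≤ (2 * n ^ 2) ^ 2 := by gcongr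
      have h3 : (0 : ℤ) ≤ (n : ℤ) ^ 4 := by positivity
      nlinarith
  have hu4 : (p : ℤ) ^ 4 ≤ u := (hpow p (by omega)).trans hu
  have hu0 : 0 ≤ u := le_trans (by positivity) hu
  have hTpos : (0 : ℤ) < 2 ^ N := by positivity
  have hs := size_bound h (by omega) (2 ^ N) u hTpos.ne' hu0 (by rw [hW, abs_one])
  have hs' : 16 * u ≤ (p : ℤ) ^ 2 * (2 ^ N + 1) := by rw [hh]; push_cast; exact hs
  obtain ⟨d, hd1, hd2⟩ : ∃ d, 2 ^ (d + 1) < p ∧ p < 2 ^ (d + 2) := by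
    have hl1 : 2 ≤ Nat.log 2 p := Nat.le_log_of_pow_le (by norm_num) (by omega)
    have a1 := Nat.pow_log_le_self 2 (show p ≠ 0 by omega)
    have a2 := Nat.lt_pow_succ_log_self (b := 2) (by norm_num) p
    refine ⟨Nat.log 2 p - 1, ?_, ?_⟩
    · rw [show Nat.log 2 p - 1 + 1 = Nat.log 2 p by omega]
      refine lt_of_le_of_ne a1 ?_
      intro he
      obtain ⟨k, hk⟩ : ∃ k, Nat.log 2 p = k + 1 := ⟨Nat.log 2 p - 1, by omega⟩
      rw [hk, pow_succ] at he
      omega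
    · rw [show Nat.log 2 p - 1 + 2 = (Nat.log 2 p).succ by omega]; exact a2
  obtain ⟨q, hq⟩ : ∃ q, p = 4 * q + 3 := ⟨p / 4, by omega⟩
  obtain ⟨R, i1, i2, i3, ⟨E⟩⟩ := cyc_exists p h hp hh
  choose Eu hEu using E.exists_E hp hh (by omega) (2 ^ N) u hTpos.ne' hW
  choose Cu hCu using E.exists_C hp
  choose V hV using E.exists_w hp q hq
  have S : CycData.Sys E (2 ^ N) u Eu Cu := {
    hp := hp, hh := hh, h1 := by omega, hu := hu4, hT := hTpos, hE := hEu
    hC := by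
      intro i hi hi'
      apply hCu
      rw [Nat.coprime_comm, hp.coprime_iff_not_dvd]
      intro hd; have := Nat.le_of_dvd (by omega) hd; omega
    prodE := by
      apply Units.ext
      rw [Units.coe_prod, Units.val_one, ← E.prod_E hp hh (by omega) (2 ^ N) u hTpos.ne' hW]
      apply Finset.prod_congr rfl
      intro i hi
      rw [Finset.mem_Icc] at hi
      exact hEu i hi.1 hi.2 }
  refine S.pigeon (by omega) q d N hq hd1 hd2 (by omega) rfl (fun l => V (2 ^ (l + 2))) ?_
    (real_ineq p h d N u hp hh h7 hd1 hd2 (by omega) hu hu4 hs')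
  intro l
  refine (hV _ ?_).1
  intro hk
  have := (Nat.prime_dvd_prime_iff_eq hp Nat.prime_two).1 (hp.dvd_of_dvd_pow hk)
  omega

theorem stmt_15 (k n : ℕ) (hk : 3 ≤ k) (hko : Odd k) (hn : 3 ≤ n) (hno : Odd n)
    (d : ℤ) (hd : d = (1 - 2 * (k : ℤ) ^ n) ^ n) :
    ∀ D : ℤ,
      (D = d ∨ D = d + 1 ∨ D = 4 * d + 1 ∨
        ∃ m : ℕ, 1 ≤ (4 : ℤ) ^ m ∧ (4 : ℤ) ^ m ≤ 2 * |d| ∧ D = 2 * d + 4 ^ m) →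
      D < 0 ∧ n ∣ quadClassNumber D := by
  exact stmt_of_X theoremX k n hk hko hn hno d hd
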